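/- arXiv:2208.13297 — 2 statements merged into one kernel-verified Lean document; each statement's English description precedes it below -/
import Mathlib

section
/- For every connected finite simple graph G with maximum degree at most 3 that is not isomorphic to the complete bipartite graph K_{3,3}, the semistrong chromatic index of G is at most 8. -/
open SimpleGraph

variable {V : Type*}

/-- The set of endvertices of the edges in `M`. -/
def edgeVerts (M : Set (Sym2 V)) : Set V := {v | ∃ e ∈ M, v ∈ e}

/-- `M` is a matching of the simple graph `G`: a set of edges of `G`
that are pairwise disjoint. -/
def IsMatchingSet (G : SimpleGraph V) (M : Set (Sym2 V)) : Prop :=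
  M ⊆ G.edgeSet ∧ ∀ e ∈ M, ∀ f ∈ M, e ≠ f → ∀ v : V, v ∈ e → v ∉ f

/-- `M` is a semistrong matching of `G`: a matching such that every edge of `M`
has an endvertex of degree one in the subgraph of `G` induced by the
endvertices of the edges of `M`. -/
def IsSemistrongMatching (G : SimpleGraph V) (M : Set (Sym2 V)) : Prop :=
  IsMatchingSet G M ∧
    ∀ e ∈ M, ∃ u v : V, e = s(u, v) ∧ ∀ w ∈ edgeVerts M, G.Adj u w → w = v

/-- `G` has a semistrong edge-coloring with (at most) `k` colors: a proper
edge-coloring in which every color class is a semistrong matching. -/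
def HasSemistrongEdgeColoring (G : SimpleGraph V) (k : ℕ) : Prop :=
  ∃ c : Sym2 V → ℕ, (∀ e ∈ G.edgeSet, c e < k) ∧
    ∀ i : ℕ, IsSemistrongMatching G {e | e ∈ G.edgeSet ∧ c e = i}

/-- The semistrong chromatic index of `G`. -/
noncomputable def ssChromIdx (G : SimpleGraph V) : ℕ :=
  sInf {k | HasSemistrongEdgeColoring G k}

/-- `Good G C x y`: in the class of the edge `xy`, the end `x` sees only `y`. -/
def Good (G : SimpleGraph V) (C : Sym2 V → Fin 8) (x y : V) : Prop :=
  ∀ z w, G.Adj x z → z ≠ y → G.Adj z w → C s(z, w) ≠ C s(x, y)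

theorem ssColoring_of_good (G : SimpleGraph V) (C : Sym2 V → Fin 8)
    (hp : ∀ x y z, G.Adj x y → G.Adj x z → y ≠ z → C s(x, y) ≠ C s(x, z))
    (hg : ∀ x y, G.Adj x y → Good G C x y ∨ Good G C y x) :
    HasSemistrongEdgeColoring G 8 := by
  refine ⟨fun e => (C e : ℕ), fun e _ => (C e).2, fun i => ⟨⟨fun e he => he.1, ?_⟩, ?_⟩⟩
  · intro e he f hf hne v hve hvf
    obtain ⟨a, rfl⟩ := hve
    obtain ⟨b, rfl⟩ := hvf
    have hab : a ≠ b := fun h => hne (by rw [h])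
    refine hp v a b he.1 hf.1 hab ?_
    exact Fin.ext (he.2.trans hf.2.symm)
  · intro e he
    induction e using Sym2.ind with
    | _ x y =>
    have key : ∀ x y, s(x, y) ∈ {e | e ∈ G.edgeSet ∧ ((C e : Fin 8) : ℕ) = i} → Good G C x y →
        ∀ w ∈ edgeVerts {e | e ∈ G.edgeSet ∧ ((C e : Fin 8) : ℕ) = i}, G.Adj x w → w = y := by
      intro x y he hg w hw hxw
      by_contra hne
      obtain ⟨f, hf, hwf⟩ := hw
      obtain ⟨b, rfl⟩ := hwf
      exact hg w b hxw hne hf.1 (Fin.ext (hf.2.trans he.2.symm))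
    rcases hg x y he.1 with h | h
    · exact ⟨x, y, rfl, key x y he h⟩
    · exact ⟨y, x, Sym2.eq_swap, key y x (by rw [Sym2.eq_swap]; exact he) h⟩

/-- A partial colouring of all edges having an end outside `U`. -/
structure Val (G : SimpleGraph V) (U : Finset V) (C : Sym2 V → Fin 8) (Ar : V → V → Prop) :
    Prop where
  toU : ∀ v x, v ∉ U → x ∈ U → G.Adj v x → Ar v x
  total : ∀ v x, v ∉ U → x ∉ U → G.Adj v x → Ar v x ∨ Ar x v
  adj : ∀ v x, Ar v x → v ∉ U ∧ G.Adj v x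
  v1 : ∀ v x, Ar v x → ∀ z w, G.Adj v z → z ≠ x → G.Adj z w → (z ∉ U ∨ w ∉ U) →
    C s(z, w) ≠ C s(v, x)
  v2 : ∀ v x, Ar v x → ∀ w, G.Adj x w → w ≠ v → (x ∉ U ∨ w ∉ U) → C s(x, w) ≠ C s(v, x)

/-- Final extension. -/
theorem Val.extend {G : SimpleGraph V} {U : Finset V} {C : Sym2 V → Fin 8} {Ar : V → V → Prop}
    (hV : Val G U C Ar) (D : Sym2 V → Fin 8)
    (hD : ∀ x y, x ∉ U → D s(x, y) = C s(x, y))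
    (n1 : ∀ z w g x, z ∈ U → w ∈ U → G.Adj z w → G.Adj g z → Ar g x → D s(z, w) ≠ C s(g, x))
    (n2 : ∀ z w, z ∈ U → w ∈ U → G.Adj z w → Good G D z w ∨ Good G D w z)
    (n3 : ∀ x z w, x ∈ U → z ∈ U → w ∈ U → G.Adj x z → G.Adj x w → z ≠ w →
      D s(x, z) ≠ D s(x, w)) :
    HasSemistrongEdgeColoring G 8 := by
  have hD' : ∀ x y, y ∉ U → D s(x, y) = C s(x, y) := by
    intro x y hy; rw [Sym2.eq_swap, hD _ _ hy]
  have gd : ∀ v x, Ar v x → Good G D v x := by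
    intro v x ha z w hvz hzx hzw
    have hv := (hV.adj v x ha).1
    rw [hD v x hv]
    by_cases hz : z ∈ U
    · by_cases hw : w ∈ U
      · exact n1 z w v x hz hw hzw hvz ha
      · rw [hD' z w hw]; exact hV.v1 v x ha z w hvz hzx hzw (Or.inr hw)
    · rw [hD z w hz]; exact hV.v1 v x ha z w hvz hzx hzw (Or.inl hz)
  have pr : ∀ v x, Ar v x → ∀ w, G.Adj x w → w ≠ v → D s(x, w) ≠ D s(v, x) := by
    intro v x ha w hxw hwv
    have hv := hV.adj v x ha
    rw [hD v x hv.1]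
    by_cases hx : x ∈ U
    · by_cases hw : w ∈ U
      · exact n1 x w v x hx hw hxw hv.2 ha
      · rw [hD' x w hw]; exact hV.v2 v x ha w hxw hwv (Or.inr hw)
    · rw [hD x w hx]; exact hV.v2 v x ha w hxw hwv (Or.inl hx)
  -- every edge: arc one way or other, or inside U
  have cls : ∀ x y, G.Adj x y → Ar x y ∨ Ar y x ∨ (x ∈ U ∧ y ∈ U) := by
    intro x y h
    by_cases hx : x ∈ U <;> by_cases hy : y ∈ U
    · exact Or.inr (Or.inr ⟨hx, hy⟩)
    · exact Or.inr (Or.inl (hV.toU y x hy hx h.symm))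
    · exact Or.inl (hV.toU x y hx hy h)
    · rcases hV.total x y hx hy h with h | h
      · exact Or.inl h
      · exact Or.inr (Or.inl h)
  apply ssColoring_of_good G D
  · intro x y z hxy hxz hyz
    have aux : ∀ y z, G.Adj x y → G.Adj x z → y ≠ z → Ar x y → D s(x, y) ≠ D s(x, z) := by
      intro y z hxy hxz hyz ha
      have := gd x y ha z x hxz hyz.symm hxz.symm
      rw [Sym2.eq_swap] at this
      exact this.symm
    rcases cls x y hxy with h | h | ⟨hx, hy⟩
    · exact aux y z hxy hxz hyz h
    · have := pr y x h z hxz hyz.symm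
      rw [Sym2.eq_swap (a := y)] at this
      exact this.symm
    · rcases cls x z hxz with h | h | ⟨_, hz⟩
      · exact (aux z y hxz hxy hyz.symm h).symm
      · have := pr z x h y hxy hyz
        rw [Sym2.eq_swap (a := z)] at this
        exact this
      · exact n3 x y z hx hy hz hxy hxz hyz
  · intro x y hxy
    rcases cls x y hxy with h | h | ⟨hx, hy⟩
    · exact Or.inl (gd x y h)
    · exact Or.inr (gd y x h)
    · exact n2 x y hx hy hxy

/-- Greedy colouring. -/
theorem greedy {I : Type*} [Fintype I] (key : I → ℕ) (conf : I → I → Prop)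
    [DecidableRel conf]
    (h : ∀ i, (Finset.univ.filter (fun j => key j < key i ∧ conf i j)).card ≤ 7) :
    ∃ c : I → Fin 8, ∀ i j, key j < key i → conf i j → c i ≠ c j := by
  classical
  have step : ∀ n : ℕ, ∃ c : I → Fin 8,
      ∀ i j, key i < n → key j < key i → conf i j → c i ≠ c j := by
    intro n
    induction n with
    | zero => exact ⟨fun _ => 0, fun i j hi => absurd hi (by omega)⟩
    | succ n ih =>
      obtain ⟨c, hc⟩ := ih
      have pick : ∀ i, ∃ a : Fin 8, ∀ j, key j < key i → conf i j → a ≠ c j := by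
        intro i
        have hcard : ((Finset.univ.filter (fun j => key j < key i ∧ conf i j)).image c).card < 8 :=
          lt_of_le_of_lt Finset.card_image_le (by have := h i; omega)
        obtain ⟨a, ha⟩ : ∃ a : Fin 8,
            a ∉ (Finset.univ.filter (fun j => key j < key i ∧ conf i j)).image c := by
          by_contra hcon
          push Not at hcon
          have : (Finset.univ : Finset (Fin 8)) ⊆ _ := fun a _ => hcon a
          have := Finset.card_le_card this
          simp at this
          omega
        refine ⟨a, fun j h1 h2 h3 => ha ?_⟩
        exact Finset.mem_image.2 ⟨j, by simp [h1, h2], h3.symm⟩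
      choose a ha using pick
      refine ⟨fun i => if key i = n then a i else c i, fun i j hi hj hcf => ?_⟩
      have hjn : key j ≠ n := by omega
      simp only [hjn, if_false]
      split_ifs with hin
      · exact ha i j hj hcf
      · exact hc i j (by omega) hj hcf
  obtain ⟨c, hc⟩ := step ((Finset.univ.sup key) + 1)
  refine ⟨c, fun i j => hc i j ?_⟩
  have := Finset.le_sup (f := key) (Finset.mem_univ i)
  omega

/-- Greedy colouring leaving two choices for one item. -/
theorem greedy_two {I : Type*} [Fintype I] [DecidableEq I] (key : I → ℕ)
    (hinj : Function.Injective key)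
    (conf : I → I → Prop) [DecidableRel conf]
    (h : ∀ i, (Finset.univ.filter (fun j => key j < key i ∧ conf i j)).card ≤ 7)
    (i₀ : I) (h0 : (Finset.univ.filter (fun j => key j < key i₀ ∧ conf i₀ j)).card ≤ 6)
    (hl : ∀ i, key i₀ < key i → conf i i₀ →
      (Finset.univ.filter (fun j => key j < key i ∧ conf i j)).card ≤ 6) :
    ∃ (c : I → Fin 8) (m : Fin 8), m ≠ c i₀ ∧
      (∀ i j, key j < key i → conf i j → c i ≠ c j) ∧
      (∀ i j, key j < key i → conf i j → Function.update c i₀ m i ≠ Function.update c i₀ m j) := by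
  classical
  obtain ⟨key', kn, ks⟩ : ∃ key' : Option I → ℕ, key' none = 2 * key i₀ + 1 ∧
      ∀ i, key' (some i) = 2 * key i :=
    ⟨fun o => o.elim (2 * key i₀ + 1) (fun i => 2 * key i), rfl, fun _ => rfl⟩
  obtain ⟨conf', css, cns, csn, cnn⟩ : ∃ conf' : Option I → Option I → Prop,
      (∀ i j, conf' (some i) (some j) ↔ conf i j) ∧
      (∀ j, conf' none (some j) ↔ conf i₀ j ∨ j = i₀) ∧
      (∀ i, conf' (some i) none ↔ conf i i₀) ∧ (conf' none none ↔ False) :=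
    ⟨fun o p => match o, p with
      | some i, some j => conf i j
      | none, some j => conf i₀ j ∨ j = i₀
      | some i, none => conf i i₀
      | none, none => False, fun _ _ => Iff.rfl, fun _ => Iff.rfl, fun _ => Iff.rfl, Iff.rfl⟩
  have e : ∀ (i : I) (S : Finset (Option I)) , (∀ j, some j ∈ S → key j < key i ∧ conf i j) →
      none ∉ S → S.card ≤ (Finset.univ.filter (fun j => key j < key i ∧ conf i j)).card := by
    intro i S hS hn
    have : S ⊆ (Finset.univ.filter (fun j => key j < key i ∧ conf i j)).image some := by
      intro o ho
      cases o with
      | none => exact absurd ho hn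
      | some j => exact Finset.mem_image.2 ⟨j, by simpa using hS j ho, rfl⟩
    exact (Finset.card_le_card this).trans Finset.card_image_le
  have hg : ∀ o, (Finset.univ.filter (fun p => key' p < key' o ∧ conf' o p)).card ≤ 7 := by
    intro o
    generalize hT : Finset.univ.filter (fun p => key' p < key' o ∧ conf' o p) = T
    have mT : ∀ p, p ∈ T ↔ key' p < key' o ∧ conf' o p := by intro p; simp [← hT]
    cases o with
    | none =>
      have h1 := Finset.pred_card_le_card_erase (s := T) (a := some i₀)
      have h2 := e i₀ (T.erase (some i₀)) ?_ ?_
      · omega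
      · intro j hj
        obtain ⟨hj1, hj2⟩ := Finset.mem_erase.1 hj
        have hji : j ≠ i₀ := fun h => hj1 (by rw [h])
        rw [mT, kn, ks, cns] at hj2
        have hk : key j ≠ key i₀ := fun h => hji (hinj h)
        exact ⟨by omega, hj2.2.resolve_right hji⟩
      · simp [mT]
    | some i =>
      have h1 := Finset.pred_card_le_card_erase (s := T) (a := none)
      by_cases hn : none ∈ T
      · have h2 := e i (T.erase none) ?_ (by simp)
        · rw [mT, kn, ks, csn] at hn
          have := hl i (by omega) hn.2
          omega
        · intro j hj
          have hj2 := (Finset.mem_erase.1 hj).2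
          rw [mT, ks, ks, css] at hj2
          exact ⟨by omega, hj2.2⟩
      · refine (e i _ ?_ hn).trans (h i)
        intro j hj
        rw [mT, ks, ks, css] at hj
        exact ⟨by omega, hj.2⟩
  obtain ⟨c, hc⟩ := greedy key' conf' hg
  have hn1 : ∀ j, key j < key i₀ → conf i₀ j → c none ≠ c (some j) := fun j h1 h2 =>
    hc none (some j) (by rw [kn, ks]; omega) ((cns j).2 (Or.inl h2))
  have hn2 : ∀ i, key i₀ < key i → conf i i₀ → c (some i) ≠ c none := fun i h1 h2 =>
    hc (some i) none (by rw [kn, ks]; omega) ((csn i).2 h2)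
  have hss : ∀ i j, key j < key i → conf i j → c (some i) ≠ c (some j) := fun i j h1 h2 =>
    hc (some i) (some j) (by rw [ks, ks]; omega) ((css i j).2 h2)
  refine ⟨fun i => c (some i), c none, ?_, hss, ?_⟩
  · exact hc none (some i₀) (by rw [kn, ks]; omega) ((cns i₀).2 (Or.inr rfl))
  · intro i j hk hcf
    simp only [Function.update_apply]
    split_ifs with h1 h2 h2
    · subst h1; subst h2; omega
    · subst h1; exact hn1 j hk hcf
    · subst h2; exact hn2 i hk hcf
    · exact hss i j hk hcf

/-- Neighbours that come later in the order `τ`. -/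
def later [Fintype V] (G : SimpleGraph V) [DecidableRel G.Adj] (τ : V → ℕ) (v : V) : Finset V :=
  (G.neighborFinset v).filter (fun x => τ v < τ x)

/-- Arcs: edges directed from the earlier to the later end, the earlier end lying outside `U`. -/
def IsArc (G : SimpleGraph V) (U : Finset V) (τ : V → ℕ) (p : V × V) : Prop :=
  p.1 ∉ U ∧ G.Adj p.1 p.2 ∧ τ p.1 < τ p.2

/-- The conflict relation of arcs. -/
def Conf (G : SimpleGraph V) (U : Finset V) (τ : V → ℕ) (p q : V × V) : Prop :=
  IsArc G U τ p ∧ IsArc G U τ q ∧ p ≠ q ∧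
    (q.1 = p.1 ∨ q.1 = p.2 ∨ q.2 = p.1 ∨ q.2 = p.2 ∨ G.Adj p.1 q.1 ∨ G.Adj p.1 q.2 ∨ G.Adj q.1 p.2)

instance [DecidableEq V] (G : SimpleGraph V) [DecidableRel G.Adj] (U : Finset V) (τ : V → ℕ) :
    DecidableRel (Conf G U τ) := fun p q => by unfold Conf IsArc; infer_instance

theorem mem_later [Fintype V] {G : SimpleGraph V} [DecidableRel G.Adj] {τ : V → ℕ} {v x : V} :
    x ∈ later G τ v ↔ G.Adj v x ∧ τ v < τ x := by simp [later]

/-- Counting earlier conflicts of an arc. -/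
theorem cnt_bound [Fintype V] [DecidableEq V] (G : SimpleGraph V) [DecidableRel G.Adj]
    (hd : ∀ v, (G.neighborFinset v).card ≤ 3) (U : Finset V) (τ : V → ℕ)
    (hτ : Function.Injective τ) (u : V → V) (key : V × V → ℕ)
    (hkey : ∀ g h v x, key (g, h) < key (v, x) →
      τ g < τ v ∨ (g = v ∧ h ≠ x ∧ (x ≠ u v → h ≠ u v)))
    (h1 : ∀ v, v ∉ U → ∀ x ∈ later G τ v,
      ((G.neighborFinset x).filter (fun g => τ g < τ v)).card ≤ 1)
    (v x : V) (hvU : v ∉ U) (hx : x ∈ later G τ v) (hu : u v ∈ later G τ v) (R : ℕ)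
    (hR : ∀ g, G.Adj x g → τ g < τ v → ¬ G.Adj v g → (later G τ g).card ≤ R) :
    (Finset.univ.filter (fun q => key q < key (v, x) ∧ Conf G U τ (v, x) q)).card
      + (if x = u v then 2 else 3) + (later G τ v).card ≤ 9 + R := by
  set Ea := (G.neighborFinset v).filter (fun y => τ y < τ v) with hEa
  have hkL : Ea.card + (later G τ v).card ≤ 3 := by
    refine le_trans ?_ (hd v)
    rw [← Finset.card_union_of_disjoint]
    · apply Finset.card_le_card
      intro y; simp only [hEa, later, Finset.mem_union, Finset.mem_filter]; tauto
    · rw [Finset.disjoint_left]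
      intro y; simp only [hEa, later, Finset.mem_filter]; intro h h'; omega
  set A := Ea.biUnion (fun n => (G.neighborFinset n).image
    (fun y => if τ n < τ y then (n, y) else (y, n))) with hA
  set O := (if x = u v then (later G τ v).erase x else ((later G τ v).erase x).erase (u v)).image
    (fun h => (v, h)) with hO
  set B := ((later G τ v).erase x).biUnion (fun x' =>
    ((G.neighborFinset x').filter (fun g => τ g < τ v)).image (fun g => (g, x'))) with hB
  set Rr := ((G.neighborFinset x).filter (fun g => τ g < τ v ∧ ¬ G.Adj v g)).biUnion (fun g =>
    (later G τ g).image (fun h => (g, h))) with hRr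
  have cA : A.card ≤ Ea.card * 3 :=
    Finset.card_biUnion_le_card_mul _ _ _ (fun n _ => Finset.card_image_le.trans (hd n))
  have hpos : 0 < (later G τ v).card := Finset.card_pos.2 ⟨x, hx⟩
  have cB : B.card ≤ ((later G τ v).card - 1) * 1 := by
    rw [← Finset.card_erase_of_mem hx]
    exact Finset.card_biUnion_le_card_mul _ _ _ (fun n hn => Finset.card_image_le.trans
      (h1 v hvU n (Finset.mem_of_mem_erase hn)))
  have cO : O.card + (if x = u v then 1 else 2) ≤ (later G τ v).card := by
    have hle : O.card ≤ _ := Finset.card_image_le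
    split_ifs at hle ⊢ with hxu
    · rw [Finset.card_erase_of_mem hx] at hle; omega
    · have hu' : u v ∈ (later G τ v).erase x := Finset.mem_erase.2 ⟨fun h => hxu h.symm, hu⟩
      have hp2 : 0 < ((later G τ v).erase x).card := Finset.card_pos.2 ⟨_, hu'⟩
      rw [Finset.card_erase_of_mem hu'] at hle
      rw [Finset.card_erase_of_mem hx] at hle hp2
      omega
  have cR : Rr.card ≤ R := by
    have : Rr.card ≤ ((G.neighborFinset x).filter (fun g => τ g < τ v ∧ ¬ G.Adj v g)).card * R :=
      Finset.card_biUnion_le_card_mul _ _ _ (fun g hg => by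
        simp only [Finset.mem_filter, mem_neighborFinset] at hg
        exact Finset.card_image_le.trans (hR g hg.1 hg.2.1 hg.2.2))
    have h2 : ((G.neighborFinset x).filter (fun g => τ g < τ v ∧ ¬ G.Adj v g)).card ≤ 1 :=
      le_trans (Finset.card_le_card (fun g => by simp only [Finset.mem_filter]; tauto)) (h1 v hvU x hx)
    nlinarith
  have hA1 : ∀ n y, G.Adj v n → τ n < τ v → G.Adj n y → τ n < τ y → (n, y) ∈ A := by
    intro n y h1 h2 h3 h4
    refine Finset.mem_biUnion.2 ⟨n, by simp [hEa, h1, h2], Finset.mem_image.2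
      ⟨y, by simpa using h3, ?_⟩⟩
    simp [h4]
  have hA2 : ∀ n y, G.Adj v n → τ n < τ v → G.Adj n y → τ y < τ n → (y, n) ∈ A := by
    intro n y h1 h2 h3 h4
    refine Finset.mem_biUnion.2 ⟨n, by simp [hEa, h1, h2], Finset.mem_image.2
      ⟨y, by simpa using h3, ?_⟩⟩
    have : ¬ τ n < τ y := by omega
    simp [this]
  have mR : ∀ g h, G.Adj g x → τ g < τ v → ¬ G.Adj v g → G.Adj g h → τ g < τ h →
      (g, h) ∈ Rr := by
    intro g h hgx hlt hvg hgh hτgh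
    exact Finset.mem_biUnion.2 ⟨g, by simp [hgx.symm, hlt, hvg],
      Finset.mem_image.2 ⟨h, mem_later.2 ⟨hgh, hτgh⟩, rfl⟩⟩
  have mB : ∀ g h, h ≠ x → G.Adj v h → τ v < τ h → G.Adj g h → τ g < τ v → (g, h) ∈ B := by
    intro g h hhx hvh hl hgh hlt
    exact Finset.mem_biUnion.2 ⟨h, Finset.mem_erase.2 ⟨hhx,
      mem_later.2 ⟨hvh, hl⟩⟩, Finset.mem_image.2 ⟨g, by simp [hgh.symm, hlt], rfl⟩⟩
  have mO : ∀ h, h ≠ x → (x ≠ u v → h ≠ u v) → h ∈ later G τ v → (v, h) ∈ O := by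
    intro h hhx hhu hl
    refine Finset.mem_image.2 ⟨h, ?_, rfl⟩
    split_ifs with hxu
    · exact Finset.mem_erase.2 ⟨hhx, hl⟩
    · exact Finset.mem_erase.2 ⟨hhu hxu, Finset.mem_erase.2 ⟨hhx, hl⟩⟩
  clear_value A O B Rr
  have hsub : Finset.univ.filter (fun q => key q < key (v, x) ∧ Conf G U τ (v, x) q) ⊆
      A ∪ O ∪ B ∪ Rr := by
    rintro ⟨g, h⟩ hq
    obtain ⟨hk, ⟨_, hvx, hτvx⟩, ⟨hgU, hgh, hτgh⟩, hne, hcf⟩ := (Finset.mem_filter.1 hq).2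
    replace hτvx : τ v < τ x := hτvx
    replace hgh : G.Adj g h := hgh
    replace hτgh : τ g < τ h := hτgh
    have iA : (g, h) ∈ A → (g, h) ∈ A ∪ O ∪ B ∪ Rr := fun h =>
      Finset.mem_union_left _ (Finset.mem_union_left _ (Finset.mem_union_left _ h))
    have iB : (g, h) ∈ B → (g, h) ∈ A ∪ O ∪ B ∪ Rr := fun h =>
      Finset.mem_union_left _ (Finset.mem_union_right _ h)
    have iR : (g, h) ∈ Rr → (g, h) ∈ A ∪ O ∪ B ∪ Rr := fun h => Finset.mem_union_right _ h
    rcases hkey g h v x hk with hlt | ⟨rfl, hhx, hhu⟩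
    · have hgR : G.Adj g x → (g, h) ∈ A ∪ O ∪ B ∪ Rr := by
        intro hgx
        by_cases hvg : G.Adj v g
        · exact iA (hA1 g h hvg hlt hgh hτgh)
        · exact iR (mR g h hgx hlt hvg hgh hτgh)
      have hh : G.Adj v h → (g, h) ∈ A ∪ O ∪ B ∪ Rr := by
        intro hvh
        by_cases hhx : h = x
        · subst hhx; exact hgR hgh
        · rcases lt_trichotomy (τ h) (τ v) with hl | he | hl
          · exact iA (hA2 h g hvh hl hgh.symm hτgh)
          · exact absurd (hτ he) hvh.ne'
          · exact iB (mB g h hhx hvh hl hgh hlt)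
      rcases hcf with h' | h' | h' | h' | h' | h' | h'
      · replace h' : g = v := h'
        subst h'; omega
      · replace h' : g = x := h'
        subst h'; omega
      · replace h' : h = v := h'
        subst h'; exact iA (hA1 g h hgh.symm hlt hgh hτgh)
      · replace h' : h = x := h'
        subst h'; exact hgR hgh
      · exact iA (hA1 g h h' hlt hgh hτgh)
      · exact hh h'
      · exact hgR h'
    · exact Finset.mem_union_left _ (Finset.mem_union_left _ (Finset.mem_union_right _
        (mO h hhx hhu (mem_later.2 ⟨hgh, hτgh⟩))))
  have hcard := Finset.card_le_card hsub
  have e1 := Finset.card_union_le (A ∪ O ∪ B) Rr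
  have e2 := Finset.card_union_le (A ∪ O) B
  have e3 := Finset.card_union_le A O
  split_ifs at cO ⊢ <;> omega

/-- Ranking a finite type by a linearly ordered key. -/
theorem exists_rank {I K : Type*} [Fintype I] [LinearOrder K] (k : I → K) :
    ∃ τ : I → ℕ, (∀ i j, k i < k j → τ i < τ j) ∧ (∀ i j, k i = k j → τ i = τ j) := by
  classical
  refine ⟨fun i => (Finset.univ.filter (fun j => k j < k i)).card, fun i j h => ?_, fun i j h => ?_⟩
  · apply Finset.card_lt_card
    rw [Finset.ssubset_iff_of_subset]
    · exact ⟨i, by simpa using h, by simp⟩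
    · intro l; simp only [Finset.mem_filter, Finset.mem_univ, true_and]; exact fun h' => h'.trans h
  · simp only [h]

/-- Ranking by a triple of numbers, with ties broken injectively. -/
theorem exists_rank3 {I : Type*} [Fintype I] (a b : I → ℕ) :
    ∃ τ : I → ℕ, Function.Injective τ ∧ (∀ i, 1 ≤ τ i) ∧
      (∀ i j, a i < a j → τ i < τ j) ∧ (∀ i j, a i = a j → b i < b j → τ i < τ j) := by
  classical
  let e : I → ℕ := fun i => (Fintype.equivFin I i : ℕ)
  have he : Function.Injective e := fun i j h => (Fintype.equivFin I).injective (Fin.ext h)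
  obtain ⟨τ, h1, h2⟩ := exists_rank (fun i => toLex (a i, toLex (b i, e i)))
  refine ⟨fun i => τ i + 1, ?_, fun i => Nat.le_add_left _ _, ?_, ?_⟩
  · intro i j h
    by_contra hne
    have hne' : toLex (a i, toLex (b i, e i)) ≠ toLex (a j, toLex (b j, e j)) := by
      intro h'
      have := congrArg (fun x => (ofLex (ofLex x).2).2) h'
      exact hne (he this)
    rcases lt_or_gt_of_ne hne' with h' | h'
    · have := h1 i j h'; simp only at h; omega
    · have := h1 j i h'; simp only at h; omega
  · intro i j h
    have := h1 i j (by rw [Prod.Lex.toLex_lt_toLex]; exact Or.inl h)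
    exact Nat.succ_lt_succ this
  · intro i j h h'
    have := h1 i j (by
      rw [Prod.Lex.toLex_lt_toLex]
      exact Or.inr ⟨h, by rw [Prod.Lex.toLex_lt_toLex]; exact Or.inl h'⟩)
    exact Nat.succ_lt_succ this

/-- The order used for the greedy colouring. -/
structure VOrd [Fintype V] (G : SimpleGraph V) [DecidableRel G.Adj] (κ : V → ℕ) (r : V)
    (U Sp : Finset V) where
  ρ : V → ℕ
  σ : V → ℕ
  lf : V → ℕ
  m : V → ℕ
  τ : V → ℕ
  u : V → V
  ρinj : Function.Injective ρ
  ρpos : ∀ v, 1 ≤ ρ v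
  ρκ : ∀ a b, κ a < κ b → ρ a < ρ b
  rU : r ∈ U
  ρnb : ∀ v, v ≠ r → ∃ y, G.Adj v y ∧ ρ y < ρ v
  σU : ∀ v, v ∈ U → σ v = 0
  uadj : ∀ v, v ∉ U → G.Adj v (u v)
  σu : ∀ v, v ∉ U → σ v = ρ (u v)
  σle : ∀ v y, G.Adj v y → σ v ≤ ρ y
  lfdef : ∀ v, lf v = ((G.neighborFinset v).filter (fun z => σ z ≤ σ v)).card
  mSp : ∀ v, v ∈ Sp → m v = 2 * lf v
  mnSp : ∀ v, v ∉ Sp → m v = 2 * lf v + 1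
  τinj : Function.Injective τ
  τσ : ∀ a b, σ b < σ a → τ a < τ b
  τm : ∀ a b, σ a = σ b → m a < m b → τ a < τ b
  nbU : ∀ x, x ∈ U → (G.neighborFinset x).card ≤ 2 ∨ ∃ y ∈ U, G.Adj x y
  hd : ∀ v, (G.neighborFinset v).card ≤ 3

theorem exists_ord [Fintype V] [DecidableEq V] (G : SimpleGraph V) [DecidableRel G.Adj]
    (hd : ∀ v, (G.neighborFinset v).card ≤ 3) (κ : V → ℕ) (r : V)
    (hκ : ∀ v, v ≠ r → ∃ y, G.Adj v y ∧ κ y < κ v) (U Sp : Finset V) (hr : r ∈ U)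
    (hU : ∀ x, x ∈ U → (G.neighborFinset x).card ≤ 2 ∨ ∃ y ∈ U, G.Adj x y) :
    Nonempty (VOrd G κ r U Sp) := by
  classical
  obtain ⟨ρ, ρinj, ρpos, ρκ, -⟩ := exists_rank3 κ (fun _ => 0)
  have hmin : ∀ v, ∃ y, v ∉ U → G.Adj v y ∧ ∀ w, G.Adj v w → ρ y ≤ ρ w := by
    intro v
    by_cases hv : v ∈ U
    · exact ⟨v, fun h => absurd hv h⟩
    · have hvr : v ≠ r := fun h => hv (h ▸ hr)
      obtain ⟨y, hy, -⟩ := hκ v hvr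
      obtain ⟨y, hy1, hy2⟩ := Finset.exists_min_image (G.neighborFinset v) ρ
        ⟨y, by simpa using hy⟩
      exact ⟨y, fun _ => ⟨by simpa using hy1, fun w hw => hy2 w (by simpa using hw)⟩⟩
  choose u hu using hmin
  let σ : V → ℕ := fun v => if v ∈ U then 0 else ρ (u v)
  let lf : V → ℕ := fun v => ((G.neighborFinset v).filter (fun z => σ z ≤ σ v)).card
  let m : V → ℕ := fun v => if v ∈ Sp then 2 * lf v else 2 * lf v + 1
  obtain ⟨τ, τinj, -, τ1, τ2⟩ := exists_rank3 (fun v => (Finset.univ.sup σ) - σ v) m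
  have hsup : ∀ v, σ v ≤ Finset.univ.sup σ := fun v => Finset.le_sup (Finset.mem_univ v)
  refine ⟨⟨ρ, σ, lf, m, τ, u, ρinj, ρpos, ρκ, hr, ?_, ?_, ?_, ?_, ?_, fun _ => rfl, ?_, ?_, τinj,
    ?_, ?_, hU, hd⟩⟩
  · intro v hv
    obtain ⟨y, h1, h2⟩ := hκ v hv
    exact ⟨y, h1, ρκ _ _ h2⟩
  · intro v hv; simp [σ, hv]
  · intro v hv; exact (hu v hv).1
  · intro v hv; simp [σ, hv]
  · intro v y hy
    by_cases hv : v ∈ U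
    · simp [σ, hv]
    · simp only [σ, hv, if_false]; exact (hu v hv).2 y hy
  · intro v hv; simp [m, hv]
  · intro v hv; simp [m, hv]
  · intro a b h
    apply τ1
    have := hsup a
    have := hsup b
    omega
  · intro a b h1 h2
    exact τ2 a b (by simp only [h1]) h2

namespace VOrd

variable [Fintype V] {G : SimpleGraph V} [DecidableRel G.Adj] {κ : V → ℕ} {r : V}
  {U Sp : Finset V} (O : VOrd G κ r U Sp)

theorem σpos {v : V} (hv : v ∉ U) : 1 ≤ O.σ v := by rw [O.σu v hv]; exact O.ρpos _

theorem notU_of_σ {v : V} (hv : 1 ≤ O.σ v) : v ∉ U := fun h => by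
  have := O.σU v h; omega

/-- a vertex of rank at most `n` finishes below `n` -/
theorem σ_lt_ρ {v : V} : O.σ v < O.ρ v := by
  by_cases hv : v ∈ U
  · rw [O.σU v hv]; exact O.ρpos v
  · obtain ⟨y, h1, h2⟩ := O.ρnb v (fun h => hv (h ▸ O.rU))
    exact lt_of_le_of_lt (O.σle v y h1) h2

theorem σ_ge_of_τ {a b : V} (h : O.τ a < O.τ b) : O.σ b ≤ O.σ a := by
  by_contra hc
  have := O.τσ b a (by omega)
  omega

theorem u_later {v : V} (hv : v ∉ U) : O.u v ∈ later G O.τ v := by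
  refine mem_later.2 ⟨O.uadj v hv, O.τσ _ _ ?_⟩
  rw [O.σu v hv]; exact O.σ_lt_ρ

theorem ueq {v w : V} (hv : v ∉ U) (hw : w ∉ U) (h : O.σ v = O.σ w) : O.u v = O.u w := by
  apply O.ρinj; rw [← O.σu v hv, ← O.σu w hw, h]

theorem h1 [DecidableEq V] (v : V) (hv : v ∉ U) (x : V) (hx : x ∈ later G O.τ v) :
    ((G.neighborFinset x).filter (fun g => O.τ g < O.τ v)).card ≤ 1 := by
  obtain ⟨hvx, hτ⟩ := mem_later.1 hx
  have hσ := O.σ_ge_of_τ hτ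
  have hpos := O.σpos hv
  -- if x has a later neighbour other than v
  have key : ∀ y, G.Adj x y → O.τ v < O.τ y →
      ((G.neighborFinset x).filter (fun g => O.τ g < O.τ v)).card ≤ 1 := by
    intro y hxy hy
    have hne : y ≠ v := fun h => by subst h; omega
    have hsub : (G.neighborFinset x).filter (fun g => O.τ g < O.τ v) ⊆
        ((G.neighborFinset x).erase v).erase y := by
      intro g hg
      simp only [Finset.mem_filter, mem_neighborFinset, Finset.mem_erase] at hg ⊢
      refine ⟨?_, ?_, hg.1⟩ <;> rintro rfl <;> omega
    have hc := Finset.card_le_card hsub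
    rw [Finset.card_erase_of_mem (by simp [hne, hxy]), Finset.card_erase_of_mem
      (by simpa using hvx.symm)] at hc
    have := O.hd x
    omega
  by_cases hxU : x ∈ U
  · rcases O.nbU x hxU with h | ⟨y, hy, hxy⟩
    · have hsub : (G.neighborFinset x).filter (fun g => O.τ g < O.τ v) ⊆
          (G.neighborFinset x).erase v := by
        intro g hg
        simp only [Finset.mem_filter, mem_neighborFinset, Finset.mem_erase] at hg ⊢
        refine ⟨?_, hg.1⟩
        rintro rfl; omega
      have hc := Finset.card_le_card hsub
      rw [Finset.card_erase_of_mem (by simpa using hvx.symm)] at hc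
      omega
    · exact key y hxy (O.τσ _ _ (by rw [O.σU y hy]; omega))
  · refine key (O.u x) (O.uadj x hxU) (O.τσ _ _ ?_)
    have h2 : O.σ x = O.ρ (O.u x) := O.σu x hxU
    have h3 : O.σ (O.u x) < O.ρ (O.u x) := O.σ_lt_ρ
    omega

theorem later_le_lf (g : V) : (later G O.τ g).card ≤ O.lf g := by
  rw [O.lfdef]
  apply Finset.card_le_card
  intro z hz
  obtain ⟨h1, h2⟩ := mem_later.1 hz
  simp [h1, O.σ_ge_of_τ h2]

theorem sib {v g : V} (hv : v ∉ U) (hg : G.Adj (O.u v) g) (hτ : O.τ g < O.τ v) :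
    g ∉ U ∧ O.σ g = O.σ v ∧ O.m g ≤ O.m v := by
  have h1 := O.σ_ge_of_τ hτ
  have h2 := O.σle g _ hg.symm
  rw [← O.σu v hv] at h2
  have h3 := O.σpos hv
  refine ⟨O.notU_of_σ (by omega), by omega, ?_⟩
  by_contra hc
  have := O.τm v g (by omega) (by omega)
  omega

theorem later_eq_lf [DecidableEq V] {v g : V} (hv : v ∉ U) (hg : G.Adj (O.u v) g) (hτ : O.τ g < O.τ v)
    (hgv : ¬ G.Adj v g) : O.lf v ≤ (later G O.τ v).card := by
  rw [O.lfdef]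
  apply Finset.card_le_card
  intro z hz
  simp only [Finset.mem_filter, mem_neighborFinset] at hz
  refine mem_later.2 ⟨hz.1, ?_⟩
  rcases lt_trichotomy (O.τ v) (O.τ z) with h | h | h
  · exact h
  · exact absurd (O.τinj h) hz.1.ne
  · exfalso
    have h4 := O.σ_ge_of_τ h
    have h5 := O.σpos hv
    have hzU : z ∉ U := O.notU_of_σ (by omega)
    have hzu : G.Adj (O.u v) z := by
      rw [O.ueq hv hzU (by omega)]; exact (O.uadj z hzU).symm
    have hc := O.h1 v hv (O.u v) (O.u_later hv)
    have : z = g := Finset.card_le_one.1 hc z (by simp [hzu, h]) g (by simp [hg, hτ])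
    subst this
    exact hgv hz.1

theorem lf_of_m {v g : V} (h : O.m g ≤ O.m v) : O.lf g ≤ O.lf v := by
  by_cases h1 : v ∈ Sp <;> by_cases h2 : g ∈ Sp
  · rw [O.mSp _ h1, O.mSp _ h2] at h; omega
  · rw [O.mSp _ h1, O.mnSp _ h2] at h; omega
  · rw [O.mnSp _ h1, O.mSp _ h2] at h; omega
  · rw [O.mnSp _ h1, O.mnSp _ h2] at h; omega

theorem exists_key [DecidableEq V] : ∃ key : V × V → ℕ, Function.Injective key ∧
    (∀ g h v x, key (g, h) < key (v, x) →
      O.τ g < O.τ v ∨ (g = v ∧ h ≠ x ∧ (x ≠ O.u v → h ≠ O.u v))) := by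
  obtain ⟨key, h1, -, h2, h3⟩ := exists_rank3 (fun p : V × V => O.τ p.1)
    (fun p : V × V => if p.2 = O.u p.1 then 1 else 0)
  refine ⟨key, h1, fun g h v x hk => ?_⟩
  rcases lt_trichotomy (O.τ g) (O.τ v) with hl | he | hl
  · exact Or.inl hl
  · have hgv : g = v := O.τinj he
    subst hgv
    refine Or.inr ⟨rfl, ?_, ?_⟩
    · rintro rfl; omega
    · rintro hx rfl
      have := h3 (g, x) (g, O.u g) rfl (by simp [hx])
      omega
  · have := h2 (v, x) (g, h) hl
    omega

/-- Earlier conflicts. -/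
def cnt [DecidableEq V] (key : V × V → ℕ) (p : V × V) : ℕ :=
  (Finset.univ.filter (fun q => key q < key p ∧ Conf G U O.τ p q)).card

theorem cnt_le [DecidableEq V] (key : V × V → ℕ)
    (hkey : ∀ g h v x, key (g, h) < key (v, x) →
      O.τ g < O.τ v ∨ (g = v ∧ h ≠ x ∧ (x ≠ O.u v → h ≠ O.u v)))
    (v x : V) (hv : v ∉ U) (hx : x ∈ later G O.τ v) (R : ℕ)
    (hR : ∀ g, G.Adj x g → O.τ g < O.τ v → ¬ G.Adj v g → (later G O.τ g).card ≤ R) :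
    O.cnt key (v, x) + (if x = O.u v then 2 else 3) + (later G O.τ v).card ≤ 9 + R :=
  cnt_bound G O.hd U O.τ O.τinj O.u key hkey O.h1 v x hv hx (O.u_later hv) R hR

theorem cnt_nonarc [DecidableEq V] (key : V × V → ℕ) (p : V × V) (hp : ¬ IsArc G U O.τ p) :
    O.cnt key p = 0 := by
  rw [cnt, Finset.card_eq_zero, Finset.filter_eq_empty_iff]
  rintro q - ⟨-, h, -⟩
  exact hp h

theorem later_card_le (v : V) : (later G O.τ v).card ≤ 3 :=
  (Finset.card_filter_le _ _).trans (O.hd v)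

theorem two_le_later [DecidableEq V] {v x : V} (hv : v ∉ U) (hx : x ∈ later G O.τ v) (hne : x ≠ O.u v) :
    2 ≤ (later G O.τ v).card := by
  have : ({x, O.u v} : Finset V) ⊆ later G O.τ v := by
    intro y hy
    simp only [Finset.mem_insert, Finset.mem_singleton] at hy
    rcases hy with rfl | rfl
    · exact hx
    · exact O.u_later hv
  have := Finset.card_le_card this
  rwa [Finset.card_pair hne] at this

theorem cnt_le_seven [DecidableEq V] (key : V × V → ℕ)
    (hkey : ∀ g h v x, key (g, h) < key (v, x) →
      O.τ g < O.τ v ∨ (g = v ∧ h ≠ x ∧ (x ≠ O.u v → h ≠ O.u v))) (p : V × V) :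
    O.cnt key p ≤ 7 := by
  by_cases hp : IsArc G U O.τ p
  swap
  · rw [O.cnt_nonarc key p hp]; omega
  obtain ⟨v, x⟩ := p
  obtain ⟨hv, hvx, hτ⟩ := hp
  have hx : x ∈ later G O.τ v := mem_later.2 ⟨hvx, hτ⟩
  by_cases hxu : x = O.u v
  · have := O.cnt_le key hkey v x hv hx (later G O.τ v).card (by
      intro g hg hτg hvg
      rw [hxu] at hg
      have h1 := O.sib hv hg hτg
      have h2 := O.later_eq_lf hv hg hτg hvg
      exact (O.later_le_lf g).trans ((O.lf_of_m h1.2.2).trans h2))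
    rw [if_pos hxu] at this
    omega
  · have := O.cnt_le key hkey v x hv hx 3 (fun g _ _ _ => O.later_card_le g)
    rw [if_neg hxu] at this
    have h2 : 2 ≤ (later G O.τ v).card := O.two_le_later hv hx hxu
    omega

theorem val_of_proper [DecidableEq V] (key : V × V → ℕ) (hinj : Function.Injective key)
    (c : V × V → Fin 8)
    (hc : ∀ i j, key j < key i → Conf G U O.τ i j → c i ≠ c j) (C : Sym2 V → Fin 8)
    (hC : ∀ v x, O.τ v < O.τ x → C s(v, x) = c (v, x)) :
    Val G U C (fun v x => IsArc G U O.τ (v, x)) := by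
  have csymm : ∀ i j, Conf G U O.τ i j → Conf G U O.τ j i := by
    rintro ⟨v, x⟩ ⟨g, h⟩ ⟨h1, h2, h3, h4⟩
    refine ⟨h2, h1, h3.symm, ?_⟩
    simp only at h4 ⊢
    rcases h4 with h | h | h | h | h | h | h
    · exact Or.inl h.symm
    · exact Or.inr (Or.inr (Or.inl h.symm))
    · exact Or.inr (Or.inl h.symm)
    · exact Or.inr (Or.inr (Or.inr (Or.inl h.symm)))
    · exact Or.inr (Or.inr (Or.inr (Or.inr (Or.inl h.symm))))
    · exact Or.inr (Or.inr (Or.inr (Or.inr (Or.inr (Or.inr h)))))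
    · exact Or.inr (Or.inr (Or.inr (Or.inr (Or.inr (Or.inl h)))))
  have hc2 : ∀ i j, Conf G U O.τ i j → c i ≠ c j := by
    intro i j h
    have hne : key i ≠ key j := fun h' => h.2.2.1 (hinj h')
    rcases lt_or_gt_of_ne hne with h' | h'
    · exact (hc j i h' (csymm _ _ h)).symm
    · exact hc i j h' h
  have hUl : ∀ a b, a ∉ U → b ∈ U → O.τ a < O.τ b := fun a b ha hb =>
    O.τσ a b (by rw [O.σU b hb]; exact O.σpos ha)
  -- colour comparison for unordered edges
  have main : ∀ v x, IsArc G U O.τ (v, x) → ∀ z w, G.Adj z w → (z ∉ U ∨ w ∉ U) →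
      s(z, w) ≠ s(v, x) → (z = x ∨ G.Adj v z) → C s(z, w) ≠ C s(v, x) := by
    intro v x ha z w hzw hU hne hcf
    rw [hC v x ha.2.2]
    have hne1 : (v, x) ≠ (z, w) := by rintro h; cases h; exact hne rfl
    have hne2 : (v, x) ≠ (w, z) := by rintro h; cases h; exact hne Sym2.eq_swap
    rcases lt_trichotomy (O.τ z) (O.τ w) with h | h | h
    · have hzU : z ∉ U := by
        intro hz
        have := hUl w z (hU.resolve_left (fun h => h hz)) hz
        omega
      rw [hC z w h]
      refine (hc2 (v, x) (z, w) ⟨ha, ⟨hzU, hzw, h⟩, hne1, ?_⟩).symm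
      rcases hcf with h | h
      · exact Or.inr (Or.inl h)
      · exact Or.inr (Or.inr (Or.inr (Or.inr (Or.inl h))))
    · exact absurd (O.τinj h) hzw.ne
    · have hwU : w ∉ U := by
        intro hw
        have := hUl z w (hU.resolve_right (fun h => h hw)) hw
        omega
      rw [Sym2.eq_swap, hC w z h]
      refine (hc2 (v, x) (w, z) ⟨ha, ⟨hwU, hzw.symm, h⟩, hne2, ?_⟩).symm
      rcases hcf with h | h
      · exact Or.inr (Or.inr (Or.inr (Or.inl h)))
      · exact Or.inr (Or.inr (Or.inr (Or.inr (Or.inr (Or.inl h)))))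
  refine ⟨?_, ?_, ?_, ?_, ?_⟩
  · intro v x hv hx h
    exact ⟨hv, h, hUl v x hv hx⟩
  · intro v x hv hx h
    rcases lt_trichotomy (O.τ v) (O.τ x) with h' | h' | h'
    · exact Or.inl ⟨hv, h, h'⟩
    · exact absurd (O.τinj h') h.ne
    · exact Or.inr ⟨hx, h.symm, h'⟩
  · intro v x h; exact ⟨h.1, h.2.1⟩
  · intro v x ha z w hvz hzx hzw hU
    refine main v x ha z w hzw hU ?_ (Or.inr hvz)
    intro h
    rcases Sym2.eq_iff.1 h with ⟨rfl, rfl⟩ | ⟨rfl, rfl⟩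
    · exact hvz.ne rfl
    · exact hzx rfl
  · intro v x ha w hxw hwv hU
    refine main v x ha x w hxw hU ?_ (Or.inl rfl)
    intro h
    rcases Sym2.eq_iff.1 h with ⟨rfl, rfl⟩ | ⟨-, h⟩
    · exact hxw.ne rfl
    · exact hwv h

theorem exists_sym (τ : V → ℕ) (c : V × V → Fin 8) :
    ∃ C : Sym2 V → Fin 8, ∀ v x, τ v < τ x → C s(v, x) = c (v, x) := by
  refine ⟨Sym2.lift ⟨fun a b => if τ a < τ b then c (a, b) else if τ b < τ a then c (b, a) else 0,
    ?_⟩, ?_⟩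
  · intro a b
    beta_reduce
    split_ifs <;> first | rfl | omega
  · intro v x h
    simp [h]

theorem arc_κ (v x : V) (h : IsArc G U O.τ (v, x)) (hx : x ∉ U) :
    ∃ y, G.Adj x y ∧ ∀ n, G.Adj v n → κ y ≤ κ n := by
  refine ⟨O.u x, O.uadj x hx, fun n hn => ?_⟩
  by_contra hc
  have h1 := O.ρκ n (O.u x) (by omega)
  have h2 := O.σle v n hn
  have h3 := O.σ_ge_of_τ h.2.2
  have h4 := O.σu x hx
  simp only at h3
  omega

end VOrd

/-- Partial colouring theorem. -/
theorem exists_val [Fintype V] [DecidableEq V] (G : SimpleGraph V) [DecidableRel G.Adj]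
    (hd : ∀ v, (G.neighborFinset v).card ≤ 3) (κ : V → ℕ) (r : V)
    (hκ : ∀ v, v ≠ r → ∃ y, G.Adj v y ∧ κ y < κ v) (U : Finset V) (hr : r ∈ U)
    (hU : ∀ x, x ∈ U → (G.neighborFinset x).card ≤ 2 ∨ ∃ y ∈ U, G.Adj x y) :
    ∃ (C : Sym2 V → Fin 8) (Ar : V → V → Prop), Val G U C Ar ∧
      ∀ v x, Ar v x → x ∉ U → ∃ y, G.Adj x y ∧ ∀ n, G.Adj v n → κ y ≤ κ n := by
  obtain ⟨O⟩ := exists_ord G hd κ r hκ U ∅ hr hU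
  obtain ⟨key, hinj, hkey⟩ := O.exists_key
  obtain ⟨c, hc⟩ := greedy key (Conf G U O.τ) (fun p => O.cnt_le_seven key hkey p)
  obtain ⟨C, hC⟩ := VOrd.exists_sym O.τ c
  exact ⟨C, _, O.val_of_proper key hinj c hc C hC, fun v x h hx => O.arc_κ v x h hx⟩

/-- Partial colouring theorem with two choices for the colour of one edge `st`. -/
theorem exists_val_two [Fintype V] [DecidableEq V] (G : SimpleGraph V) [DecidableRel G.Adj]
    (hd : ∀ v, (G.neighborFinset v).card ≤ 3) (κ : V → ℕ) (r : V)
    (hκ : ∀ v, v ≠ r → ∃ y, G.Adj v y ∧ κ y < κ v) (U : Finset V) (hr : r ∈ U)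
    (hU : ∀ x, x ∈ U → (G.neighborFinset x).card ≤ 2 ∨ ∃ y ∈ U, G.Adj x y)
    (t q s : V) (ht : t ∈ U) (hsU : s ∉ U) (hqU : q ∉ U) (hsq : s ≠ q)
    (hNt : ∀ w, G.Adj t w → w ∈ U ∨ w = q ∨ w = s) (hts : G.Adj s t) (htq : G.Adj q t)
    (hst : ∀ y, G.Adj s y → y = t ∨ κ t < κ y)
    (hq : ∃ y, G.Adj q y ∧ κ y < κ t)
    (htri : ∀ w, G.Adj s w → G.Adj t w → False)
    (hκt : ∀ y, κ y = κ t → y = t)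
    (hsn : ∀ h, G.Adj s h → h ≠ t → h ∉ U)
    (Live : V → Prop) (hLive : ∀ h, Live h ↔ G.Adj s h ∧ h ≠ t ∧ ∃ y, G.Adj h y ∧ κ y < κ t)
    (hl1 : ∀ h h', Live h → Live h' → h = h')
    (hl2 : ∀ h, Live h → ∃ p, G.Adj h p ∧
      ∀ z, G.Adj h z → z ≠ p → z ∉ U ∧ ∀ y, G.Adj z y → κ p < κ y) :
    ∃ (C : Sym2 V → Fin 8) (m : Fin 8) (Ar : V → V → Prop), m ≠ C s(s, t) ∧ Val G U C Ar ∧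
      Val G U (Function.update C s(s, t) m) Ar := by
  classical
  obtain ⟨O⟩ := exists_ord G hd κ r hκ U (insert q (Finset.univ.filter Live)) hr hU
  obtain ⟨key, hinj, hkey⟩ := O.exists_key
  have us : O.u s = t := by
    rcases hst _ (O.uadj s hsU) with h | h
    · exact h
    · have h1 := O.ρκ _ _ h
      have h2 := O.σle s t hts
      rw [O.σu s hsU] at h2
      omega
  have σs : O.σ s = O.ρ t := by rw [O.σu s hsU, us]
  have tls : t ∈ later G O.τ s := by have := O.u_later hsU; rwa [us] at this
  have τst := (mem_later.1 tls).2
  obtain ⟨yq, hyq, hyq2⟩ := hq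
  have σq : O.σ q < O.ρ t := lt_of_le_of_lt (O.σle q yq hyq) (O.ρκ _ _ hyq2)
  have τsq : O.τ s < O.τ q := O.τσ _ _ (by omega)
  have uqt : t ≠ O.u q := by
    intro h
    have := O.σu q hqU
    rw [← h] at this; omega
  have tlq : t ∈ later G O.τ q :=
    mem_later.2 ⟨htq, O.τσ _ _ (by rw [O.σU t ht]; exact O.σpos hqU)⟩
  have Lq : 2 ≤ (later G O.τ q).card := O.two_le_later hqU tlq uqt
  have live_of : ∀ w, G.Adj s w → w ≠ t → O.τ s < O.τ w → Live w := by
    intro w hsw hwt hτ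
    have hwU := hsn w hsw hwt
    refine (hLive w).2 ⟨hsw, hwt, O.u w, O.uadj w hwU, ?_⟩
    have h1 := O.σ_ge_of_τ hτ
    have h2 := O.σu w hwU
    have h3 : O.u w ≠ t := fun h => htri w hsw (by rw [← h]; exact (O.uadj w hwU).symm)
    have h4 : κ (O.u w) ≠ κ t := fun h => h3 (hκt _ h)
    by_contra hc
    have := O.ρκ t (O.u w) (by omega)
    omega
  have later_s : (later G O.τ s).card ≤ 2 := by
    have h1 : ((later G O.τ s).erase t).card ≤ 1 := by
      rw [Finset.card_le_one]
      intro a ha b hb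
      obtain ⟨ha1, ha2⟩ := Finset.mem_erase.1 ha
      obtain ⟨hb1, hb2⟩ := Finset.mem_erase.1 hb
      rw [mem_later] at ha2 hb2
      exact hl1 a b (live_of a ha2.1 ha1 ha2.2) (live_of b hb2.1 hb1 hb2.2)
    rw [Finset.card_erase_of_mem tls] at h1
    omega
  have lf_live : ∀ h, Live h → O.lf h ≤ 1 := by
    intro h hh
    obtain ⟨p, hp1, hp2⟩ := hl2 h hh
    rw [O.lfdef, Finset.card_le_one]
    have : ∀ z, z ∈ (G.neighborFinset h).filter (fun z => O.σ z ≤ O.σ h) → z = p := by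
      intro z hz
      simp only [Finset.mem_filter, mem_neighborFinset] at hz
      by_contra hne
      obtain ⟨h1, h2⟩ := hp2 z hz.1 hne
      have h3 := O.σu z h1
      have h4 := O.ρκ _ _ (h2 _ (O.uadj z h1))
      have h5 := O.σle h p hp1
      omega
    intro a ha b hb
    rw [this a ha, this b hb]
  have liveU : ∀ h, Live h → h ∉ U := fun h hh => by
    have := (hLive h).1 hh
    exact hsn h this.1 this.2.1
  have lf_pos : ∀ g, g ∉ U → 1 ≤ (later G O.τ g).card := fun g hg =>
    Finset.card_pos.2 ⟨_, O.u_later hg⟩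
  have hSp : ∀ g, g ∈ insert q (Finset.univ.filter Live) ↔ g = q ∨ Live g := by intro g; simp
  have c0 : O.cnt key (s, t) ≤ 6 := by
    have := O.cnt_le key hkey s t hsU tls 0 (by
      intro g hg hτ hsg
      exfalso
      rcases hNt g hg with h | h | h
      · have := O.τσ s g (by rw [O.σU g h]; exact O.σpos hsU)
        omega
      · subst h; omega
      · subst h; omega)
    rw [if_pos us.symm] at this
    have := lf_pos s hsU
    omega
  -- arcs out of q
  have cq : ∀ x, x ∈ later G O.τ q → O.cnt key (q, x) ≤ 6 := by
    intro x hx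
    by_cases hxu : x = O.u q
    · have := O.cnt_le key hkey q x hqU hx ((later G O.τ q).card - 1) (by
        intro g hg hτ hqg
        rw [hxu] at hg
        have h1 := O.sib hqU hg hτ
        have h2 := O.later_eq_lf hqU hg hτ hqg
        have h3 := O.later_le_lf g
        by_cases hgS : g ∈ insert q (Finset.univ.filter Live)
        · rcases (hSp g).1 hgS with h | h
          · subst h; omega
          · have := lf_live g h
            omega
        · have h4 := h1.2.2
          rw [O.mnSp g hgS, O.mSp q ((hSp q).2 (Or.inl rfl))] at h4
          omega)
      rw [if_pos hxu] at this
      omega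
    · by_cases hxt : x = t
      · have := O.cnt_le key hkey q x hqU hx 2 (by
          intro g hg hτ hqg
          rw [hxt] at hg
          rcases hNt g hg with h | h | h
          · have := O.τσ q g (by rw [O.σU g h]; exact O.σpos hqU)
            omega
          · subst h; omega
          · subst h; exact later_s)
        rw [if_neg hxu] at this
        omega
      · have := O.cnt_le key hkey q x hqU hx 3 (fun g _ _ _ => O.later_card_le g)
        rw [if_neg hxu] at this
        have h3 : 3 ≤ (later G O.τ q).card := by
          have hsub : ({x, t, O.u q} : Finset V) ⊆ later G O.τ q := by
            intro y hy
            simp only [Finset.mem_insert, Finset.mem_singleton] at hy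
            rcases hy with rfl | rfl | rfl
            · exact hx
            · exact tlq
            · exact O.u_later hqU
          have := Finset.card_le_card hsub
          rwa [Finset.card_eq_three.2 ⟨x, t, O.u q, hxt, hxu, uqt, rfl⟩] at this
        omega
  have ch : ∀ h x, Live h → x ∈ later G O.τ h → O.cnt key (h, x) ≤ 6 := by
    intro h x hh hx
    have hhU := liveU h hh
    have hxu : x = O.u h := by
      by_contra hne
      have h1 := O.two_le_later hhU hx hne
      have h2 := lf_live h hh
      have h3 := O.later_le_lf h
      omega
    have := O.cnt_le key hkey h x hhU hx 0 (by
      intro g hg hτ hhg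
      exfalso
      rw [hxu] at hg
      have h1 := O.sib hhU hg hτ
      have h2 := lf_live h hh
      have h3 := O.later_le_lf g
      have h4 := lf_pos g h1.1
      by_cases hgS : g ∈ insert q (Finset.univ.filter Live)
      · rcases (hSp g).1 hgS with h5 | h5
        · subst h5
          have := O.lf_of_m h1.2.2
          omega
        · have := hl1 _ _ h5 hh
          subst this; omega
      · have h5 := h1.2.2
        rw [O.mnSp g hgS, O.mSp h ((hSp h).2 (Or.inr hh))] at h5
        omega)
    rw [if_pos hxu] at this
    have := lf_pos h hhU
    omega
  have cx : ∀ v h, v ∉ U → O.τ s < O.τ v → Live h → h ∈ later G O.τ v → O.cnt key (v, h) ≤ 6 := by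
    intro v h hvU hsv hh hx
    obtain ⟨hsh, hht, -⟩ := (hLive h).1 hh
    have hxu : h ≠ O.u v := by
      intro hu
      have h1 := O.σu v hvU
      rw [← hu] at h1
      have h2 := O.σ_ge_of_τ hsv
      have h3 := O.ρκ t h ((hst h hsh).resolve_left hht)
      omega
    have := O.cnt_le key hkey v h hvU hx 2 (by
      intro g hg hτ hvg
      have h1 := O.h1 v hvU h hx
      have : g = s := Finset.card_le_one.1 h1 g (by simp [hg, hτ]) s (by simp [hsh.symm, hsv])
      rw [this]; exact later_s)
    rw [if_neg hxu] at this
    have := O.two_le_later hvU hx hxu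
    omega
  have hlater : ∀ i, key (s, t) < key i → Conf G U O.τ i (s, t) → O.cnt key i ≤ 6 := by
    rintro ⟨v, x⟩ hk ⟨⟨hvU, hvx, hτ⟩, -, hne, hcf⟩
    replace hvU : v ∉ U := hvU
    replace hvx : G.Adj v x := hvx
    replace hτ : O.τ v < O.τ x := hτ
    have hx : x ∈ later G O.τ v := mem_later.2 ⟨hvx, hτ⟩
    have hsv : O.τ s < O.τ v := by
      rcases hkey s t v x hk with h | ⟨h1, h2, h3⟩
      · exact h
      · subst h1
        rw [us] at h3
        exact absurd rfl (h3 (fun h => h2 h.symm))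
    have hvs : v ≠ s := fun h => by subst h; omega
    have toq : G.Adj t v → O.cnt key (v, x) ≤ 6 := by
      intro h
      rcases hNt v h with h | h | h
      · exact absurd h hvU
      · subst h; exact cq x hx
      · exact absurd h hvs
    rcases hcf with h | h | h | h | h | h | h
    · exact absurd (Eq.symm h) hvs
    · replace h : s = x := h
      subst h; omega
    · replace h : t = v := h
      subst h; exact absurd ht hvU
    · replace h : t = x := h
      subst h; exact toq hvx.symm
    · replace h : G.Adj v s := h
      have hvt : v ≠ t := fun h' => hvU (h' ▸ ht)
      exact ch v x (live_of v h.symm hvt hsv) hx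
    · replace h : G.Adj v t := h
      exact toq h.symm
    · replace h : G.Adj s x := h
      by_cases hxt : x = t
      · subst hxt; exact toq hvx.symm
      · exact cx v x hvU hsv (live_of x h hxt (by omega)) hx
  obtain ⟨c, m, hm, hc1, hc2⟩ := greedy_two key hinj (Conf G U O.τ)
    (fun p => O.cnt_le_seven key hkey p) (s, t) c0 hlater
  obtain ⟨C, hC⟩ := VOrd.exists_sym O.τ c
  refine ⟨C, m, _, ?_, O.val_of_proper key hinj c hc1 C hC,
    O.val_of_proper key hinj _ hc2 _ ?_⟩
  · rw [hC s t τst]; exact hm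
  · intro v x hvx
    by_cases h : (v, x) = (s, t)
    · cases h; simp
    · have h' : s(v, x) ≠ s(s, t) := by
        intro h'
        rcases Sym2.eq_iff.1 h' with ⟨rfl, rfl⟩ | ⟨rfl, rfl⟩
        · exact h rfl
        · omega
      rw [Function.update_of_ne h', Function.update_of_ne h, hC v x hvx]

theorem exists_closer (G : SimpleGraph V) (hconn : G.Connected) (r v : V) (h : v ≠ r) :
    ∃ y, G.Adj v y ∧ G.dist y r < G.dist v r := by
  obtain ⟨p, hp⟩ := hconn.exists_walk_length_eq_dist v r
  cases p with
  | nil => exact absurd rfl h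
  | @cons _ y _ hadj p =>
    refine ⟨y, hadj, ?_⟩
    have := dist_le p
    rw [Walk.length_cons] at hp
    omega

theorem pick7 (S : Finset (Fin 8)) (h : S.card ≤ 7) : ∃ a, a ∉ S := by
  by_contra hcon
  push Not at hcon
  have : (Finset.univ : Finset (Fin 8)) ⊆ S := fun a _ => hcon a
  have := Finset.card_le_card this
  simp at this
  omega

theorem card_compl8 (S : Finset (Fin 8)) (k : ℕ) (h : S.card ≤ k) : 8 ≤ (Sᶜ).card + k := by
  have := Finset.card_compl_add_card S
  rw [Fintype.card_fin] at this
  omega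

/-- Distinct representatives for three lists of size at least two. -/
theorem sdr3 (A B C : Finset (Fin 8)) (hA : 2 ≤ A.card) (hB : 2 ≤ B.card) (hC : 2 ≤ C.card)
    (h : A ≠ B ∨ B ≠ C ∨ 3 ≤ A.card) :
    ∃ a b c, a ∈ A ∧ b ∈ B ∧ c ∈ C ∧ a ≠ b ∧ a ≠ c ∧ b ≠ c := by
  classical
  -- a 2-element choice avoiding a given one
  have pick1 : ∀ (S : Finset (Fin 8)) (x : Fin 8), 2 ≤ S.card → ∃ y ∈ S, y ≠ x := by
    intro S x hS
    obtain ⟨y, hy, hne⟩ := Finset.exists_mem_ne (by omega : 1 < S.card) x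
    exact ⟨y, hy, hne⟩
  have pick2 : ∀ (S : Finset (Fin 8)) (x y : Fin 8), 3 ≤ S.card → ∃ z ∈ S, z ≠ x ∧ z ≠ y := by
    intro S x y hS
    have : 0 < ((S.erase x).erase y).card := by
      have h1 := Finset.pred_card_le_card_erase (s := S) (a := x)
      have h2 := Finset.pred_card_le_card_erase (s := S.erase x) (a := y)
      omega
    obtain ⟨z, hz⟩ := Finset.card_pos.1 this
    simp only [Finset.mem_erase] at hz
    exact ⟨z, hz.2.2, hz.2.1, hz.1⟩
  -- given x ∈ X \ Y, pick for Z avoiding x, then for Y avoiding that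
  have main : ∀ (X Y Z : Finset (Fin 8)) (x : Fin 8), x ∈ X → x ∉ Y → 2 ≤ Y.card → 2 ≤ Z.card →
      ∃ a b c, a ∈ X ∧ b ∈ Y ∧ c ∈ Z ∧ a ≠ b ∧ a ≠ c ∧ b ≠ c := by
    intro X Y Z x hx hxY hY hZ
    obtain ⟨c, hc, hcx⟩ := pick1 Z x hZ
    obtain ⟨b, hb, hbc⟩ := pick1 Y c hY
    exact ⟨x, b, c, hx, hb, hc, fun h => hxY (h ▸ hb), hcx.symm, hbc⟩
  have split : ∀ (X Y : Finset (Fin 8)), X ≠ Y → (∃ x, x ∈ X ∧ x ∉ Y) ∨ (∃ x, x ∈ Y ∧ x ∉ X) := by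
    intro X Y hne
    by_contra hc
    push Not at hc
    exact hne (Finset.Subset.antisymm (fun x hx => hc.1 x hx) (fun x hx => hc.2 x hx))
  by_cases h1 : A = B
  · by_cases h2 : B = C
    · have h3 : 3 ≤ A.card := by
        rcases h with h | h | h
        · exact absurd h1 h
        · exact absurd h2 h
        · exact h
      subst h1; subst h2
      obtain ⟨a, ha, -⟩ := pick1 A 0 hA
      obtain ⟨b, hb, hba⟩ := pick1 A a hA
      obtain ⟨c, hc, hca, hcb⟩ := pick2 A a b h3
      exact ⟨a, b, c, ha, hb, hc, hba.symm, hca.symm, hcb.symm⟩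
    · rcases split B C h2 with ⟨x, hx, hx'⟩ | ⟨x, hx, hx'⟩
      · obtain ⟨b, c, a, hb, hc, ha, e1, e2, e3⟩ := main B C A x hx hx' hC hA
        exact ⟨a, b, c, ha, hb, hc, e2.symm, e3.symm, e1⟩
      · obtain ⟨c, b, a, hc, hb, ha, e1, e2, e3⟩ := main C B A x hx hx' hB hA
        exact ⟨a, b, c, ha, hb, hc, e3.symm, e2.symm, e1.symm⟩
  · rcases split A B h1 with ⟨x, hx, hx'⟩ | ⟨x, hx, hx'⟩
    · exact main A B C x hx hx' hB hC
    · obtain ⟨b, a, c, hb, ha, hc, e1, e2, e3⟩ := main B A C x hx hx' hA hC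
      exact ⟨a, b, c, ha, hb, hc, e1.symm, e3, e2⟩

/-- Colours of the edges at `g`. -/
def colE [Fintype V] (G : SimpleGraph V) [DecidableRel G.Adj] (C : Sym2 V → Fin 8) (g : V) :
    Finset (Fin 8) := (G.neighborFinset g).image (fun x => C s(g, x))

theorem colE_card [Fintype V] (G : SimpleGraph V) [DecidableRel G.Adj] (C : Sym2 V → Fin 8)
    (hd : ∀ v, (G.neighborFinset v).card ≤ 3) (g : V) : (colE G C g).card ≤ 3 :=
  Finset.card_image_le.trans (hd g)

theorem mem_colE [Fintype V] (G : SimpleGraph V) [DecidableRel G.Adj] (C : Sym2 V → Fin 8)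
    {g x : V} (h : G.Adj g x) : C s(g, x) ∈ colE G C g :=
  Finset.mem_image.2 ⟨x, by simpa using h, rfl⟩

theorem ne_of_notMem_colE [Fintype V] (G : SimpleGraph V) [DecidableRel G.Adj]
    (C : Sym2 V → Fin 8) {g x : V} {a : Fin 8} (ha : a ∉ colE G C g) (h : G.Adj g x) :
    a ≠ C s(g, x) := fun h' => ha (h' ▸ mem_colE G C h)

theorem third [Fintype V] [DecidableEq V] {G : SimpleGraph V} [DecidableRel G.Adj]
    {v : V} (h3 : (G.neighborFinset v).card = 3) {a b : V} (ha : G.Adj v a) (hb : G.Adj v b)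
    (hab : a ≠ b) :
    ∃ c, G.Adj v c ∧ c ≠ a ∧ c ≠ b ∧ ∀ w, G.Adj v w → w = a ∨ w = b ∨ w = c := by
  have hc : (((G.neighborFinset v).erase a).erase b).card = 1 := by
    rw [Finset.card_erase_of_mem, Finset.card_erase_of_mem, h3]
    · simpa using ha
    · simp [hb, hab.symm]
  obtain ⟨c, hc⟩ := Finset.card_eq_one.1 hc
  have hm : ∀ w, w ∈ ((G.neighborFinset v).erase a).erase b ↔ w = c := by
    intro w; rw [hc]; simp
  simp only [Finset.mem_erase, mem_neighborFinset] at hm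
  have := (hm c).2 rfl
  refine ⟨c, this.2.2, this.2.1, this.1, fun w hw => ?_⟩
  by_cases h1 : w = a
  · exact Or.inl h1
  · by_cases h2 : w = b
    · exact Or.inr (Or.inl h2)
    · exact Or.inr (Or.inr ((hm w).1 ⟨h2, h1, hw⟩))

theorem others [Fintype V] [DecidableEq V] {G : SimpleGraph V} [DecidableRel G.Adj]
    {v : V} (h3 : (G.neighborFinset v).card = 3) {a : V} (ha : G.Adj v a) :
    ∃ b c, G.Adj v b ∧ G.Adj v c ∧ b ≠ a ∧ c ≠ a ∧ c ≠ b ∧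
      ∀ w, G.Adj v w → w = a ∨ w = b ∨ w = c := by
  obtain ⟨b, hb, hba⟩ := Finset.exists_mem_ne (by omega : 1 < (G.neighborFinset v).card) a
  have hb' : G.Adj v b := by simpa using hb
  obtain ⟨c, h1, h2, h3, h4⟩ := third h3 ha hb' hba.symm
  exact ⟨b, c, hb', h1, hba, h2, h3, h4⟩

/-- Case 1: some vertex has degree at most two. -/
theorem case_deg_two [Fintype V] [DecidableEq V] (G : SimpleGraph V) [DecidableRel G.Adj]
    (hconn : G.Connected) (hd : ∀ v, (G.neighborFinset v).card ≤ 3) (r : V)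
    (hr : (G.neighborFinset r).card ≤ 2) : HasSemistrongEdgeColoring G 8 := by
  obtain ⟨C, Ar, hV, -⟩ := exists_val G hd (fun v => G.dist v r) r
    (fun v hv => exists_closer G hconn r v hv) {r} (by simp) (by
      intro x hx
      rw [Finset.mem_singleton] at hx
      subst hx; exact Or.inl hr)
  refine hV.extend C (fun _ _ _ => rfl) ?_ ?_ ?_
  · intro z w g x hz hw h
    rw [Finset.mem_singleton] at hz hw
    subst hz; subst hw; exact absurd rfl h.ne
  · intro z w hz hw h
    rw [Finset.mem_singleton] at hz hw
    subst hz; subst hw; exact absurd rfl h.ne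
  · intro x z w hz hw _ h
    rw [Finset.mem_singleton] at hz hw
    subst hz; subst hw; exact absurd rfl h.ne

theorem sym_ne {a b c d : V} (h1 : a ≠ c ∨ b ≠ d) (h2 : a ≠ d ∨ b ≠ c) : s(a, b) ≠ s(c, d) := by
  intro h
  rcases Sym2.eq_iff.1 h with ⟨h, hh⟩ | ⟨h, hh⟩
  · rcases h1 with h1 | h1
    · exact h1 h
    · exact h1 hh
  · rcases h2 with h2 | h2
    · exact h2 h
    · exact h2 hh

/-- Case 2: a triangle `r a b` whose vertex `r` has a private third neighbour. -/
theorem case_triangle [Fintype V] [DecidableEq V] (G : SimpleGraph V) [DecidableRel G.Adj]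
    (hconn : G.Connected) (hd : ∀ v, (G.neighborFinset v).card ≤ 3) (r a b v a' b' v1 v2 : V)
    (hra : G.Adj r a) (hrb : G.Adj r b) (hab : G.Adj a b) (hrv : G.Adj r v)
    (haa' : G.Adj a a') (hbb' : G.Adj b b') (hv1 : G.Adj v v1) (hv2 : G.Adj v v2)
    (Nr : ∀ w, G.Adj r w → w = a ∨ w = b ∨ w = v)
    (Na : ∀ w, G.Adj a w → w = r ∨ w = b ∨ w = a')
    (Nb : ∀ w, G.Adj b w → w = r ∨ w = a ∨ w = b')
    (Nv : ∀ w, G.Adj v w → w = r ∨ w = v1 ∨ w = v2)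
    (hva : v ≠ a) (hvb : v ≠ b) (hva' : v ≠ a') (hvb' : v ≠ b')
    (ha'r : a' ≠ r) (ha'b : a' ≠ b) (hb'r : b' ≠ r) (hb'a : b' ≠ a)
    (hv1r : v1 ≠ r) (hv2r : v2 ≠ r) :
    HasSemistrongEdgeColoring G 8 := by
  have nra := hra.ne
  have nrb := hrb.ne
  have nab := hab.ne
  have nrv := hrv.ne
  have na'a := haa'.ne'
  have nb'b := hbb'.ne'
  have nv1 := hv1.ne'
  have nv2 := hv2.ne'
  have hv1a : v1 ≠ a := by rintro rfl; rcases Na v hv1.symm with h | h | h <;> simp_all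
  have hv2a : v2 ≠ a := by rintro rfl; rcases Na v hv2.symm with h | h | h <;> simp_all
  have hv1b : v1 ≠ b := by rintro rfl; rcases Nb v hv1.symm with h | h | h <;> simp_all
  have hv2b : v2 ≠ b := by rintro rfl; rcases Nb v hv2.symm with h | h | h <;> simp_all
  obtain ⟨U, hU⟩ : ∃ U : Finset V, ∀ x, x ∈ U ↔ x = r ∨ x = a ∨ x = b ∨ x = v :=
    ⟨{r, a, b, v}, by simp⟩
  have rU : r ∈ U := by simp [hU]
  have aU : a ∈ U := by simp [hU]
  have bU : b ∈ U := by simp [hU]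
  have vU : v ∈ U := by simp [hU]
  have a'U : a' ∉ U := by simp [hU, *, Ne.symm hva']
  have b'U : b' ∉ U := by simp [hU, *, Ne.symm hvb']
  have v1U : v1 ∉ U := by simp [hU, *]
  have v2U : v2 ∉ U := by simp [hU, *]
  obtain ⟨C, Ar, hV, -⟩ := exists_val G hd (fun v => G.dist v r) r
    (fun v hv => exists_closer G hconn r v hv) U rU (by
      intro x hx
      right
      rcases (hU x).1 hx with rfl | rfl | rfl | rfl
      · exact ⟨_, aU, hra⟩
      · exact ⟨_, rU, hra.symm⟩
      · exact ⟨_, rU, hrb.symm⟩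
      · exact ⟨_, rU, hrv.symm⟩)
  have cE := colE_card G C hd
  have e1 := cE v1
  have e2 := cE v2
  have e3 := cE a'
  have e4 := cE b'
  obtain ⟨c1, hc1⟩ := pick7 (colE G C v1 ∪ colE G C v2) (by
    have := Finset.card_union_le (colE G C v1) (colE G C v2); omega)
  obtain ⟨c2, hc2⟩ := pick7 (insert c1 (colE G C a' ∪ colE G C b')) (by
    have h1 := Finset.card_union_le (colE G C a') (colE G C b')
    have h2 := Finset.card_insert_le c1 (colE G C a' ∪ colE G C b')
    omega)
  obtain ⟨c3, hc3⟩ := pick7 (insert c1 (insert c2 (insert (C s(b, b')) (colE G C a')))) (by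
    have h1 := Finset.card_insert_le (C s(b, b')) (colE G C a')
    have h2 := Finset.card_insert_le c2 (insert (C s(b, b')) (colE G C a'))
    have h3 := Finset.card_insert_le c1 (insert c2 (insert (C s(b, b')) (colE G C a')))
    omega)
  obtain ⟨c4, hc4⟩ := pick7 (insert c3 (insert c1 (insert c2 (insert (C s(a, a')) (colE G C b'))))) (by
    have h1 := Finset.card_insert_le (C s(a, a')) (colE G C b')
    have h2 := Finset.card_insert_le c2 (insert (C s(a, a')) (colE G C b'))
    have h3 := Finset.card_insert_le c1 (insert c2 (insert (C s(a, a')) (colE G C b')))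
    have h4 := Finset.card_insert_le c3 (insert c1 (insert c2 (insert (C s(a, a')) (colE G C b'))))
    omega)
  simp only [Finset.mem_insert, Finset.mem_union, not_or] at hc1 hc2 hc3 hc4
  obtain ⟨D, dra, drb, dab, drv, dC⟩ : ∃ D : Sym2 V → Fin 8, D s(r, a) = c3 ∧ D s(r, b) = c4 ∧
      D s(a, b) = c2 ∧ D s(r, v) = c1 ∧ ∀ x y, x ∉ U → D s(x, y) = C s(x, y) := by
    refine ⟨fun e => if e = s(r, a) then c3 else if e = s(r, b) then c4 else if e = s(a, b) then c2
      else if e = s(r, v) then c1 else C e, by simp, ?_, ?_, ?_, ?_⟩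
    · simp [nrb, nra, nab.symm]
    · simp [nra.symm, nab, nab.symm, nrb.symm]
    · simp [*]
    · intro x y hx
      rw [hU] at hx
      simp only [not_or] at hx
      simp [hx]
  have dC' : ∀ x y, y ∉ U → D s(x, y) = C s(x, y) := by
    intro x y hy; rw [Sym2.eq_swap, dC _ _ hy]
  have dar : D s(a, r) = c3 := by rw [Sym2.eq_swap, dra]
  have dbr : D s(b, r) = c4 := by rw [Sym2.eq_swap, drb]
  have dba : D s(b, a) = c2 := by rw [Sym2.eq_swap, dab]
  have dvr : D s(v, r) = c1 := by rw [Sym2.eq_swap, drv]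
  have ce : ∀ g x, G.Adj g x → C s(g, x) ∈ colE G C g := fun g x h => mem_colE G C h
  have Nr' : ∀ w, G.Adj r w → a = w ∨ b = w ∨ v = w := by
    intro w h; have := Nr w h; simpa [eq_comm] using this
  have Na' : ∀ w, G.Adj a w → r = w ∨ b = w ∨ a' = w := by
    intro w h; have := Na w h; simpa [eq_comm] using this
  have Nb' : ∀ w, G.Adj b w → r = w ∨ a = w ∨ b' = w := by
    intro w h; have := Nb w h; simpa [eq_comm] using this
  have Nv' : ∀ w, G.Adj v w → r = w ∨ v1 = w ∨ v2 = w := by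
    intro w h; have := Nv w h; simpa [eq_comm] using this
  have mU : ∀ x ∈ U, r = x ∨ a = x ∨ b = x ∨ v = x := by
    intro x h; have := (hU x).1 h; simpa [eq_comm] using this
  have hadj := hV.adj
  clear hU hconn e1 e2 e3 e4 cE Nr Na Nb Nv
  have g1 : Good G D v r := by
    intro n n' h1 h2 h3
    have := ce n n' h3
    rcases Nv' n h1 with rfl | rfl | rfl
    · grind
    · rw [dC _ _ v1U, dvr]; grind
    · rw [dC _ _ v2U, dvr]; grind
  have g2 : Good G D a b := by
    intro n n' h1 h2 h3
    have := ce n n' h3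
    rcases Na' n h1 with rfl | rfl | rfl
    · rcases Nr' n' h3 with rfl | rfl | rfl <;> grind
    · grind
    · rw [dC _ _ a'U, dab]; grind
  have g3 : Good G D a r := by
    intro n n' h1 h2 h3
    have := ce n n' h3
    rcases Na' n h1 with rfl | rfl | rfl
    · grind
    · rcases Nb' n' h3 with rfl | rfl | rfl <;> grind
    · rw [dC _ _ a'U, dar]; grind
  have g4 : Good G D b r := by
    intro n n' h1 h2 h3
    have := ce n n' h3
    rcases Nb' n h1 with rfl | rfl | rfl
    · grind
    · rcases Na' n' h3 with rfl | rfl | rfl <;> grind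
    · rw [dC _ _ b'U, dbr]; grind
  have E : ∀ z w, z ∈ U → w ∈ U → G.Adj z w → (r = z ∧ a = w) ∨ (a = z ∧ r = w) ∨
      (r = z ∧ b = w) ∨ (b = z ∧ r = w) ∨ (a = z ∧ b = w) ∨ (b = z ∧ a = w) ∨
      (r = z ∧ v = w) ∨ (v = z ∧ r = w) := by
    intro z w hz hw h
    rcases mU z hz with rfl | rfl | rfl | rfl
    · rcases Nr' w h with rfl | rfl | rfl <;> simp
    · rcases Na' w h with rfl | rfl | rfl <;> simp_all
    · rcases Nb' w h with rfl | rfl | rfl <;> simp_all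
    · rcases Nv' w h with rfl | rfl | rfl <;> simp_all
  refine hV.extend D dC ?_ ?_ ?_
  · intro z w g x hz hw hzw hgz ha
    clear hV
    have h1 := hadj g x ha
    have h2 := ce g x h1.2
    have h3 := h1.1
    clear ce hadj
    rcases E z w hz hw hzw with ⟨rfl, rfl⟩ | ⟨rfl, rfl⟩ | ⟨rfl, rfl⟩ | ⟨rfl, rfl⟩ | ⟨rfl, rfl⟩ |
      ⟨rfl, rfl⟩ | ⟨rfl, rfl⟩ | ⟨rfl, rfl⟩
    · rcases Nr' g hgz.symm with rfl | rfl | rfl <;> contradiction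
    · rcases Na' g hgz.symm with rfl | rfl | rfl <;> grind only
    · rcases Nr' g hgz.symm with rfl | rfl | rfl <;> contradiction
    · rcases Nb' g hgz.symm with rfl | rfl | rfl <;> grind only
    · rcases Na' g hgz.symm with rfl | rfl | rfl <;> grind only
    · rcases Nb' g hgz.symm with rfl | rfl | rfl <;> grind only
    · rcases Nr' g hgz.symm with rfl | rfl | rfl <;> contradiction
    · rcases Nv' g hgz.symm with rfl | rfl | rfl <;> grind only
  · intro z w hz hw hzw
    rcases E z w hz hw hzw with ⟨rfl, rfl⟩ | ⟨rfl, rfl⟩ | ⟨rfl, rfl⟩ | ⟨rfl, rfl⟩ | ⟨rfl, rfl⟩ |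
      ⟨rfl, rfl⟩ | ⟨rfl, rfl⟩ | ⟨rfl, rfl⟩ <;> simp [g1, g2, g3, g4]
  · intro x z w hx hz hw h1 h2 h3
    clear hV ce hadj
    rcases E x z hx hz h1 with ⟨rfl, rfl⟩ | ⟨rfl, rfl⟩ | ⟨rfl, rfl⟩ | ⟨rfl, rfl⟩ | ⟨rfl, rfl⟩ |
      ⟨rfl, rfl⟩ | ⟨rfl, rfl⟩ | ⟨rfl, rfl⟩
    · rcases Nr' w h2 with rfl | rfl | rfl <;> grind only
    · rcases Na' w h2 with rfl | rfl | rfl <;> grind only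
    · rcases Nr' w h2 with rfl | rfl | rfl <;> grind only
    · rcases Nb' w h2 with rfl | rfl | rfl <;> grind only
    · rcases Na' w h2 with rfl | rfl | rfl <;> grind only
    · rcases Nb' w h2 with rfl | rfl | rfl <;> grind only
    · rcases Nr' w h2 with rfl | rfl | rfl <;> grind only
    · rcases Nv' w h2 with rfl | rfl | rfl <;> grind only

theorem closed_univ (G : SimpleGraph V) (hconn : G.Connected) (S : V → Prop) (r : V) (hr : S r)
    (h : ∀ x y, S x → G.Adj x y → S y) (v : V) : S v := by
  obtain ⟨p⟩ := hconn.preconnected r v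
  induction p with
  | nil => exact hr
  | cons hadj _ ih => exact ih (h _ _ hr hadj)

/-- Colouring a small graph from a table. -/
theorem small_graph (G : SimpleGraph V) {n : ℕ} (f : Fin n → V) (hf : Function.Bijective f)
    (P : Fin n → Fin n → Bool) (hP : ∀ a b, G.Adj (f a) (f b) → P a b = true)
    (col : Fin n → Fin n → Fin 8) (hs : ∀ a b, col a b = col b a)
    (hp : ∀ x y, P x y = true → ∀ z, P x z = true → y ≠ z → col x y ≠ col x z)
    (hg : ∀ x y, P x y = true →
      (∀ z, P x z = true → z ≠ y → ∀ w, P z w = true → col z w ≠ col x y) ∨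
      (∀ z, P y z = true → z ≠ x → ∀ w, P z w = true → col z w ≠ col y x)) :
    HasSemistrongEdgeColoring G 8 := by
  have e := Equiv.ofBijective f hf
  obtain ⟨e, he⟩ : ∃ e : V → Fin n, ∀ x, f (e x) = x :=
    ⟨(Equiv.ofBijective f hf).symm, fun x => (Equiv.ofBijective f hf).apply_symm_apply x⟩
  have hP' : ∀ x y, G.Adj x y → P (e x) (e y) = true := by
    intro x y h; apply hP; rwa [he, he]
  have hne : ∀ x y, x ≠ y → e x ≠ e y := by
    intro x y h h'; apply h; rw [← he x, ← he y, h']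
  obtain ⟨C, hC⟩ : ∃ C : Sym2 V → Fin 8, ∀ x y, C s(x, y) = col (e x) (e y) :=
    ⟨Sym2.lift ⟨fun x y => col (e x) (e y), fun x y => hs _ _⟩, fun x y => rfl⟩
  apply ssColoring_of_good G C
  · intro x y z h1 h2 h3
    rw [hC, hC]
    exact hp _ _ (hP' _ _ h1) _ (hP' _ _ h2) (hne _ _ h3)
  · intro x y h
    rcases hg _ _ (hP' _ _ h) with h' | h'
    · left
      intro z w h1 h2 h3
      rw [hC, hC]
      exact h' _ (hP' _ _ h1) (hne _ _ h2) _ (hP' _ _ h3)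
    · right
      intro z w h1 h2 h3
      rw [hC, hC]
      exact h' _ (hP' _ _ h1) (hne _ _ h2) _ (hP' _ _ h3)

theorem case_K4 (G : SimpleGraph V) (hconn : G.Connected) (r a b v : V)
    (nra : r ≠ a) (nrb : r ≠ b) (nab : a ≠ b) (nrv : r ≠ v) (nav : a ≠ v) (nbv : b ≠ v)
    (Nr : ∀ w, G.Adj r w → w = a ∨ w = b ∨ w = v)
    (Na : ∀ w, G.Adj a w → w = r ∨ w = b ∨ w = v)
    (Nb : ∀ w, G.Adj b w → w = r ∨ w = a ∨ w = v)
    (Nv : ∀ w, G.Adj v w → w = r ∨ w = a ∨ w = b) :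
    HasSemistrongEdgeColoring G 8 := by
  have hall := closed_univ G hconn (fun x => x = r ∨ x = a ∨ x = b ∨ x = v) r (Or.inl rfl) (by
    intro x y hx hxy
    rcases hx with h | h | h | h
    · have := Nr y (h ▸ hxy); tauto
    · have := Na y (h ▸ hxy); tauto
    · have := Nb y (h ▸ hxy); tauto
    · have := Nv y (h ▸ hxy); tauto)
  refine small_graph G ![r, a, b, v] ⟨?_, ?_⟩ (fun x y => decide (x ≠ y)) ?_
    ![![0, 0, 1, 2], ![0, 0, 3, 4], ![1, 3, 0, 5], ![2, 4, 5, 0]] (by decide) (by decide) (by decide)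
  · intro x y h
    fin_cases x <;> fin_cases y <;> simp_all
  · intro x
    rcases hall x with rfl | rfl | rfl | rfl
    · exact ⟨0, rfl⟩
    · exact ⟨1, rfl⟩
    · exact ⟨2, rfl⟩
    · exact ⟨3, rfl⟩
  · intro x y h
    have : x ≠ y := by rintro rfl; exact h.ne rfl
    simpa using this

theorem case_triangle_full [Fintype V] [DecidableEq V] (G : SimpleGraph V) [DecidableRel G.Adj]
    (hconn : G.Connected) (h3 : ∀ v, (G.neighborFinset v).card = 3) (r a b : V)
    (hra : G.Adj r a) (hrb : G.Adj r b) (hab : G.Adj a b) :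
    HasSemistrongEdgeColoring G 8 := by
  have hd : ∀ v, (G.neighborFinset v).card ≤ 3 := fun v => (h3 v).le
  obtain ⟨r', hr', r1, r2, Nr⟩ := third (h3 r) hra hrb hab.ne
  obtain ⟨a', ha', a1, a2, Na⟩ := third (h3 a) hra.symm hab hrb.ne
  obtain ⟨b', hb', b1, b2, Nb⟩ := third (h3 b) hrb.symm hab.symm hra.ne
  obtain ⟨x1, x2, hx1, hx2, x3, x4, x5, Nr'⟩ := others (h3 r') hr'.symm
  obtain ⟨y1, y2, hy1, hy2, y3, y4, y5, Na'⟩ := others (h3 a') ha'.symm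
  obtain ⟨z1, z2, hz1, hz2, z3, z4, z5, Nb'⟩ := others (h3 b') hb'.symm
  by_cases e1 : r' = a'
  · by_cases e2 : r' = b'
    · subst e1; subst e2
      obtain ⟨c, hc, c1, c2, Nc⟩ := third (h3 r') hr'.symm ha'.symm hra.ne
      refine case_K4 G hconn r a b r' hra.ne hrb.ne hab.ne hr'.ne ha'.ne hb'.ne Nr Na Nb ?_
      have hcb : b = c := by
        have := Nc b hb'.symm
        have h1 := hrb.ne'
        have h2 := hab.ne'
        tauto
      rw [hcb]; exact Nc
    · have e3 : b' ≠ a' := by rw [← e1]; exact fun h => e2 h.symm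
      exact case_triangle G hconn hd b r a b' r' a' z1 z2 hrb.symm hab.symm hra hb' hr' ha' hz1 hz2
        Nb (fun w h => by have := Nr w h; tauto) (fun w h => by have := Na w h; tauto) Nb'
        b1 b2 (fun h => e2 h.symm) e3 r2 r1 a2 a1 z3 z4
  · by_cases e2 : r' = b'
    · have e3 : a' ≠ b' := by rw [← e2]; exact fun h => e1 h.symm
      exact case_triangle G hconn hd a r b a' r' b' y1 y2 hra.symm hab hrb ha' hr' hb' hy1 hy2
        Na (fun w h => by have := Nr w h; tauto) (fun w h => by have := Nb w h; tauto) Na'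
        a1 a2 (fun h => e1 h.symm) e3 r1 r2 b2 b1 y3 y4
    · exact case_triangle G hconn hd r a b r' a' b' x1 x2 hra hrb hab hr' ha' hb' hx1 hx2
        Nr Na Nb Nr' r1 r2 e1 e2 a1 a2 b1 b2 x3 x4

set_option maxHeartbeats 4000000 in
/-- Final step around a 4-cycle. -/
theorem fin_C4 [Fintype V] [DecidableEq V] (G : SimpleGraph V) [DecidableRel G.Adj]
    (U : Finset V) (C : Sym2 V → Fin 8) (Ar : V → V → Prop) (hV : Val G U C Ar)
    (r y t v q z s v1 v2 g : V)
    (Nr : ∀ w, G.Adj r w → y = w ∨ t = w ∨ v = w)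
    (Ny : ∀ w, G.Adj y w → r = w ∨ q = w ∨ z = w)
    (Nt : ∀ w, G.Adj t w → r = w ∨ q = w ∨ s = w)
    (Nv : ∀ w, G.Adj v w → r = w ∨ v1 = w ∨ v2 = w)
    (Nq : ∀ w, G.Adj q w → y = w ∨ t = w ∨ g = w)
    (mU : ∀ x, x ∈ U → r = x ∨ y = x ∨ t = x ∨ v = x ∨ q = x)
    (rU : r ∈ U) (yU : y ∈ U) (tU : t ∈ U) (vU : v ∈ U) (qU : q ∈ U)
    (zU : z ∉ U) (sU : s ∉ U) (v1U : v1 ∉ U) (v2U : v2 ∉ U) (gU : g ∉ U)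
    (hnd : [r, y, t, v, q].Nodup)
    (ry rt rv qt qy : Fin 8)
    (k0 : qt ∉ colE G C g)
    (k1 : qt ≠ C s(y, z))
    (k2 : ∀ x, Ar s x → qt ≠ C s(s, x))
    (k3 : qy ∉ colE G C g)
    (k4 : qy ≠ C s(t, s))
    (k5 : ∀ x, Ar z x → qy ≠ C s(z, x))
    (k6 : qt ≠ qy)
    (k7 : ry ∉ colE G C z)
    (k8 : ry ≠ C s(q, g))
    (k9 : ry ≠ qt)
    (k10 : ry ≠ qy)
    (k11 : rt ∉ colE G C s)
    (k12 : rt ≠ C s(q, g))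
    (k13 : rt ≠ qt)
    (k14 : rt ≠ qy)
    (k15 : rv ∉ colE G C v1)
    (k16 : rv ∉ colE G C v2)
    (k17 : ry ≠ rt)
    (k18 : ry ≠ rv)
    (k19 : rt ≠ rv)
    : HasSemistrongEdgeColoring G 8 := by
  simp only [List.nodup_cons, List.mem_cons, List.not_mem_nil, or_false, not_or, not_false_eq_true,
    List.nodup_nil, and_true] at hnd
  obtain ⟨D, dyr, dtr, dvr, dqt, dqy, dC⟩ : ∃ D : Sym2 V → Fin 8,
      D s(y, r) = ry ∧ D s(t, r) = rt ∧ D s(v, r) = rv ∧ D s(q, t) = qt ∧ D s(q, y) = qy ∧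
      ∀ x y, x ∉ U → D s(x, y) = C s(x, y) := by
    refine ⟨fun e => if e = s(y, r) then ry else if e = s(t, r) then rt else if e = s(v, r) then rv else if e = s(q, t) then qt else if e = s(q, y) then qy else C e,
      ?_, ?_, ?_, ?_, ?_, ?_⟩
    · simp only [Sym2.eq_iff]; grind only
    · simp only [Sym2.eq_iff]; grind only
    · simp only [Sym2.eq_iff]; grind only
    · simp only [Sym2.eq_iff]; grind only
    · simp only [Sym2.eq_iff]; grind only
    · intro x y hx
      have hne : ∀ u, u ∈ U → x ≠ u := fun u hu h => hx (h ▸ hu)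
      simp only [if_neg (sym_ne (b := y) (Or.inl (hne _ yU)) (Or.inl (hne _ rU))), if_neg (sym_ne (b := y) (Or.inl (hne _ tU)) (Or.inl (hne _ rU))), if_neg (sym_ne (b := y) (Or.inl (hne _ vU)) (Or.inl (hne _ rU))), if_neg (sym_ne (b := y) (Or.inl (hne _ qU)) (Or.inl (hne _ tU))), if_neg (sym_ne (b := y) (Or.inl (hne _ qU)) (Or.inl (hne _ yU)))]
  have dry : D s(r, y) = ry := by rw [Sym2.eq_swap, dyr]
  have drt : D s(r, t) = rt := by rw [Sym2.eq_swap, dtr]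
  have drv : D s(r, v) = rv := by rw [Sym2.eq_swap, dvr]
  have dtq : D s(t, q) = qt := by rw [Sym2.eq_swap, dqt]
  have dyq : D s(y, q) = qy := by rw [Sym2.eq_swap, dqy]
  have dC' : ∀ x y, y ∉ U → D s(x, y) = C s(x, y) := by
    intro x y hy; rw [Sym2.eq_swap, dC _ _ hy]
  have ce : ∀ g x, G.Adj g x → C s(g, x) ∈ colE G C g := fun g x h => mem_colE G C h
  have hadj := hV.adj
  have gyr : Good G D y r := by
    intro n n' h1 h2 h3
    have := ce n n' h3
    rcases Ny n h1 with rfl | rfl | rfl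
    · exact absurd rfl h2
    · rcases Nq n' h3 with rfl | rfl | rfl <;> grind
    · rw [dC _ _ zU, dyr]; grind
  have gtr : Good G D t r := by
    intro n n' h1 h2 h3
    have := ce n n' h3
    rcases Nt n h1 with rfl | rfl | rfl
    · exact absurd rfl h2
    · rcases Nq n' h3 with rfl | rfl | rfl <;> grind
    · rw [dC _ _ sU, dtr]; grind
  have gvr : Good G D v r := by
    intro n n' h1 h2 h3
    have := ce n n' h3
    rcases Nv n h1 with rfl | rfl | rfl
    · exact absurd rfl h2
    · rw [dC _ _ v1U, dvr]; grind
    · rw [dC _ _ v2U, dvr]; grind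
  have gqt : Good G D q t := by
    intro n n' h1 h2 h3
    have := ce n n' h3
    rcases Nq n h1 with rfl | rfl | rfl
    · rcases Ny n' h3 with rfl | rfl | rfl <;> grind
    · exact absurd rfl h2
    · rw [dC _ _ gU, dqt]; grind
  have gqy : Good G D q y := by
    intro n n' h1 h2 h3
    have := ce n n' h3
    rcases Nq n h1 with rfl | rfl | rfl
    · exact absurd rfl h2
    · rcases Nt n' h3 with rfl | rfl | rfl <;> grind
    · rw [dC _ _ gU, dqy]; grind
  have E : ∀ z w, z ∈ U → w ∈ U → G.Adj z w → (y = z ∧ r = w) ∨ (r = z ∧ y = w) ∨ (t = z ∧ r = w) ∨ (r = z ∧ t = w) ∨ (v = z ∧ r = w) ∨ (r = z ∧ v = w) ∨ (q = z ∧ t = w) ∨ (t = z ∧ q = w) ∨ (q = z ∧ y = w) ∨ (y = z ∧ q = w) := by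
    intro z w hz hw h
    rcases mU z hz with rfl | rfl | rfl | rfl | rfl
    · rcases Nr w h with rfl | rfl | rfl <;> grind only
    · rcases Ny w h with rfl | rfl | rfl <;> grind only
    · rcases Nt w h with rfl | rfl | rfl <;> grind only
    · rcases Nv w h with rfl | rfl | rfl <;> grind only
    · rcases Nq w h with rfl | rfl | rfl <;> grind only
  refine hV.extend D dC ?_ ?_ ?_
  · intro z w g x hz hw hzw hgz ha
    clear hV
    have h1 := hadj g x ha
    have h2 := ce g x h1.2
    have h3 := h1.1
    clear ce hadj
    rcases E z w hz hw hzw with ⟨rfl, rfl⟩ | ⟨rfl, rfl⟩ | ⟨rfl, rfl⟩ | ⟨rfl, rfl⟩ | ⟨rfl, rfl⟩ | ⟨rfl, rfl⟩ | ⟨rfl, rfl⟩ | ⟨rfl, rfl⟩ | ⟨rfl, rfl⟩ | ⟨rfl, rfl⟩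
    · rcases Ny g hgz.symm with rfl | rfl | rfl <;> grind
    · rcases Nr g hgz.symm with rfl | rfl | rfl <;> contradiction
    · rcases Nt g hgz.symm with rfl | rfl | rfl <;> grind
    · rcases Nr g hgz.symm with rfl | rfl | rfl <;> contradiction
    · rcases Nv g hgz.symm with rfl | rfl | rfl <;> grind
    · rcases Nr g hgz.symm with rfl | rfl | rfl <;> contradiction
    · rcases Nq g hgz.symm with rfl | rfl | rfl <;> grind
    · rcases Nt g hgz.symm with rfl | rfl | rfl <;> grind
    · rcases Nq g hgz.symm with rfl | rfl | rfl <;> grind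
    · rcases Ny g hgz.symm with rfl | rfl | rfl <;> grind
  · intro z w hz hw hzw
    rcases E z w hz hw hzw with ⟨rfl, rfl⟩ | ⟨rfl, rfl⟩ | ⟨rfl, rfl⟩ | ⟨rfl, rfl⟩ | ⟨rfl, rfl⟩ | ⟨rfl, rfl⟩ | ⟨rfl, rfl⟩ | ⟨rfl, rfl⟩ | ⟨rfl, rfl⟩ | ⟨rfl, rfl⟩ <;> simp only [gyr, gtr, gvr, gqt, gqy, true_or, or_true]
  · intro x z w hx hz hw h1 h2 h3
    clear hV ce hadj
    rcases E x z hx hz h1 with ⟨rfl, rfl⟩ | ⟨rfl, rfl⟩ | ⟨rfl, rfl⟩ | ⟨rfl, rfl⟩ | ⟨rfl, rfl⟩ | ⟨rfl, rfl⟩ | ⟨rfl, rfl⟩ | ⟨rfl, rfl⟩ | ⟨rfl, rfl⟩ | ⟨rfl, rfl⟩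
    · rcases Ny w h2 with rfl | rfl | rfl <;> grind only
    · rcases Nr w h2 with rfl | rfl | rfl <;> grind only
    · rcases Nt w h2 with rfl | rfl | rfl <;> grind only
    · rcases Nr w h2 with rfl | rfl | rfl <;> grind only
    · rcases Nv w h2 with rfl | rfl | rfl <;> grind only
    · rcases Nr w h2 with rfl | rfl | rfl <;> grind only
    · rcases Nq w h2 with rfl | rfl | rfl <;> grind only
    · rcases Nt w h2 with rfl | rfl | rfl <;> grind only
    · rcases Nq w h2 with rfl | rfl | rfl <;> grind only
    · rcases Ny w h2 with rfl | rfl | rfl <;> grind only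

set_option maxHeartbeats 4000000 in
/-- Final step around a `K_{2,3}`. -/
theorem fin_K23 [Fintype V] [DecidableEq V] (G : SimpleGraph V) [DecidableRel G.Adj]
    (U : Finset V) (C : Sym2 V → Fin 8) (Ar : V → V → Prop) (hV : Val G U C Ar)
    (r y t v q p v1 v2 g g2 : V)
    (Nr : ∀ w, G.Adj r w → y = w ∨ t = w ∨ v = w)
    (Ny : ∀ w, G.Adj y w → r = w ∨ q = w ∨ p = w)
    (Nt : ∀ w, G.Adj t w → r = w ∨ q = w ∨ p = w)
    (Nv : ∀ w, G.Adj v w → r = w ∨ v1 = w ∨ v2 = w)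
    (Nq : ∀ w, G.Adj q w → y = w ∨ t = w ∨ g = w)
    (Np : ∀ w, G.Adj p w → y = w ∨ t = w ∨ g2 = w)
    (mU : ∀ x, x ∈ U → r = x ∨ y = x ∨ t = x ∨ v = x ∨ q = x ∨ p = x)
    (rU : r ∈ U) (yU : y ∈ U) (tU : t ∈ U) (vU : v ∈ U) (qU : q ∈ U) (pU : p ∈ U)
    (v1U : v1 ∉ U) (v2U : v2 ∉ U) (gU : g ∉ U) (g2U : g2 ∉ U)
    (hnd : [r, y, t, v, q, p].Nodup)
    (ry rt rv qt qy pt py : Fin 8)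
    (k0 : qt ∉ colE G C g)
    (k1 : qy ∉ colE G C g)
    (k2 : pt ∉ colE G C g2)
    (k3 : py ∉ colE G C g2)
    (k4 : qt ≠ qy)
    (k5 : qt ≠ pt)
    (k6 : qt ≠ py)
    (k7 : qy ≠ pt)
    (k8 : qy ≠ py)
    (k9 : pt ≠ py)
    (k10 : ry ≠ C s(q, g))
    (k11 : ry ≠ C s(p, g2))
    (k12 : ry ≠ qt)
    (k13 : ry ≠ qy)
    (k14 : ry ≠ pt)
    (k15 : ry ≠ py)
    (k16 : rt ≠ C s(q, g))
    (k17 : rt ≠ C s(p, g2))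
    (k18 : rt ≠ qt)
    (k19 : rt ≠ qy)
    (k20 : rt ≠ pt)
    (k21 : rt ≠ py)
    (k22 : rv ∉ colE G C v1)
    (k23 : rv ∉ colE G C v2)
    (k24 : ry ≠ rt)
    (k25 : ry ≠ rv)
    (k26 : rt ≠ rv)
    : HasSemistrongEdgeColoring G 8 := by
  simp only [List.nodup_cons, List.mem_cons, List.not_mem_nil, or_false, not_or, not_false_eq_true,
    List.nodup_nil, and_true] at hnd
  obtain ⟨D, dyr, dtr, dvr, dqt, dqy, dpt, dpy, dC⟩ : ∃ D : Sym2 V → Fin 8,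
      D s(y, r) = ry ∧ D s(t, r) = rt ∧ D s(v, r) = rv ∧ D s(q, t) = qt ∧ D s(q, y) = qy ∧ D s(p, t) = pt ∧ D s(p, y) = py ∧
      ∀ x y, x ∉ U → D s(x, y) = C s(x, y) := by
    refine ⟨fun e => if e = s(y, r) then ry else if e = s(t, r) then rt else if e = s(v, r) then rv else if e = s(q, t) then qt else if e = s(q, y) then qy else if e = s(p, t) then pt else if e = s(p, y) then py else C e,
      ?_, ?_, ?_, ?_, ?_, ?_, ?_, ?_⟩
    · simp only [Sym2.eq_iff]; grind only
    · simp only [Sym2.eq_iff]; grind only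
    · simp only [Sym2.eq_iff]; grind only
    · simp only [Sym2.eq_iff]; grind only
    · simp only [Sym2.eq_iff]; grind only
    · simp only [Sym2.eq_iff]; grind only
    · simp only [Sym2.eq_iff]; grind only
    · intro x y hx
      have hne : ∀ u, u ∈ U → x ≠ u := fun u hu h => hx (h ▸ hu)
      simp only [if_neg (sym_ne (b := y) (Or.inl (hne _ yU)) (Or.inl (hne _ rU))), if_neg (sym_ne (b := y) (Or.inl (hne _ tU)) (Or.inl (hne _ rU))), if_neg (sym_ne (b := y) (Or.inl (hne _ vU)) (Or.inl (hne _ rU))), if_neg (sym_ne (b := y) (Or.inl (hne _ qU)) (Or.inl (hne _ tU))), if_neg (sym_ne (b := y) (Or.inl (hne _ qU)) (Or.inl (hne _ yU))), if_neg (sym_ne (b := y) (Or.inl (hne _ pU)) (Or.inl (hne _ tU))), if_neg (sym_ne (b := y) (Or.inl (hne _ pU)) (Or.inl (hne _ yU)))]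
  have dry : D s(r, y) = ry := by rw [Sym2.eq_swap, dyr]
  have drt : D s(r, t) = rt := by rw [Sym2.eq_swap, dtr]
  have drv : D s(r, v) = rv := by rw [Sym2.eq_swap, dvr]
  have dtq : D s(t, q) = qt := by rw [Sym2.eq_swap, dqt]
  have dyq : D s(y, q) = qy := by rw [Sym2.eq_swap, dqy]
  have dtp : D s(t, p) = pt := by rw [Sym2.eq_swap, dpt]
  have dyp : D s(y, p) = py := by rw [Sym2.eq_swap, dpy]
  have dC' : ∀ x y, y ∉ U → D s(x, y) = C s(x, y) := by
    intro x y hy; rw [Sym2.eq_swap, dC _ _ hy]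
  have ce : ∀ g x, G.Adj g x → C s(g, x) ∈ colE G C g := fun g x h => mem_colE G C h
  have hadj := hV.adj
  have gyr : Good G D y r := by
    intro n n' h1 h2 h3
    have := ce n n' h3
    rcases Ny n h1 with rfl | rfl | rfl
    · exact absurd rfl h2
    · rcases Nq n' h3 with rfl | rfl | rfl <;> grind
    · rcases Np n' h3 with rfl | rfl | rfl <;> grind
  have gtr : Good G D t r := by
    intro n n' h1 h2 h3
    have := ce n n' h3
    rcases Nt n h1 with rfl | rfl | rfl
    · exact absurd rfl h2
    · rcases Nq n' h3 with rfl | rfl | rfl <;> grind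
    · rcases Np n' h3 with rfl | rfl | rfl <;> grind
  have gvr : Good G D v r := by
    intro n n' h1 h2 h3
    have := ce n n' h3
    rcases Nv n h1 with rfl | rfl | rfl
    · exact absurd rfl h2
    · rw [dC _ _ v1U, dvr]; grind
    · rw [dC _ _ v2U, dvr]; grind
  have gqt : Good G D q t := by
    intro n n' h1 h2 h3
    have := ce n n' h3
    rcases Nq n h1 with rfl | rfl | rfl
    · rcases Ny n' h3 with rfl | rfl | rfl <;> grind
    · exact absurd rfl h2
    · rw [dC _ _ gU, dqt]; grind
  have gqy : Good G D q y := by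
    intro n n' h1 h2 h3
    have := ce n n' h3
    rcases Nq n h1 with rfl | rfl | rfl
    · exact absurd rfl h2
    · rcases Nt n' h3 with rfl | rfl | rfl <;> grind
    · rw [dC _ _ gU, dqy]; grind
  have gpt : Good G D p t := by
    intro n n' h1 h2 h3
    have := ce n n' h3
    rcases Np n h1 with rfl | rfl | rfl
    · rcases Ny n' h3 with rfl | rfl | rfl <;> grind
    · exact absurd rfl h2
    · rw [dC _ _ g2U, dpt]; grind
  have gpy : Good G D p y := by
    intro n n' h1 h2 h3
    have := ce n n' h3
    rcases Np n h1 with rfl | rfl | rfl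
    · exact absurd rfl h2
    · rcases Nt n' h3 with rfl | rfl | rfl <;> grind
    · rw [dC _ _ g2U, dpy]; grind
  have E : ∀ z w, z ∈ U → w ∈ U → G.Adj z w → (y = z ∧ r = w) ∨ (r = z ∧ y = w) ∨ (t = z ∧ r = w) ∨ (r = z ∧ t = w) ∨ (v = z ∧ r = w) ∨ (r = z ∧ v = w) ∨ (q = z ∧ t = w) ∨ (t = z ∧ q = w) ∨ (q = z ∧ y = w) ∨ (y = z ∧ q = w) ∨ (p = z ∧ t = w) ∨ (t = z ∧ p = w) ∨ (p = z ∧ y = w) ∨ (y = z ∧ p = w) := by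
    intro z w hz hw h
    rcases mU z hz with rfl | rfl | rfl | rfl | rfl | rfl
    · rcases Nr w h with rfl | rfl | rfl <;> grind only
    · rcases Ny w h with rfl | rfl | rfl <;> grind only
    · rcases Nt w h with rfl | rfl | rfl <;> grind only
    · rcases Nv w h with rfl | rfl | rfl <;> grind only
    · rcases Nq w h with rfl | rfl | rfl <;> grind only
    · rcases Np w h with rfl | rfl | rfl <;> grind only
  refine hV.extend D dC ?_ ?_ ?_
  · intro z w g x hz hw hzw hgz ha
    clear hV
    have h1 := hadj g x ha
    have h2 := ce g x h1.2
    have h3 := h1.1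
    clear ce hadj
    rcases E z w hz hw hzw with ⟨rfl, rfl⟩ | ⟨rfl, rfl⟩ | ⟨rfl, rfl⟩ | ⟨rfl, rfl⟩ | ⟨rfl, rfl⟩ | ⟨rfl, rfl⟩ | ⟨rfl, rfl⟩ | ⟨rfl, rfl⟩ | ⟨rfl, rfl⟩ | ⟨rfl, rfl⟩ | ⟨rfl, rfl⟩ | ⟨rfl, rfl⟩ | ⟨rfl, rfl⟩ | ⟨rfl, rfl⟩
    · rcases Ny g hgz.symm with rfl | rfl | rfl <;> contradiction
    · rcases Nr g hgz.symm with rfl | rfl | rfl <;> contradiction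
    · rcases Nt g hgz.symm with rfl | rfl | rfl <;> contradiction
    · rcases Nr g hgz.symm with rfl | rfl | rfl <;> contradiction
    · rcases Nv g hgz.symm with rfl | rfl | rfl <;> grind
    · rcases Nr g hgz.symm with rfl | rfl | rfl <;> contradiction
    · rcases Nq g hgz.symm with rfl | rfl | rfl <;> grind
    · rcases Nt g hgz.symm with rfl | rfl | rfl <;> contradiction
    · rcases Nq g hgz.symm with rfl | rfl | rfl <;> grind
    · rcases Ny g hgz.symm with rfl | rfl | rfl <;> contradiction
    · rcases Np g hgz.symm with rfl | rfl | rfl <;> grind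
    · rcases Nt g hgz.symm with rfl | rfl | rfl <;> contradiction
    · rcases Np g hgz.symm with rfl | rfl | rfl <;> grind
    · rcases Ny g hgz.symm with rfl | rfl | rfl <;> contradiction
  · intro z w hz hw hzw
    rcases E z w hz hw hzw with ⟨rfl, rfl⟩ | ⟨rfl, rfl⟩ | ⟨rfl, rfl⟩ | ⟨rfl, rfl⟩ | ⟨rfl, rfl⟩ | ⟨rfl, rfl⟩ | ⟨rfl, rfl⟩ | ⟨rfl, rfl⟩ | ⟨rfl, rfl⟩ | ⟨rfl, rfl⟩ | ⟨rfl, rfl⟩ | ⟨rfl, rfl⟩ | ⟨rfl, rfl⟩ | ⟨rfl, rfl⟩ <;> simp only [gyr, gtr, gvr, gqt, gqy, gpt, gpy, true_or, or_true]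
  · intro x z w hx hz hw h1 h2 h3
    clear hV ce hadj
    rcases E x z hx hz h1 with ⟨rfl, rfl⟩ | ⟨rfl, rfl⟩ | ⟨rfl, rfl⟩ | ⟨rfl, rfl⟩ | ⟨rfl, rfl⟩ | ⟨rfl, rfl⟩ | ⟨rfl, rfl⟩ | ⟨rfl, rfl⟩ | ⟨rfl, rfl⟩ | ⟨rfl, rfl⟩ | ⟨rfl, rfl⟩ | ⟨rfl, rfl⟩ | ⟨rfl, rfl⟩ | ⟨rfl, rfl⟩
    · rcases Ny w h2 with rfl | rfl | rfl <;> grind only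
    · rcases Nr w h2 with rfl | rfl | rfl <;> grind only
    · rcases Nt w h2 with rfl | rfl | rfl <;> grind only
    · rcases Nr w h2 with rfl | rfl | rfl <;> grind only
    · rcases Nv w h2 with rfl | rfl | rfl <;> grind only
    · rcases Nr w h2 with rfl | rfl | rfl <;> grind only
    · rcases Nq w h2 with rfl | rfl | rfl <;> grind only
    · rcases Nt w h2 with rfl | rfl | rfl <;> grind only
    · rcases Nq w h2 with rfl | rfl | rfl <;> grind only
    · rcases Ny w h2 with rfl | rfl | rfl <;> grind only
    · rcases Np w h2 with rfl | rfl | rfl <;> grind only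
    · rcases Nt w h2 with rfl | rfl | rfl <;> grind only
    · rcases Np w h2 with rfl | rfl | rfl <;> grind only
    · rcases Ny w h2 with rfl | rfl | rfl <;> grind only

theorem comb4a (X St Sy : Finset (Fin 8)) (hX : 3 ≤ X.card) (hSt : St.card ≤ 2) (hSy : Sy.card ≤ 1)
    (hdis : ∀ b, b ∈ Sy → b ∉ St) :
    ∃ a b c, a ∈ X ∧ a ∉ St ∧ b ∈ X ∧ b ∉ Sy ∧ c ∈ X ∧ c ∉ Sy ∧ b ≠ c ∧ a ≠ b ∧ a ≠ c := by
  have two : ∀ a, a ∈ X → ∃ b c, b ∈ X ∧ c ∈ X ∧ b ≠ a ∧ c ≠ a ∧ b ≠ c := by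
    intro a ha
    have h1 : 1 < (X.erase a).card := by rw [Finset.card_erase_of_mem ha]; omega
    obtain ⟨b, hb, c, hc, hbc⟩ := Finset.one_lt_card.1 h1
    rw [Finset.mem_erase] at hb hc
    exact ⟨b, c, hb.2, hc.2, hb.1, hc.1, hbc⟩
  by_cases h : ∃ b, b ∈ Sy ∧ b ∈ X
  · obtain ⟨a, ha, haX⟩ := h
    obtain ⟨b, c, hb, hc, hba, hca, hbc⟩ := two a haX
    have hu := Finset.card_le_one.1 hSy
    exact ⟨a, b, c, haX, hdis a ha, hb, fun h => hba (hu _ h _ ha), hc, fun h => hca (hu _ h _ ha),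
      hbc, hba.symm, hca.symm⟩
  · have h1 : 0 < (X \ St).card := by
      have := Finset.le_card_sdiff St X
      omega
    obtain ⟨a, ha⟩ := Finset.card_pos.1 h1
    rw [Finset.mem_sdiff] at ha
    obtain ⟨b, c, hb, hc, hba, hca, hbc⟩ := two a ha.1
    exact ⟨a, b, c, ha.1, ha.2, hb, fun h' => h ⟨b, h', hb⟩, hc, fun h' => h ⟨c, h', hc⟩,
      hbc, hba.symm, hca.symm⟩

theorem card3 (E : Finset (Fin 8)) (hE : E.card ≤ 3) (a b c : Fin 8) :
    2 ≤ ((insert a (insert b (insert c E)))ᶜ).card := by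
  have h1 := Finset.card_insert_le c E
  have h2 := Finset.card_insert_le b (insert c E)
  have h3 := Finset.card_insert_le a (insert b (insert c E))
  have := card_compl8 (insert a (insert b (insert c E))) 6 (by omega)
  omega

theorem card3' (E : Finset (Fin 8)) (hE : E.card ≤ 3) (a b c : Fin 8)
    (h : ((insert a (insert b (insert c E)))ᶜ).card < 3) : c ∉ E ∧ b ≠ c ∧ a ≠ c := by
  have key : ∀ S : Finset (Fin 8), S.card ≤ 5 → ¬ (Sᶜ.card < 3) := by
    intro S hS
    have := card_compl8 S 5 hS
    omega
  have i2 := fun x : Fin 8 => Finset.card_insert_le x E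
  have i3 := fun x y : Fin 8 => Finset.card_insert_le x (insert y E)
  refine ⟨fun hc => ?_, fun hc => ?_, fun hc => ?_⟩
  · rw [Finset.insert_eq_of_mem hc] at h
    exact key _ (by have := i2 b; have := i3 a b; omega) h
  · rw [hc, Finset.insert_idem] at h
    exact key _ (by have := i2 c; have := i3 a c; omega) h
  · rw [hc, Finset.insert_eq_of_mem (a := c) (by simp)] at h
    exact key _ (by have := i2 c; have := i3 b c; omega) h

set_option maxHeartbeats 1000000 in
/-- A four-cycle with distinct opposite third neighbours. -/
theorem case_C4 [Fintype V] [DecidableEq V] (G : SimpleGraph V) [DecidableRel G.Adj]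
    (hconn : G.Connected) (h3 : ∀ v, (G.neighborFinset v).card = 3)
    (htri : ∀ x y z, G.Adj x y → G.Adj y z → G.Adj x z → False)
    (r y q t v z s g v1 v2 : V) (hry : G.Adj r y) (hyq : G.Adj y q) (hqt : G.Adj q t)
    (htr : G.Adj t r) (hrq : r ≠ q) (hyt : y ≠ t)
    (hrv : G.Adj r v) (hvy : v ≠ y) (hvt : v ≠ t)
    (hyz : G.Adj y z) (hzr : z ≠ r) (hzq : z ≠ q)
    (hts : G.Adj t s) (hsr : s ≠ r) (hsq : s ≠ q)
    (hqg : G.Adj q g) (hgy : g ≠ y) (hgt : g ≠ t)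
    (hv1 : G.Adj v v1) (hv2 : G.Adj v v2) (hv1r : v1 ≠ r) (hv2r : v2 ≠ r)
    (Nr : ∀ w, G.Adj r w → y = w ∨ t = w ∨ v = w)
    (Ny : ∀ w, G.Adj y w → r = w ∨ q = w ∨ z = w)
    (Nt : ∀ w, G.Adj t w → r = w ∨ q = w ∨ s = w)
    (Nv : ∀ w, G.Adj v w → r = w ∨ v1 = w ∨ v2 = w)
    (Nq : ∀ w, G.Adj q w → y = w ∨ t = w ∨ g = w)
    (hzs : z ≠ s) (hvg : v ≠ g) :
    HasSemistrongEdgeColoring G 8 := by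
  have hd : ∀ v, (G.neighborFinset v).card ≤ 3 := fun v => (h3 v).le
  have nry := hry.ne
  have nyq := hyq.ne
  have nqt := hqt.ne
  have ntr := htr.ne
  have nrv := hrv.ne
  have nyz := hyz.ne
  have nts := hts.ne
  have nqg := hqg.ne
  have nv1 := hv1.ne
  have nv2 := hv2.ne
  have nvq : v ≠ q := by rintro rfl; exact htri _ _ _ hry hyq hrv
  have nvz : v ≠ z := by rintro rfl; exact htri _ _ _ hry hyz hrv
  have nvs : v ≠ s := by rintro rfl; exact htri _ _ _ htr hrv hts
  have nzt : z ≠ t := by rintro rfl; exact htri _ _ _ hry hyz htr.symm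
  have nsy : s ≠ y := by rintro rfl; exact htri _ _ _ htr hry hts
  have ngr : g ≠ r := by rintro rfl; exact htri _ _ _ hyq hqg hry.symm
  have ayv : ¬ G.Adj v y := fun h => htri _ _ _ hrv h hry
  have atv : ¬ G.Adj v t := fun h => htri _ _ _ hrv h htr.symm
  have aqv : ¬ G.Adj v q := fun h => by
    rcases Nq v h.symm with h | h | h
    · exact hvy h.symm
    · exact hvt h.symm
    · exact hvg h.symm
  obtain ⟨U, hU⟩ : ∃ U : Finset V, ∀ x, x ∈ U ↔ r = x ∨ y = x ∨ t = x ∨ v = x ∨ q = x :=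
    ⟨{r, y, t, v, q}, by simp [eq_comm]⟩
  have rU : r ∈ U := by simp [hU]
  have yU : y ∈ U := by simp [hU]
  have tU : t ∈ U := by simp [hU]
  have vU : v ∈ U := by simp [hU]
  have qU : q ∈ U := by simp [hU]
  have zU : z ∉ U := by rw [hU]; grind only
  have sU : s ∉ U := by rw [hU]; grind only
  have gU : g ∉ U := by rw [hU]; grind only
  have v1U : v1 ∉ U := by rw [hU]; grind only
  have v2U : v2 ∉ U := by rw [hU]; grind only
  obtain ⟨κ, hκ⟩ : ∃ κ : V → ℕ, ∀ x, κ x = if x = r then 0 else if x = y then 1 else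
      if x = t then 2 else 3 + G.dist x r := ⟨_, fun x => rfl⟩
  have κr : κ r = 0 := by simp [hκ]
  have κy : κ y = 1 := by simp [hκ, nry.symm]
  have κt : κ t = 2 := by simp [hκ, ntr, hyt.symm]
  have κo : ∀ x, x ≠ r → x ≠ y → x ≠ t → κ x = 3 + G.dist x r := by
    intro x h1 h2 h3; simp [hκ, h1, h2, h3]
  clear hκ
  obtain ⟨C, Ar, hV, hA⟩ := exists_val G hd κ r (by
      intro x hx
      by_cases h1 : x = y
      · exact ⟨r, h1 ▸ hry.symm, by rw [h1]; omega⟩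
      by_cases h2 : x = t
      · exact ⟨r, h2 ▸ htr, by rw [h2]; omega⟩
      obtain ⟨w, hw, hlt⟩ := exists_closer G hconn r x hx
      refine ⟨w, hw, ?_⟩
      rw [κo x hx h1 h2]
      by_cases w1 : w = r
      · rw [w1, κr]; omega
      by_cases w2 : w = y
      · rw [w2, κy]; omega
      by_cases w3 : w = t
      · rw [w3, κt]; omega
      rw [κo w w1 w2 w3]; omega) U rU (by
    intro x hx
    right
    rcases (hU x).1 hx with rfl | rfl | rfl | rfl | rfl
    · exact ⟨y, yU, hry⟩
    · exact ⟨r, rU, hry.symm⟩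
    · exact ⟨r, rU, htr⟩
    · exact ⟨r, rU, hrv.symm⟩
    · exact ⟨y, yU, hyq.symm⟩)
  -- arcs out of `s` and `z`
  have κle2 : ∀ w, κ w ≤ 2 → w = r ∨ w = y ∨ w = t := by
    intro w hw
    by_contra hc
    simp only [not_or] at hc
    have := κo w hc.1 hc.2.1 hc.2.2
    omega
  have arS : ∀ x, Ar s x → x = t ∨ x = v ∨ x = z := by
    intro x hx
    have hsx := (hV.adj _ _ hx).2
    by_cases hxU : x ∈ U
    · rcases (hU x).1 hxU with rfl | rfl | rfl | rfl | rfl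
      · exact (htri _ _ _ htr hsx.symm hts).elim
      · have := Ny s hsx.symm; grind only
      · exact Or.inl rfl
      · exact Or.inr (Or.inl rfl)
      · exact (htri _ _ _ hqt hts hsx.symm).elim
    · obtain ⟨w, hw, hmin⟩ := hA s x hx hxU
      have h2 : κ w ≤ 2 := by have := hmin t hts.symm; omega
      rcases κle2 w h2 with rfl | rfl | rfl
      · rcases Nr x hw.symm with rfl | rfl | rfl <;> contradiction
      · rcases Ny x hw.symm with rfl | rfl | rfl
        · contradiction
        · contradiction
        · exact Or.inr (Or.inr rfl)
      · rcases Nt x hw.symm with rfl | rfl | rfl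
        · contradiction
        · contradiction
        · exact absurd rfl hsx.ne
  have arZ : ∀ x, Ar z x → x = y ∨ x = v := by
    intro x hx
    have hzx := (hV.adj _ _ hx).2
    by_cases hxU : x ∈ U
    · rcases (hU x).1 hxU with rfl | rfl | rfl | rfl | rfl
      · exact (htri _ _ _ hry hyz hzx.symm).elim
      · exact Or.inl rfl
      · have := Nt z hzx.symm; grind only
      · exact Or.inr rfl
      · exact (htri _ _ _ hyq hzx.symm hyz).elim
    · obtain ⟨w, hw, hmin⟩ := hA z x hx hxU
      have h1 : κ w ≤ 1 := by have := hmin y hyz.symm; omega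
      rcases κle2 w (by omega) with rfl | rfl | rfl
      · rcases Nr x hw.symm with rfl | rfl | rfl <;> contradiction
      · rcases Ny x hw.symm with rfl | rfl | rfl
        · contradiction
        · contradiction
        · exact absurd rfl hzx.ne
      · omega
  classical
  obtain ⟨St, hSt, cSt⟩ : ∃ St : Finset (Fin 8), (∀ c, c ∈ St ↔ (Ar s v ∧ c = C s(s, v)) ∨
      (Ar s z ∧ c = C s(s, z))) ∧ St.card ≤ 2 := by
    refine ⟨({C s(s, v), C s(s, z)} : Finset (Fin 8)).filter (fun c => (Ar s v ∧ c = C s(s, v)) ∨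
      (Ar s z ∧ c = C s(s, z))), ?_, ?_⟩
    · intro c
      simp only [Finset.mem_filter, Finset.mem_insert, Finset.mem_singleton]
      tauto
    · exact (Finset.card_filter_le _ _).trans Finset.card_le_two
  obtain ⟨Sy, hSy, cSy⟩ : ∃ Sy : Finset (Fin 8), (∀ c, c ∈ Sy ↔ (Ar z v ∧ c = C s(z, v))) ∧
      Sy.card ≤ 1 := by
    refine ⟨({C s(z, v)} : Finset (Fin 8)).filter (fun c => Ar z v ∧ c = C s(z, v)), ?_, ?_⟩
    · intro c
      simp only [Finset.mem_filter, Finset.mem_singleton]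
      tauto
    · exact (Finset.card_filter_le _ _).trans (by simp)
  have cE := colE_card G C hd
  obtain ⟨qt, qy, qy', m1, m2, m3, m4, m5, m6, m7, m8, m9⟩ :=
    comb4a ((insert (C s(y, z)) (insert (C s(t, s)) (colE G C g)))ᶜ) St Sy (by
      have h1 := Finset.card_insert_le (C s(t, s)) (colE G C g)
      have h2 := Finset.card_insert_le (C s(y, z)) (insert (C s(t, s)) (colE G C g))
      have h3 := cE g
      have := card_compl8 (insert (C s(y, z)) (insert (C s(t, s)) (colE G C g))) 5 (by omega)
      omega) cSt cSy (by
      intro b hb hb'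
      obtain ⟨hzv, rfl⟩ := (hSy b).1 hb
      rcases (hSt _).1 hb' with ⟨hsv, he⟩ | ⟨hsz, he⟩
      · have h1 := hV.v2 z v hzv s (hV.adj _ _ hsv).2.symm hzs.symm (Or.inr sU)
        exact h1 (by rw [he, Sym2.eq_swap])
      · exact hV.v2 s z hsz v (hV.adj _ _ hzv).2 nvs (Or.inl zU) he)
  simp only [Finset.mem_compl, Finset.mem_insert, not_or] at m1 m3 m5
  have fS : ∀ x, Ar s x → qt ≠ C s(s, x) := by
    intro x hx he
    rcases arS x hx with rfl | rfl | rfl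
    · exact m1.2.1 (by rw [he, Sym2.eq_swap])
    · exact m2 ((hSt _).2 (Or.inl ⟨hx, he⟩))
    · exact m2 ((hSt _).2 (Or.inr ⟨hx, he⟩))
  have fZ : ∀ c, c ≠ C s(y, z) → c ∉ Sy → ∀ x, Ar z x → c ≠ C s(z, x) := by
    intro c hc hc' x hx he
    rcases arZ x hx with rfl | rfl
    · exact hc (by rw [he, Sym2.eq_swap])
    · exact hc' ((hSy _).2 ⟨hx, he⟩)
  have hLv : 2 ≤ ((colE G C v1 ∪ colE G C v2)ᶜ).card := by
    have h1 := Finset.card_union_le (colE G C v1) (colE G C v2)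
    have h2 := cE v1
    have h3 := cE v2
    have := card_compl8 (colE G C v1 ∪ colE G C v2) 6 (by omega)
    omega
  -- the conclusion from a suitable triple
  have fin : ∀ qy, qy ≠ C s(y, z) → qy ≠ C s(t, s) → qy ∉ colE G C g → qy ∉ Sy → qt ≠ qy →
      (∃ a b c, a ∈ (insert (C s(q, g)) (insert qt (insert qy (colE G C z))))ᶜ ∧
        b ∈ (insert (C s(q, g)) (insert qt (insert qy (colE G C s))))ᶜ ∧
        c ∈ (colE G C v1 ∪ colE G C v2)ᶜ ∧ a ≠ b ∧ a ≠ c ∧ b ≠ c) →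
      HasSemistrongEdgeColoring G 8 := by
    rintro qy n1 n2 n3 n4 n5 ⟨ry, rt, rv, a1, a2, a3, a4, a5, a6⟩
    simp only [Finset.mem_compl, Finset.mem_insert, Finset.mem_union, not_or] at a1 a2 a3
    refine fin_C4 G U C Ar hV r y t v q z s v1 v2 g Nr Ny Nt Nv Nq (fun x => (hU x).1)
      rU yU tU vU qU zU sU v1U v2U gU ?_ ry rt rv qt qy m1.2.2 m1.1 fS n3 n2 (fZ qy n1 n4)
      n5 a1.2.2.2 a1.1 a1.2.1 a1.2.2.1 a2.2.2.2 a2.1 a2.2.1 a2.2.2.1 a3.1 a3.2 a4 a5 a6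
    simp only [List.nodup_cons, List.mem_cons, List.not_mem_nil, or_false, not_or,
      not_false_eq_true, List.nodup_nil, and_true]
    grind only
  obtain ⟨Lv, hLvd⟩ : ∃ Lv, Lv = (colE G C v1 ∪ colE G C v2)ᶜ := ⟨_, rfl⟩
  rw [← hLvd] at hLv fin
  have cy := card3 (colE G C z) (cE z) (C s(q, g)) qt qy
  have ct := card3 (colE G C s) (cE s) (C s(q, g)) qt qy
  by_cases hbad : (insert (C s(q, g)) (insert qt (insert qy (colE G C z))))ᶜ ≠
      (insert (C s(q, g)) (insert qt (insert qy (colE G C s))))ᶜ ∨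
      (insert (C s(q, g)) (insert qt (insert qy (colE G C s))))ᶜ ≠ Lv ∨
      3 ≤ ((insert (C s(q, g)) (insert qt (insert qy (colE G C z))))ᶜ).card
  · exact fin qy m3.1 m3.2.1 m3.2.2 m4 m8 (sdr3 _ _ _ cy ct hLv hbad)
  · push Not at hbad
    obtain ⟨b1, b2, b3⟩ := hbad
    obtain ⟨d1, d2, d3⟩ := card3' (colE G C z) (cE z) (C s(q, g)) qt qy (by omega)
    have hin : qy ∈ (insert (C s(q, g)) (insert qt (insert qy' (colE G C z))))ᶜ := by
      simp only [Finset.mem_compl, Finset.mem_insert, not_or]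
      exact ⟨d3.symm, d2.symm, m7, d1⟩
    have hout : qy ∉ Lv := by
      rw [← b2]; simp
    refine fin qy' m5.1 m5.2.1 m5.2.2 m6 m9 (sdr3 _ _ _ (card3 _ (cE z) _ _ _) (card3 _ (cE s) _ _ _) hLv ?_)
    by_contra hc
    push Not at hc
    rw [hc.1, hc.2.1] at hin
    exact hout hin

theorem pick_three (A B : Finset (Fin 8)) (hA : 5 ≤ A.card) (hB : 5 ≤ B.card) (a : Fin 8) :
    ∃ b c d, b ∈ A ∧ c ∈ B ∧ d ∈ B ∧ a ≠ b ∧ a ≠ c ∧ a ≠ d ∧ b ≠ c ∧ b ≠ d ∧ c ≠ d := by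
  have pk : ∀ (S T : Finset (Fin 8)), 5 ≤ S.card → T.card ≤ 3 → ∃ x, x ∈ S ∧ x ∉ T := by
    intro S T hS hT
    have h1 : 0 < (S \ T).card := by
      have := Finset.le_card_sdiff T S
      omega
    obtain ⟨x, hx⟩ := Finset.card_pos.1 h1
    rw [Finset.mem_sdiff] at hx
    exact ⟨x, hx⟩
  obtain ⟨b, hb, hb'⟩ := pk A {a} hA (by simp)
  obtain ⟨c, hc, hc'⟩ := pk B {a, b} hB (Finset.card_le_two.trans (by omega))
  obtain ⟨d, hd, hd'⟩ := pk B {a, b, c} hB Finset.card_le_three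
  simp only [Finset.mem_insert, Finset.mem_singleton, not_or] at hb' hc' hd'
  exact ⟨b, c, d, hb, hc, hd, Ne.symm hb', Ne.symm hc'.1, Ne.symm hd'.1, Ne.symm hc'.2,
    Ne.symm hd'.2.1, Ne.symm hd'.2.2⟩

theorem comb4b (E F L : Finset (Fin 8)) (hE : E.card ≤ 3) (hF : F.card ≤ 3) (hL : 2 ≤ L.card)
    (a b : Fin 8) (ha : a ∈ E) (hb : b ∈ F) :
    ∃ x y z w, x ∉ E ∧ y ∉ E ∧ z ∉ F ∧ w ∉ F ∧ x ≠ y ∧ x ≠ z ∧ x ≠ w ∧ y ≠ z ∧ y ≠ w ∧ z ≠ w ∧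
      ∃ c d e, c ∉ ({a, b, x, y, z, w} : Finset (Fin 8)) ∧ d ∉ ({a, b, x, y, z, w} : Finset (Fin 8)) ∧
        e ∈ L ∧ c ≠ d ∧ c ≠ e ∧ d ≠ e := by
  have hE' : 5 ≤ Eᶜ.card := by have := card_compl8 E 3 hE; omega
  have hF' : 5 ≤ Fᶜ.card := by have := card_compl8 F 3 hF; omega
  have fin : ∀ x y z w, (∃ c ∈ ({a, b, x, y, z, w} : Finset (Fin 8)), c ∈ L) ∨
      ({a, b, x, y, z, w} : Finset (Fin 8)).card ≤ 5 →
      ∃ c d e, c ∉ ({a, b, x, y, z, w} : Finset (Fin 8)) ∧ d ∉ ({a, b, x, y, z, w} : Finset (Fin 8)) ∧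
        e ∈ L ∧ c ≠ d ∧ c ≠ e ∧ d ≠ e := by
    intro x y z w h
    have h6 : ({a, b, x, y, z, w} : Finset (Fin 8)).card ≤ 6 := Finset.card_le_six
    obtain ⟨W, hW⟩ : ∃ W, W = ({a, b, x, y, z, w} : Finset (Fin 8)) := ⟨_, rfl⟩
    rw [← hW] at h h6 ⊢
    have h2 : 2 ≤ Wᶜ.card := by have := card_compl8 W 6 h6; omega
    have h3 : Wᶜ ≠ Wᶜ ∨ Wᶜ ≠ L ∨ 3 ≤ Wᶜ.card := by
      rcases h with ⟨c, hc, hcL⟩ | h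
      · right; left
        intro h
        rw [← h, Finset.mem_compl] at hcL
        exact hcL hc
      · right; right
        have := card_compl8 W 5 h
        omega
    obtain ⟨c, d, e, hc, hd, he, h⟩ := sdr3 _ _ _ h2 h2 hL h3
    exact ⟨c, d, e, Finset.mem_compl.1 hc, Finset.mem_compl.1 hd, he, h⟩
  by_cases h1 : ∃ α, α ∈ L ∧ α ∉ E
  · obtain ⟨x, hxL, hxE⟩ := h1
    obtain ⟨y, z, w, hy, hz, hw, e1, e2, e3, e4, e5, e6⟩ := pick_three Eᶜ Fᶜ hE' hF' x
    rw [Finset.mem_compl] at hy hz hw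
    exact ⟨x, y, z, w, hxE, hy, hz, hw, e1, e2, e3, e4, e5, e6, fin _ _ _ _ (Or.inl ⟨x, by simp, hxL⟩)⟩
  by_cases h2 : ∃ α, α ∈ L ∧ α ∉ F
  · obtain ⟨z, hzL, hzF⟩ := h2
    obtain ⟨w, x, y, hw, hx, hy, e1, e2, e3, e4, e5, e6⟩ := pick_three Fᶜ Eᶜ hF' hE' z
    rw [Finset.mem_compl] at hy hx hw
    exact ⟨x, y, z, w, hx, hy, hzF, hw, e6, e2.symm, e4.symm, e3.symm, e5.symm, e1,
      fin _ _ _ _ (Or.inl ⟨z, by simp, hzL⟩)⟩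
  push Not at h1 h2
  by_cases h3 : a ∈ L ∨ b ∈ L ∨ a = b
  · obtain ⟨x, hx⟩ := Finset.card_pos.1 (by omega : 0 < Eᶜ.card)
    obtain ⟨y, z, w, hy, hz, hw, e1, e2, e3, e4, e5, e6⟩ := pick_three Eᶜ Fᶜ hE' hF' x
    rw [Finset.mem_compl] at hx hy hz hw
    refine ⟨x, y, z, w, hx, hy, hz, hw, e1, e2, e3, e4, e5, e6, fin _ _ _ _ ?_⟩
    rcases h3 with h | h | h
    · exact Or.inl ⟨a, by simp, h⟩
    · exact Or.inl ⟨b, by simp, h⟩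
    · right
      rw [h, Finset.insert_idem]
      exact Finset.card_le_five
  · simp only [not_or] at h3
    have haF : a ∉ F := by
      intro haF
      have hsub : insert a (insert b L) ⊆ F := by
        intro c hc
        simp only [Finset.mem_insert] at hc
        rcases hc with rfl | rfl | hc
        · exact haF
        · exact hb
        · exact h2 c hc
      have := Finset.card_le_card hsub
      rw [Finset.card_insert_of_notMem, Finset.card_insert_of_notMem h3.2.1] at this
      · omega
      · simp [h3]
    obtain ⟨w, x, y, hw, hx, hy, e1, e2, e3, e4, e5, e6⟩ := pick_three Fᶜ Eᶜ hF' hE' a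
    rw [Finset.mem_compl] at hy hx hw
    refine ⟨x, y, a, w, hx, hy, haF, hw, e6, e2.symm, e4.symm, e3.symm, e5.symm, e1,
      fin _ _ _ _ (Or.inr ?_)⟩
    rw [Finset.insert_eq_of_mem (a := a) (by simp)]
    exact Finset.card_le_five

set_option maxHeartbeats 1000000 in
/-- A `K_{2,3}` in which one third neighbour differs from the other two. -/
theorem case_K23 [Fintype V] [DecidableEq V] (G : SimpleGraph V) [DecidableRel G.Adj]
    (hconn : G.Connected) (h3 : ∀ v, (G.neighborFinset v).card = 3)
    (htri : ∀ x y z, G.Adj x y → G.Adj y z → G.Adj x z → False)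
    (y t r q p v g g2 : V) (hyr : G.Adj y r) (hyq : G.Adj y q) (hyp : G.Adj y p)
    (htr : G.Adj t r) (htq : G.Adj t q) (htp : G.Adj t p) (hyt : y ≠ t) (hrq : r ≠ q)
    (hrp : r ≠ p) (hqp : q ≠ p)
    (hrv : G.Adj r v) (hqg : G.Adj q g) (hpg : G.Adj p g2)
    (hvy : v ≠ y) (hvt : v ≠ t) (hgy : g ≠ y) (hgt : g ≠ t) (hg2y : g2 ≠ y) (hg2t : g2 ≠ t)
    (Ny : ∀ w, G.Adj y w → r = w ∨ q = w ∨ p = w)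
    (Nt : ∀ w, G.Adj t w → r = w ∨ q = w ∨ p = w)
    (Nr : ∀ w, G.Adj r w → y = w ∨ t = w ∨ v = w)
    (Nq : ∀ w, G.Adj q w → y = w ∨ t = w ∨ g = w)
    (Np : ∀ w, G.Adj p w → y = w ∨ t = w ∨ g2 = w)
    (hvg : v ≠ g) (hvg2 : v ≠ g2) :
    HasSemistrongEdgeColoring G 8 := by
  have hd : ∀ v, (G.neighborFinset v).card ≤ 3 := fun v => (h3 v).le
  obtain ⟨v1, v2, hv1, hv2, hv1r, hv2r, -, Nv⟩ := others (h3 v) hrv.symm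
  have Nv' : ∀ w, G.Adj v w → r = w ∨ v1 = w ∨ v2 = w := by
    intro w h; have := Nv w h; simpa [eq_comm] using this
  have n1 := hyr.ne
  have n2 := hyq.ne
  have n3 := hyp.ne
  have n4 := htr.ne
  have n5 := htq.ne
  have n6 := htp.ne
  have n7 := hrv.ne
  have n8 := hqg.ne
  have n9 := hpg.ne
  have n10 := hv1.ne
  have n11 := hv2.ne
  have nvq : v ≠ q := by rintro rfl; exact htri _ _ _ hyr hrv hyq
  have nvp : v ≠ p := by rintro rfl; exact htri _ _ _ hyr hrv hyp
  have ngr : g ≠ r := by rintro rfl; exact htri _ _ _ hyq hqg hyr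
  have ngp : g ≠ p := by rintro rfl; exact htri _ _ _ hyq hqg hyp
  have ng2r : g2 ≠ r := by rintro rfl; exact htri _ _ _ hyp hpg hyr
  have ng2q : g2 ≠ q := by rintro rfl; exact htri _ _ _ hyp hpg hyq
  have ayv : ¬ G.Adj v y := fun h => htri _ _ _ hyr hrv h.symm
  have atv : ¬ G.Adj v t := fun h => htri _ _ _ htr hrv h.symm
  have aqv : ¬ G.Adj v q := fun h => by have := Nq v h.symm; grind only
  have apv : ¬ G.Adj v p := fun h => by have := Np v h.symm; grind only
  obtain ⟨U, hU⟩ : ∃ U : Finset V, ∀ x, x ∈ U ↔ r = x ∨ y = x ∨ t = x ∨ v = x ∨ q = x ∨ p = x :=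
    ⟨{r, y, t, v, q, p}, by simp [eq_comm]⟩
  have rU : r ∈ U := by simp [hU]
  have yU : y ∈ U := by simp [hU]
  have tU : t ∈ U := by simp [hU]
  have vU : v ∈ U := by simp [hU]
  have qU : q ∈ U := by simp [hU]
  have pU : p ∈ U := by simp [hU]
  have gU : g ∉ U := by rw [hU]; grind only
  have g2U : g2 ∉ U := by rw [hU]; grind only
  have v1U : v1 ∉ U := by rw [hU]; grind only
  have v2U : v2 ∉ U := by rw [hU]; grind only
  obtain ⟨C, Ar, hV, -⟩ := exists_val G hd (fun v => G.dist v r) r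
    (fun v hv => exists_closer G hconn r v hv) U rU (by
    intro x hx
    right
    rcases (hU x).1 hx with rfl | rfl | rfl | rfl | rfl | rfl
    · exact ⟨y, yU, hyr.symm⟩
    · exact ⟨r, rU, hyr⟩
    · exact ⟨r, rU, htr⟩
    · exact ⟨r, rU, hrv.symm⟩
    · exact ⟨y, yU, hyq.symm⟩
    · exact ⟨y, yU, hyp.symm⟩)
  have cE := colE_card G C hd
  have hLv : 2 ≤ ((colE G C v1 ∪ colE G C v2)ᶜ).card := by
    have h1 := Finset.card_union_le (colE G C v1) (colE G C v2)
    have h2 := cE v1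
    have h3 := cE v2
    have := card_compl8 (colE G C v1 ∪ colE G C v2) 6 (by omega)
    omega
  obtain ⟨qt, qy, pt, py, i1, i2, i3, i4, j1, j2, j3, j4, j5, j6, ry, rt, rv, a1, a2, a3, a4, a5, a6⟩ :=
    comb4b (colE G C g) (colE G C g2) _ (cE g) (cE g2) hLv (C s(q, g)) (C s(p, g2))
      (by rw [Sym2.eq_swap]; exact mem_colE G C hqg.symm)
      (by rw [Sym2.eq_swap]; exact mem_colE G C hpg.symm)
  simp only [Finset.mem_compl, Finset.mem_insert, Finset.mem_singleton, Finset.mem_union, not_or] at a1 a2 a3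
  refine fin_K23 G U C Ar hV r y t v q p v1 v2 g g2 Nr Ny Nt Nv' Nq Np (fun x => (hU x).1)
      rU yU tU vU qU pU v1U v2U gU g2U ?_ ry rt rv qt qy pt py i1 i2 i3 i4 j1 j2 j3 j4 j5 j6
      a1.1 a1.2.1 a1.2.2.1 a1.2.2.2.1 a1.2.2.2.2.1 a1.2.2.2.2.2
      a2.1 a2.2.1 a2.2.2.1 a2.2.2.2.1 a2.2.2.2.2.1 a2.2.2.2.2.2 a3.1 a3.2 a4 a5 a6
  simp only [List.nodup_cons, List.mem_cons, List.not_mem_nil, or_false, not_or,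
      not_false_eq_true, List.nodup_nil, and_true]
  grind only

theorem iso_K33 (G : SimpleGraph V) (hconn : G.Connected)
    (y t v r q p : V) (hyr : G.Adj y r) (hyq : G.Adj y q) (hyp : G.Adj y p)
    (htr : G.Adj t r) (htq : G.Adj t q) (htp : G.Adj t p)
    (hvr : G.Adj v r) (hvq : G.Adj v q) (hvp : G.Adj v p) (hyt : y ≠ t) (hvy : v ≠ y) (hvt : v ≠ t)
    (hrq : r ≠ q) (hrp : r ≠ p) (hqp : q ≠ p)
    (Ny : ∀ w, G.Adj y w → r = w ∨ q = w ∨ p = w)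
    (Nt : ∀ w, G.Adj t w → r = w ∨ q = w ∨ p = w)
    (Nv : ∀ w, G.Adj v w → r = w ∨ q = w ∨ p = w)
    (Nr : ∀ w, G.Adj r w → y = w ∨ t = w ∨ v = w)
    (Nq : ∀ w, G.Adj q w → y = w ∨ t = w ∨ v = w)
    (Np : ∀ w, G.Adj p w → y = w ∨ t = w ∨ v = w) :
    Nonempty (G ≃g completeBipartiteGraph (Fin 3) (Fin 3)) := by
  have hall := closed_univ G hconn
    (fun x => y = x ∨ t = x ∨ v = x ∨ r = x ∨ q = x ∨ p = x) y (Or.inl rfl) (by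
    intro x w hx hxw
    rcases hx with rfl | rfl | rfl | rfl | rfl | rfl
    · have := Ny w hxw; tauto
    · have := Nt w hxw; tauto
    · have := Nv w hxw; tauto
    · have := Nr w hxw; tauto
    · have := Nq w hxw; tauto
    · have := Np w hxw; tauto)
  have n1 := hyr.ne
  have n2 := hyq.ne
  have n3 := hyp.ne
  have n4 := htr.ne
  have n5 := htq.ne
  have n6 := htp.ne
  have n7 := hvr.ne
  have n8 := hvq.ne
  have n9 := hvp.ne
  obtain ⟨f, f1, f2, f3, f4, f5, f6⟩ : ∃ f : Fin 3 ⊕ Fin 3 → V, f (Sum.inl 0) = y ∧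
      f (Sum.inl 1) = t ∧ f (Sum.inl 2) = v ∧ f (Sum.inr 0) = r ∧ f (Sum.inr 1) = q ∧
      f (Sum.inr 2) = p := ⟨Sum.elim ![y, t, v] ![r, q, p], rfl, rfl, rfl, rfl, rfl, rfl⟩
  have l3 : ∀ i : Fin 3, i = 0 ∨ i = 1 ∨ i = 2 := by decide
  have hf : Function.Bijective f := by
    constructor
    · rintro (a | a) (b | b) h
      all_goals
        rcases l3 a with rfl | rfl | rfl <;> rcases l3 b with rfl | rfl | rfl <;> grind only
    · intro x
      rcases hall x with h | h | h | h | h | h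
      · exact ⟨_, f1.trans h⟩
      · exact ⟨_, f2.trans h⟩
      · exact ⟨_, f3.trans h⟩
      · exact ⟨_, f4.trans h⟩
      · exact ⟨_, f5.trans h⟩
      · exact ⟨_, f6.trans h⟩
  refine ⟨RelIso.symm ⟨Equiv.ofBijective f hf, ?_⟩⟩
  have ll : ∀ i j : Fin 3, ¬ G.Adj (f (Sum.inl i)) (f (Sum.inl j)) := by
    intro i j h
    rcases l3 i with rfl | rfl | rfl <;> rcases l3 j with rfl | rfl | rfl <;> grind only
  have rr : ∀ i j : Fin 3, ¬ G.Adj (f (Sum.inr i)) (f (Sum.inr j)) := by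
    intro i j h
    rcases l3 i with rfl | rfl | rfl <;> rcases l3 j with rfl | rfl | rfl <;> grind only
  have lr : ∀ i j : Fin 3, G.Adj (f (Sum.inl i)) (f (Sum.inr j)) := by
    intro i j
    rcases l3 i with rfl | rfl | rfl <;> rcases l3 j with rfl | rfl | rfl <;> simp only [*]
  rintro (a | a) (b | b)
  · simp [ll]
  · simp [lr]
  · simp [(lr b a).symm]
  · simp [rr]

theorem case_K23_full [Fintype V] [DecidableEq V] (G : SimpleGraph V) [DecidableRel G.Adj]
    (hconn : G.Connected) (h3 : ∀ v, (G.neighborFinset v).card = 3)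
    (htri : ∀ x y z, G.Adj x y → G.Adj y z → G.Adj x z → False)
    (hK33 : ¬ Nonempty (G ≃g completeBipartiteGraph (Fin 3) (Fin 3)))
    (y t r q p : V) (hyr : G.Adj y r) (hyq : G.Adj y q) (hyp : G.Adj y p)
    (htr : G.Adj t r) (htq : G.Adj t q) (htp : G.Adj t p) (hyt : y ≠ t) (hrq : r ≠ q)
    (hrp : r ≠ p) (hqp : q ≠ p) : HasSemistrongEdgeColoring G 8 := by
  have nb3 : ∀ x a b c, G.Adj x a → G.Adj x b → G.Adj x c → a ≠ b → a ≠ c → b ≠ c →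
      ∀ w, G.Adj x w → a = w ∨ b = w ∨ c = w := by
    intro x a b c ha hb hc hab hac hbc w hw
    obtain ⟨d, -, -, -, hd⟩ := third (h3 x) ha hb hab
    have h1 := hd c hc
    have h2 := hd w hw
    grind only
  obtain ⟨v, hrv, v1, v2, -⟩ := third (h3 r) hyr.symm htr.symm hyt
  obtain ⟨g, hqg, g1, g2, -⟩ := third (h3 q) hyq.symm htq.symm hyt
  obtain ⟨k, hpk, k1, k2, -⟩ := third (h3 p) hyp.symm htp.symm hyt
  have Nr := nb3 r y t v hyr.symm htr.symm hrv hyt v1.symm v2.symm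
  have Nq := nb3 q y t g hyq.symm htq.symm hqg hyt g1.symm g2.symm
  have Np := nb3 p y t k hyp.symm htp.symm hpk hyt k1.symm k2.symm
  by_cases e1 : v = g
  · by_cases e2 : v = k
    · subst e1; subst e2
      exact (hK33 (iso_K33 G hconn y t v r q p hyr hyq hyp htr htq htp hrv.symm hqg.symm hpk.symm
        hyt v1 v2 hrq hrp hqp (nb3 y r q p hyr hyq hyp hrq hrp hqp)
        (nb3 t r q p htr htq htp hrq hrp hqp)
        (nb3 v r q p hrv.symm hqg.symm hpk.symm hrq hrp hqp) Nr Nq Np)).elim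
    · exact case_K23 G hconn h3 htri y t p r q k v g hyp hyr hyq htp htr htq hyt hrp.symm hqp.symm
        hrq hpk hrv hqg k1 k2 v1 v2 g1 g2
        (nb3 y p r q hyp hyr hyq hrp.symm hqp.symm hrq)
        (nb3 t p r q htp htr htq hrp.symm hqp.symm hrq) Np Nr Nq (Ne.symm e2)
        (fun h => e2 (e1.trans h.symm))
  · by_cases e2 : v = k
    · exact case_K23 G hconn h3 htri y t q r p g v k hyq hyr hyp htq htr htp hyt hrq.symm hqp
        hrp hqg hrv hpk g1 g2 v1 v2 k1 k2
        (nb3 y q r p hyq hyr hyp hrq.symm hqp hrp)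
        (nb3 t q r p htq htr htp hrq.symm hqp hrp) Nq Nr Np (Ne.symm e1)
        (fun h => e1 (e2.trans h.symm))
    · exact case_K23 G hconn h3 htri y t r q p v g k hyr hyq hyp htr htq htp hyt hrq hrp
        hqp hrv hqg hpk v1 v2 g1 g2 k1 k2
        (nb3 y r q p hyr hyq hyp hrq hrp hqp)
        (nb3 t r q p htr htq htp hrq hrp hqp) Nr Nq Np e1 e2

theorem case_C4_full [Fintype V] [DecidableEq V] (G : SimpleGraph V) [DecidableRel G.Adj]
    (hconn : G.Connected) (h3 : ∀ v, (G.neighborFinset v).card = 3)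
    (htri : ∀ x y z, G.Adj x y → G.Adj y z → G.Adj x z → False)
    (hK33 : ¬ Nonempty (G ≃g completeBipartiteGraph (Fin 3) (Fin 3)))
    (r y q t : V) (hry : G.Adj r y) (hyq : G.Adj y q) (hqt : G.Adj q t)
    (htr : G.Adj t r) (hrq : r ≠ q) (hyt : y ≠ t) : HasSemistrongEdgeColoring G 8 := by
  have flip : ∀ {x a b c : V}, (∀ w, G.Adj x w → w = a ∨ w = b ∨ w = c) →
      ∀ w, G.Adj x w → a = w ∨ b = w ∨ c = w := by
    intro x a b c h w hw
    have := h w hw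
    simpa [eq_comm] using this
  obtain ⟨v, hrv, v1, v2, Nr⟩ := third (h3 r) hry htr.symm hyt
  obtain ⟨z, hyz, z1, z2, Ny⟩ := third (h3 y) hry.symm hyq hrq
  obtain ⟨s, hts, s1, s2, Nt⟩ := third (h3 t) htr hqt.symm hrq
  obtain ⟨g, hqg, g1, g2, Nq⟩ := third (h3 q) hyq.symm hqt hyt
  obtain ⟨a, b, ha, hb, a1, b1, -, Nv⟩ := others (h3 v) hrv.symm
  by_cases e1 : z = s
  · subst e1
    exact case_K23_full G hconn h3 htri hK33 y t r q z hry.symm hyq hyz htr hqt.symm hts hyt hrq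
      z1.symm z2.symm
  by_cases e2 : v = g
  · subst e2
    exact case_K23_full G hconn h3 htri hK33 r q y t v hry htr.symm hrv hyq.symm hqt hqg hrq hyt
      v1.symm v2.symm
  exact case_C4 G hconn h3 htri r y q t v z s g a b hry hyq hqt htr hrq hyt hrv v1 v2 hyz z1 z2
    hts s1 s2 hqg g1 g2 ha hb a1 b1 (flip Nr) (flip Ny) (flip Nt) (flip Nv) (flip Nq) e1 e2

set_option maxHeartbeats 4000000 in
/-- Final step around a vertex. -/
theorem fin_star [Fintype V] [DecidableEq V] (G : SimpleGraph V) [DecidableRel G.Adj]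
    (U : Finset V) (C : Sym2 V → Fin 8) (Ar : V → V → Prop) (hV : Val G U C Ar)
    (r y t v y1 y2 t1 t2 v1 v2 : V)
    (Nr : ∀ w, G.Adj r w → y = w ∨ t = w ∨ v = w)
    (Ny : ∀ w, G.Adj y w → r = w ∨ y1 = w ∨ y2 = w)
    (Nt : ∀ w, G.Adj t w → r = w ∨ t1 = w ∨ t2 = w)
    (Nv : ∀ w, G.Adj v w → r = w ∨ v1 = w ∨ v2 = w)
    (mU : ∀ x, x ∈ U → r = x ∨ y = x ∨ t = x ∨ v = x)
    (rU : r ∈ U) (yU : y ∈ U) (tU : t ∈ U) (vU : v ∈ U)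
    (y1U : y1 ∉ U) (y2U : y2 ∉ U) (t1U : t1 ∉ U) (t2U : t2 ∉ U) (v1U : v1 ∉ U) (v2U : v2 ∉ U)
    (hnd : [r, y, t, v].Nodup)
    (ry rt rv : Fin 8)
    (k0 : ry ∉ colE G C y1)
    (k1 : ry ∉ colE G C y2)
    (k2 : rt ∉ colE G C t1)
    (k3 : rt ∉ colE G C t2)
    (k4 : rv ∉ colE G C v1)
    (k5 : rv ∉ colE G C v2)
    (k6 : ry ≠ rt)
    (k7 : ry ≠ rv)
    (k8 : rt ≠ rv)
    : HasSemistrongEdgeColoring G 8 := by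
  simp only [List.nodup_cons, List.mem_cons, List.not_mem_nil, or_false, not_or, not_false_eq_true,
    List.nodup_nil, and_true] at hnd
  obtain ⟨D, dyr, dtr, dvr, dC⟩ : ∃ D : Sym2 V → Fin 8,
      D s(y, r) = ry ∧ D s(t, r) = rt ∧ D s(v, r) = rv ∧
      ∀ x y, x ∉ U → D s(x, y) = C s(x, y) := by
    refine ⟨fun e => if e = s(y, r) then ry else if e = s(t, r) then rt else if e = s(v, r) then rv else C e,
      ?_, ?_, ?_, ?_⟩
    · simp only [Sym2.eq_iff]; grind only
    · simp only [Sym2.eq_iff]; grind only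
    · simp only [Sym2.eq_iff]; grind only
    · intro x y hx
      have hne : ∀ u, u ∈ U → x ≠ u := fun u hu h => hx (h ▸ hu)
      simp only [if_neg (sym_ne (b := y) (Or.inl (hne _ yU)) (Or.inl (hne _ rU))), if_neg (sym_ne (b := y) (Or.inl (hne _ tU)) (Or.inl (hne _ rU))), if_neg (sym_ne (b := y) (Or.inl (hne _ vU)) (Or.inl (hne _ rU)))]
  have dry : D s(r, y) = ry := by rw [Sym2.eq_swap, dyr]
  have drt : D s(r, t) = rt := by rw [Sym2.eq_swap, dtr]
  have drv : D s(r, v) = rv := by rw [Sym2.eq_swap, dvr]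
  have dC' : ∀ x y, y ∉ U → D s(x, y) = C s(x, y) := by
    intro x y hy; rw [Sym2.eq_swap, dC _ _ hy]
  have ce : ∀ g x, G.Adj g x → C s(g, x) ∈ colE G C g := fun g x h => mem_colE G C h
  have hadj := hV.adj
  have gyr : Good G D y r := by
    intro n n' h1 h2 h3
    have := ce n n' h3
    rcases Ny n h1 with rfl | rfl | rfl
    · exact absurd rfl h2
    · rw [dC _ _ y1U, dyr]; grind
    · rw [dC _ _ y2U, dyr]; grind
  have gtr : Good G D t r := by
    intro n n' h1 h2 h3
    have := ce n n' h3
    rcases Nt n h1 with rfl | rfl | rfl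
    · exact absurd rfl h2
    · rw [dC _ _ t1U, dtr]; grind
    · rw [dC _ _ t2U, dtr]; grind
  have gvr : Good G D v r := by
    intro n n' h1 h2 h3
    have := ce n n' h3
    rcases Nv n h1 with rfl | rfl | rfl
    · exact absurd rfl h2
    · rw [dC _ _ v1U, dvr]; grind
    · rw [dC _ _ v2U, dvr]; grind
  have E : ∀ z w, z ∈ U → w ∈ U → G.Adj z w → (y = z ∧ r = w) ∨ (r = z ∧ y = w) ∨ (t = z ∧ r = w) ∨ (r = z ∧ t = w) ∨ (v = z ∧ r = w) ∨ (r = z ∧ v = w) := by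
    intro z w hz hw h
    rcases mU z hz with rfl | rfl | rfl | rfl
    · rcases Nr w h with rfl | rfl | rfl <;> grind only
    · rcases Ny w h with rfl | rfl | rfl <;> grind only
    · rcases Nt w h with rfl | rfl | rfl <;> grind only
    · rcases Nv w h with rfl | rfl | rfl <;> grind only
  refine hV.extend D dC ?_ ?_ ?_
  · intro z w g x hz hw hzw hgz ha
    clear hV
    have h1 := hadj g x ha
    have h2 := ce g x h1.2
    have h3 := h1.1
    clear ce hadj
    rcases E z w hz hw hzw with ⟨rfl, rfl⟩ | ⟨rfl, rfl⟩ | ⟨rfl, rfl⟩ | ⟨rfl, rfl⟩ | ⟨rfl, rfl⟩ | ⟨rfl, rfl⟩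
    · rcases Ny g hgz.symm with rfl | rfl | rfl <;> grind
    · rcases Nr g hgz.symm with rfl | rfl | rfl <;> contradiction
    · rcases Nt g hgz.symm with rfl | rfl | rfl <;> grind
    · rcases Nr g hgz.symm with rfl | rfl | rfl <;> contradiction
    · rcases Nv g hgz.symm with rfl | rfl | rfl <;> grind
    · rcases Nr g hgz.symm with rfl | rfl | rfl <;> contradiction
  · intro z w hz hw hzw
    rcases E z w hz hw hzw with ⟨rfl, rfl⟩ | ⟨rfl, rfl⟩ | ⟨rfl, rfl⟩ | ⟨rfl, rfl⟩ | ⟨rfl, rfl⟩ | ⟨rfl, rfl⟩ <;> simp only [gyr, gtr, gvr, true_or, or_true]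
  · intro x z w hx hz hw h1 h2 h3
    clear hV ce hadj
    rcases E x z hx hz h1 with ⟨rfl, rfl⟩ | ⟨rfl, rfl⟩ | ⟨rfl, rfl⟩ | ⟨rfl, rfl⟩ | ⟨rfl, rfl⟩ | ⟨rfl, rfl⟩
    · rcases Ny w h2 with rfl | rfl | rfl <;> grind only
    · rcases Nr w h2 with rfl | rfl | rfl <;> grind only
    · rcases Nt w h2 with rfl | rfl | rfl <;> grind only
    · rcases Nr w h2 with rfl | rfl | rfl <;> grind only
    · rcases Nv w h2 with rfl | rfl | rfl <;> grind only
    · rcases Nr w h2 with rfl | rfl | rfl <;> grind only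

/-- A closed trail through `t` along `p 0, and so on to, p L`. -/
def Cyc (G : SimpleGraph V) (L : ℕ) (t : V) (p : ℕ → V) : Prop :=
  (∀ i, i < L → G.Adj (p i) (p (i + 1))) ∧ (∀ i, i ≤ L → p i ≠ t) ∧ G.Adj (p 0) t ∧
    G.Adj (p L) t ∧ p 0 ≠ p L

theorem exists_cyc [Fintype V] [DecidableEq V] (G : SimpleGraph V) [DecidableRel G.Adj]
    (hconn : G.Connected) (h3 : ∀ v, (G.neighborFinset v).card = 3) :
    ∃ L t p, Cyc G L t p := by
  have hna : ¬ G.IsAcyclic := by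
    intro ha
    have htree : G.IsTree := ⟨hconn, ha⟩
    obtain ⟨r⟩ := hconn.nonempty
    obtain ⟨x, hx⟩ := Finset.card_pos.1 (by rw [h3 r]; omega : 0 < (G.neighborFinset r).card)
    have hrx : G.Adj r x := by simpa using hx
    haveI : Nontrivial V := ⟨r, x, hrx.ne⟩
    obtain ⟨v, hv⟩ := htree.exists_vert_degree_one_of_nontrivial
    have := h3 v
    rw [G.card_neighborFinset_eq_degree] at this
    omega
  unfold SimpleGraph.IsAcyclic at hna
  push Not at hna
  obtain ⟨v, c, hc⟩ := hna
  have hlen := hc.three_le_length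
  refine ⟨c.length - 2, v, fun i => c.getVert (i + 1), ?_, ?_, ?_, ?_, ?_⟩
  · intro i hi
    exact c.adj_getVert_succ (by omega)
  · intro i hi h
    rw [hc.getVert_endpoint_iff (by omega)] at h
    omega
  · have := c.adj_getVert_succ (i := 0) (by omega)
    rw [c.getVert_zero] at this
    exact this.symm
  · have := c.adj_getVert_succ (i := c.length - 1) (by omega)
    rw [show c.length - 1 + 1 = c.length by omega, c.getVert_length] at this
    show G.Adj (c.getVert (c.length - 2 + 1)) v
    rwa [show c.length - 2 + 1 = c.length - 1 by omega]
  · intro h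
    have := hc.getVert_injOn (x₁ := 0 + 1) (x₂ := c.length - 2 + 1) ⟨by omega, by omega⟩
      ⟨by omega, by omega⟩ h
    omega

/-- Colouring a small graph from a table, arbitrary index type. -/
theorem small_graph' (G : SimpleGraph V) {I : Type} (f : I → V) (hf : Function.Surjective f)
    (P : I → I → Bool) (hP : ∀ a b, G.Adj (f a) (f b) → P a b = true)
    (col : I → I → Fin 8) (hs : ∀ a b, col a b = col b a)
    (hp : ∀ x y, P x y = true → ∀ z, P x z = true → y ≠ z → col x y ≠ col x z)
    (hg : ∀ x y, P x y = true →
      (∀ z, P x z = true → z ≠ y → ∀ w, P z w = true → col z w ≠ col x y) ∨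
      (∀ z, P y z = true → z ≠ x → ∀ w, P z w = true → col z w ≠ col y x)) :
    HasSemistrongEdgeColoring G 8 := by
  obtain ⟨e, he⟩ : ∃ e : V → I, ∀ x, f (e x) = x := ⟨_, Function.surjInv_eq hf⟩
  have hP' : ∀ x y, G.Adj x y → P (e x) (e y) = true := by
    intro x y h; apply hP; rwa [he, he]
  have hne : ∀ x y, x ≠ y → e x ≠ e y := by
    intro x y h h'; apply h; rw [← he x, ← he y, h']
  obtain ⟨C, hC⟩ : ∃ C : Sym2 V → Fin 8, ∀ x y, C s(x, y) = col (e x) (e y) :=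
    ⟨Sym2.lift ⟨fun x y => col (e x) (e y), fun x y => hs _ _⟩, fun x y => rfl⟩
  apply ssColoring_of_good G C
  · intro x y z h1 h2 h3
    rw [hC, hC]
    exact hp _ _ (hP' _ _ h1) _ (hP' _ _ h2) (hne _ _ h3)
  · intro x y h
    rcases hg _ _ (hP' _ _ h) with h' | h'
    · left
      intro z w h1 h2 h3
      rw [hC, hC]
      exact h' _ (hP' _ _ h1) (hne _ _ h2) _ (hP' _ _ h3)
    · right
      intro z w h1 h2 h3
      rw [hC, hC]
      exact h' _ (hP' _ _ h1) (hne _ _ h2) _ (hP' _ _ h3)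

def petAdj : Fin 5 ⊕ Fin 5 → Fin 5 ⊕ Fin 5 → Bool
  | Sum.inl i, Sum.inl j => decide (j = i + 1 ∨ i = j + 1)
  | Sum.inl i, Sum.inr j => decide (i = j)
  | Sum.inr i, Sum.inl j => decide (i = j)
  | Sum.inr i, Sum.inr j => decide (j = i + 2 ∨ i = j + 2)

/-- A five-colouring of the Petersen graph. -/
def petCol : Fin 5 ⊕ Fin 5 → Fin 5 ⊕ Fin 5 → Fin 8
  | Sum.inl i, Sum.inl j => if j = i + 1 then i.castLE (by omega) else
      if i = j + 1 then j.castLE (by omega) else 0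
  | Sum.inl i, Sum.inr j => if i = j then (i + 2).castLE (by omega) else 0
  | Sum.inr i, Sum.inl j => if i = j then (i + 2).castLE (by omega) else 0
  | Sum.inr i, Sum.inr j => if j = i + 2 then (i + 3).castLE (by omega) else
      if i = j + 2 then (j + 3).castLE (by omega) else 0

set_option synthInstance.maxHeartbeats 400000 in
set_option synthInstance.maxSize 2000 in
set_option maxSynthPendingDepth 10 in
theorem case_petersen (G : SimpleGraph V) (hconn : G.Connected) (c d : Fin 5 → V)
    (Nc : ∀ i w, G.Adj (c i) w → w = c (i + 1) ∨ w = c (i + 4) ∨ w = d i)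
    (Nd : ∀ i w, G.Adj (d i) w → w = c i ∨ w = d (i + 2) ∨ w = d (i + 3))
    (hc : Function.Injective c) (hd : Function.Injective d) (hcd : ∀ i j, c i ≠ d j) :
    HasSemistrongEdgeColoring G 8 := by
  have hall := closed_univ G hconn (fun x => (∃ i, c i = x) ∨ (∃ i, d i = x)) (c 0)
    (Or.inl ⟨0, rfl⟩) (by
    rintro x y (⟨i, rfl⟩ | ⟨i, rfl⟩) h
    · rcases Nc i y h with rfl | rfl | rfl
      · exact Or.inl ⟨_, rfl⟩
      · exact Or.inl ⟨_, rfl⟩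
      · exact Or.inr ⟨_, rfl⟩
    · rcases Nd i y h with rfl | rfl | rfl
      · exact Or.inl ⟨_, rfl⟩
      · exact Or.inr ⟨_, rfl⟩
      · exact Or.inr ⟨_, rfl⟩)
  refine small_graph' G (Sum.elim c d) ?_ petAdj ?_ petCol (by decide +kernel)
    (by decide +kernel) (by decide +kernel)
  · intro x
    rcases hall x with ⟨i, h⟩ | ⟨i, h⟩
    · exact ⟨Sum.inl i, h⟩
    · exact ⟨Sum.inr i, h⟩
  · have a1 : ∀ i j : Fin 5, j = i + 4 → i = j + 1 := by decide
    have a2 : ∀ i j : Fin 5, j = i + 3 → i = j + 2 := by decide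
    rintro (i | i) (j | j) h <;> simp only [Sum.elim_inl, Sum.elim_inr] at h
    · rcases Nc i _ h with h | h | h
      · simp [petAdj, hc h]
      · simp only [petAdj, decide_eq_true_eq]; exact Or.inr (a1 i j (hc h))
      · exact absurd h (hcd _ _)
    · rcases Nc i _ h with h | h | h
      · exact absurd h.symm (hcd _ _)
      · exact absurd h.symm (hcd _ _)
      · simp [petAdj, hd h]
    · rcases Nd i _ h with h | h | h
      · simp [petAdj, hc h]
      · exact absurd h (hcd _ _)
      · exact absurd h (hcd _ _)
    · rcases Nd i _ h with h | h | h
      · exact absurd h.symm (hcd _ _)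
      · simp [petAdj, hd h]
      · simp only [petAdj, decide_eq_true_eq]; exact Or.inr (a2 i j (hd h))

theorem of_mem_colE [Fintype V] (G : SimpleGraph V) [DecidableRel G.Adj] (C : Sym2 V → Fin 8)
    {g : V} {c : Fin 8} (h : c ∈ colE G C g) : ∃ x, G.Adj g x ∧ C s(g, x) = c := by
  obtain ⟨x, hx, h⟩ := Finset.mem_image.1 h
  exact ⟨x, by simpa using hx, h⟩

theorem colE_update [Fintype V] [DecidableEq V] (G : SimpleGraph V) [DecidableRel G.Adj]
    (C : Sym2 V → Fin 8) (s t g : V) (m : Fin 8) (h1 : g ≠ s) (h2 : g ≠ t) :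
    colE G (Function.update C s(s, t) m) g = colE G C g := by
  unfold colE
  apply Finset.image_congr
  intro x _
  exact Function.update_of_ne (sym_ne (Or.inl h1) (Or.inl h2)) _ _

set_option maxHeartbeats 1000000 in
/-- Final step of the general case, from two valid partial colourings. -/
theorem star_two [Fintype V] [DecidableEq V] (G : SimpleGraph V) [DecidableRel G.Adj]
    (h3 : ∀ v, (G.neighborFinset v).card = 3)
    (htri : ∀ x y z, G.Adj x y → G.Adj y z → G.Adj x z → False)
    (hC4 : ∀ a b c d, G.Adj a b → G.Adj b c → G.Adj c d → G.Adj d a → a ≠ c → b ≠ d → False)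
    (r t q s : V) (hrt : G.Adj r t) (htq : G.Adj t q) (hts : G.Adj t s) (hrq : r ≠ q) (hrs : r ≠ s)
    (hqs : q ≠ s) (U : Finset V) (hU : ∀ x, x ∈ U ↔ x = r ∨ G.Adj r x)
    (C : Sym2 V → Fin 8) (m : Fin 8) (Ar : V → V → Prop) (hm : m ≠ C s(s, t))
    (hV : Val G U C Ar) (hV' : Val G U (Function.update C s(s, t) m) Ar) :
    HasSemistrongEdgeColoring G 8 := by
  have hd : ∀ v, (G.neighborFinset v).card ≤ 3 := fun v => (h3 v).le
  have flip : ∀ {x a b c : V}, (∀ w, G.Adj x w → w = a ∨ w = b ∨ w = c) →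
      ∀ w, G.Adj x w → a = w ∨ b = w ∨ c = w := by
    intro x a b c h w hw
    have := h w hw
    simpa [eq_comm] using this
  obtain ⟨y, v, hry, hrv, hyt, hvt, hvy, Nr⟩ := others (h3 r) hrt
  obtain ⟨y1, y2, hy1, hy2, y1r, y2r, -, Ny⟩ := others (h3 y) hry.symm
  obtain ⟨v1, v2, hv1, hv2, v1r, v2r, -, Nv⟩ := others (h3 v) hrv.symm
  obtain ⟨s1, s2, hs1, hs2, s1t, s2t, -, Ns⟩ := others (h3 s) hts.symm
  have Nt : ∀ w, G.Adj t w → r = w ∨ q = w ∨ s = w := by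
    intro w hw
    obtain ⟨d, -, -, -, hd⟩ := third (h3 t) hrt.symm htq hrq
    have h1 := hd s hts
    have h2 := hd w hw
    grind only
  have out : ∀ a b, G.Adj r a → G.Adj a b → b ≠ r → b ∉ U := by
    intro a b h1 h2 h3 h
    rcases (hU b).1 h with h | h
    · exact h3 h
    · exact htri _ _ _ h1 h2 h
  have rU : r ∈ U := by simp [hU]
  have yU : y ∈ U := by simp [hU, hry]
  have tU : t ∈ U := by simp [hU, hrt]
  have vU : v ∈ U := by simp [hU, hrv]
  have y1U := out _ _ hry hy1 y1r
  have y2U := out _ _ hry hy2 y2r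
  have v1U := out _ _ hrv hv1 v1r
  have v2U := out _ _ hrv hv2 v2r
  have qU := out _ _ hrt htq hrq.symm
  have sU := out _ _ hrt hts hrs.symm
  have mU : ∀ x, x ∈ U → r = x ∨ y = x ∨ t = x ∨ v = x := by
    intro x hx
    rcases (hU x).1 hx with h | h
    · exact Or.inl h.symm
    · have := Nr x h; grind only
  have nry := hry.ne
  have nrt := hrt.ne
  have nrv := hrv.ne
  have nd : [r, y, t, v].Nodup := by
    simp only [List.nodup_cons, List.mem_cons, List.not_mem_nil, or_false, not_or,
      not_false_eq_true, List.nodup_nil, and_true]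
    grind only
  -- second neighbours differ from `s`
  have nes : ∀ a b, G.Adj r a → a ≠ t → G.Adj a b → b ≠ s ∧ b ≠ t := by
    intro a b h1 h2 h3
    constructor
    · rintro rfl
      exact hC4 r a b t h1 h3 hts.symm hrt.symm hrs h2
    · rintro rfl
      exact htri _ _ _ h1 h3 hrt
  have key : ∀ C : Sym2 V → Fin 8, Val G U C Ar →
      (∃ a b c, a ∈ (insert (C s(s, s1)) (insert (C s(s, s2)) (insert (C s(s, t)) (colE G C q))))ᶜ ∧
        b ∈ (colE G C y1 ∪ colE G C y2)ᶜ ∧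
        c ∈ (colE G C v1 ∪ colE G C v2)ᶜ ∧ a ≠ b ∧ a ≠ c ∧ b ≠ c) →
      HasSemistrongEdgeColoring G 8 := by
    rintro C hV ⟨rt, ry, rv, a1, a2, a3, a4, a5, a6⟩
    simp only [Finset.mem_compl, Finset.mem_insert, Finset.mem_union, not_or] at a1 a2 a3
    have hs : rt ∉ colE G C s := by
      intro h
      obtain ⟨x, hx, hx'⟩ := of_mem_colE G C h
      rcases Ns x hx with rfl | rfl | rfl
      · exact a1.2.2.1 hx'.symm
      · exact a1.1 hx'.symm
      · exact a1.2.1 hx'.symm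
    exact fin_star G U C Ar hV r y t v y1 y2 q s v1 v2 (fun w hw => by have := Nr w hw; grind only)
      (flip Ny) Nt (flip Nv) mU rU yU tU vU y1U y2U qU sU v1U v2U nd ry rt rv a2.1 a2.2
      a1.2.2.2 hs a3.1 a3.2 a4.symm a6 a5
  have two : ∀ (C : Sym2 V → Fin 8) a b, 2 ≤ ((colE G C a ∪ colE G C b)ᶜ).card := by
    intro C a b
    have h1 := Finset.card_union_le (colE G C a) (colE G C b)
    have h2 := colE_card G C hd a
    have h3 := colE_card G C hd b
    have := card_compl8 (colE G C a ∪ colE G C b) 6 (by omega)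
    omega
  by_cases hbad : (insert (C s(s, s1)) (insert (C s(s, s2)) (insert (C s(s, t)) (colE G C q))))ᶜ ≠
      (colE G C y1 ∪ colE G C y2)ᶜ ∨
      (colE G C y1 ∪ colE G C y2)ᶜ ≠ (colE G C v1 ∪ colE G C v2)ᶜ ∨
      3 ≤ ((insert (C s(s, s1)) (insert (C s(s, s2)) (insert (C s(s, t)) (colE G C q))))ᶜ).card
  · exact key C hV (sdr3 _ _ _ (card3 _ (colE_card G C hd q) _ _ _) (two _ _ _) (two _ _ _) hbad)
  · push Not at hbad
    obtain ⟨b1, b2, b3⟩ := hbad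
    obtain ⟨d1, d2, d3⟩ := card3' (colE G C q) (colE_card G C hd q) (C s(s, s1)) (C s(s, s2))
      (C s(s, t)) (by omega)
    apply key _ hV'
    have u1 := nes _ _ hry hyt hy1
    have u2 := nes _ _ hry hyt hy2
    have u3 := nes _ _ hrv hvt hv1
    have u4 := nes _ _ hrv hvt hv2
    rw [colE_update G C s t q m hqs htq.ne', colE_update G C s t y1 m u1.1 u1.2,
      colE_update G C s t y2 m u2.1 u2.2, colE_update G C s t v1 m u3.1 u3.2,
      colE_update G C s t v2 m u4.1 u4.2, Function.update_self,
      Function.update_of_ne (sym_ne (Or.inr s1t) (Or.inl hts.ne')),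
      Function.update_of_ne (sym_ne (Or.inr s2t) (Or.inl hts.ne'))]
    refine sdr3 _ _ _ (card3 _ (colE_card G C hd q) _ _ _) (two _ _ _) (two _ _ _) (Or.inl ?_)
    intro h
    have hin : C s(s, t) ∈ (insert (C s(s, s1)) (insert (C s(s, s2)) (insert m (colE G C q))))ᶜ := by
      simp only [Finset.mem_compl, Finset.mem_insert, not_or]
      exact ⟨d3.symm, d2.symm, hm.symm, d1⟩
    rw [h, ← b1] at hin
    simp at hin

theorem Cyc.rev {G : SimpleGraph V} {L : ℕ} {t : V} {p : ℕ → V} (h : Cyc G L t p) :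
    Cyc G L t (fun j => p (L - j)) := by
  obtain ⟨h1, h2, h3, h4, h5⟩ := h
  refine ⟨?_, ?_, ?_, ?_, ?_⟩
  · intro i hi
    have := h1 (L - (i + 1)) (by omega)
    rw [show L - (i + 1) + 1 = L - i by omega] at this
    exact this.symm
  · intro i hi
    exact h2 _ (by omega)
  · simpa using h4
  · simpa using h3
  · simpa using h5.symm

theorem Cyc.pre0 {G : SimpleGraph V} {L : ℕ} {t : V} {p : ℕ → V} (h : Cyc G L t p) (i : ℕ)
    (hi : i ≤ L) (hx : G.Adj (p i) t) (hx0 : p 0 ≠ p i) : Cyc G i t p := by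
  obtain ⟨h1, h2, h3, h4, h5⟩ := h
  exact ⟨fun j hj => h1 j (by omega), fun j hj => h2 j (by omega), h3, hx, hx0⟩

theorem Cyc.pre1 {G : SimpleGraph V} {L : ℕ} {t : V} {p : ℕ → V} (h : Cyc G L t p) (i : ℕ)
    (hi : i ≤ L) (x : V) (hix : G.Adj (p i) x) (hx : G.Adj x t) (hx0 : p 0 ≠ x) :
    ∃ p', Cyc G (i + 1) t p' := by
  obtain ⟨h1, h2, h3, h4, h5⟩ := h
  refine ⟨fun j => if j ≤ i then p j else x, ?_, ?_, ?_, ?_, ?_⟩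
  · intro j hj
    by_cases hji : j = i
    · simp [hji, hix]
    · simp only [show j ≤ i by omega, show j + 1 ≤ i by omega, if_true]
      exact h1 j (by omega)
  · intro j hj
    by_cases hji : j ≤ i
    · simp only [hji, if_true]; exact h2 j (by omega)
    · simp only [hji, if_false]; exact hx.ne
  · simpa using h3
  · simpa using hx
  · simpa using hx0

theorem Cyc.pre2 {G : SimpleGraph V} {L : ℕ} {t : V} {p : ℕ → V} (h : Cyc G L t p) (i : ℕ)
    (hi : i ≤ L) (x w : V) (hix : G.Adj (p i) x) (hxw : G.Adj x w) (hw : G.Adj w t) (hxt : x ≠ t)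
    (hx0 : p 0 ≠ w) :
    ∃ p', Cyc G (i + 2) t p' := by
  obtain ⟨h1, h2, h3, h4, h5⟩ := h
  refine ⟨fun j => if j ≤ i then p j else if j = i + 1 then x else w, ?_, ?_, ?_, ?_, ?_⟩
  · intro j hj
    by_cases hji : j = i
    · simp [hji, hix]
    · by_cases hji' : j = i + 1
      · simp [hji', hxw]
      · simp only [show j ≤ i by omega, show j + 1 ≤ i by omega, if_true]
        exact h1 j (by omega)
  · intro j hj
    by_cases hji : j ≤ i
    · simp only [hji, if_true]; exact h2 j (by omega)
    · by_cases hji' : j = i + 1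
      · simp [hji', hxt]
      · simp only [hji, hji', if_false]; exact hw.ne
  · simpa using h3
  · simpa using hw
  · simpa using hx0

theorem Cyc.three_le {G : SimpleGraph V} {L : ℕ} {t : V} {p : ℕ → V} (h : Cyc G L t p)
    (htri : ∀ x y z, G.Adj x y → G.Adj y z → G.Adj x z → False)
    (hC4 : ∀ a b c d, G.Adj a b → G.Adj b c → G.Adj c d → G.Adj d a → a ≠ c → b ≠ d → False) :
    3 ≤ L := by
  obtain ⟨h1, h2, h3, h4, h5⟩ := h
  by_contra hL
  have : L = 0 ∨ L = 1 ∨ L = 2 := by omega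
  rcases this with rfl | rfl | rfl
  · exact h5 rfl
  · exact htri _ _ _ (h1 0 (by omega)) h4 h3
  · exact hC4 _ _ _ _ (h1 0 (by omega)) (h1 1 (by omega)) h4 h3.symm h5 (h2 1 (by omega))

set_option maxHeartbeats 1000000 in
/-- The general case. -/
theorem scheme_A [Fintype V] [DecidableEq V] (G : SimpleGraph V) [DecidableRel G.Adj]
    (hconn : G.Connected) (h3 : ∀ v, (G.neighborFinset v).card = 3)
    (htri : ∀ x y z, G.Adj x y → G.Adj y z → G.Adj x z → False)
    (hC4 : ∀ a b c d, G.Adj a b → G.Adj b c → G.Adj c d → G.Adj d a → a ≠ c → b ≠ d → False)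
    (L : ℕ) (t : V) (p : ℕ → V) (hcyc : Cyc G L t p)
    (hmin : ∀ L' t' p', Cyc G L' t' p' → L ≤ L')
    (s : V) (hts : G.Adj t s) (hs0 : p 0 ≠ s) (hsL : p L ≠ s)
    (hbad : L = 3 → ∀ z, G.Adj s z → z ≠ t → G.Adj z (p 2) → False) :
    HasSemistrongEdgeColoring G 8 := by
  have hd : ∀ v, (G.neighborFinset v).card ≤ 3 := fun v => (h3 v).le
  have hL3 : 3 ≤ L := hcyc.three_le htri hC4
  have hrev := hcyc.rev
  obtain ⟨c1, c2, c3, c4, c5⟩ := id hcyc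
  obtain ⟨r, hr⟩ : ∃ r, r = p 0 := ⟨_, rfl⟩
  obtain ⟨q, hq⟩ : ∃ q, q = p L := ⟨_, rfl⟩
  rw [← hr] at c3 c5 hs0
  rw [← hq] at c4 c5 hsL
  -- consequences of minimality
  have sP : ∀ i, i ≤ L → p i ≠ s := by
    intro i hi h
    have h1 : L ≤ i := hmin _ _ _ (hcyc.pre0 i hi (h ▸ hts.symm) (by rw [h, ← hr]; exact hs0))
    have : i = L := by omega
    rw [this, ← hq] at h
    exact hsL h
  have sN : ∀ i, i ≤ L → ¬ G.Adj s (p i) := by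
    intro i hi h
    obtain ⟨p', hp'⟩ := hcyc.pre1 i hi s h.symm hts.symm (by rw [← hr]; exact hs0)
    have h1 := hmin _ _ _ hp'
    obtain ⟨p'', hp''⟩ := hrev.pre1 (L - i) (by omega) s
      (by show G.Adj (p (L - (L - i))) s; rw [show L - (L - i) = i by omega]; exact h.symm) hts.symm
      (by simp only [Nat.sub_zero]; rw [← hq]; exact hsL)
    have h2 := hmin _ _ _ hp''
    omega
  have sZ : ∀ z, G.Adj s z → z ≠ t → ∀ i, i ≤ L → G.Adj z (p i) → i + 2 = L := by
    intro z hz hzt i hi h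
    obtain ⟨p', hp'⟩ := hcyc.pre2 i hi z s h.symm hz.symm hts.symm hzt (by rw [← hr]; exact hs0)
    have h1 := hmin _ _ _ hp'
    obtain ⟨p'', hp''⟩ := hrev.pre2 (L - i) (by omega) z s
      (by show G.Adj (p (L - (L - i))) z; rw [show L - (L - i) = i by omega]; exact h.symm)
      hz.symm hts.symm hzt (by simp only [Nat.sub_zero]; rw [← hq]; exact hsL)
    have h2 := hmin _ _ _ hp''
    by_contra hne
    have e1 : i = 2 := by omega
    have e2 : L = 3 := by omega
    rw [e1] at h
    exact hbad e2 z hz hzt h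
  -- the potential
  classical
  obtain ⟨κ, k1, k2, k3, k4⟩ : ∃ κ : V → ℕ, (∀ i, i ≤ L → κ (p i) ≤ i) ∧
      (∀ x, κ x ≤ L → p (κ x) = x) ∧ κ t = L + 1 ∧
      (∀ x, L < κ x → x ≠ t → κ x = L + 2 + G.dist x r) := by
    refine ⟨fun x => if h : ∃ i, i ≤ L ∧ p i = x then Nat.find h else
      if x = t then L + 1 else L + 2 + G.dist x r, ?_, ?_, ?_, ?_⟩
    · intro i hi
      have h : ∃ j, j ≤ L ∧ p j = p i := ⟨i, hi, rfl⟩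
      simp only [dif_pos h]
      exact Nat.find_min' h ⟨hi, rfl⟩
    · intro x
      by_cases h : ∃ j, j ≤ L ∧ p j = x
      · simp only [dif_pos h]
        intro _
        exact (Nat.find_spec h).2
      · simp only [dif_neg h]
        split_ifs
        · intro h; omega
        · intro h; omega
    · have h : ¬ ∃ j, j ≤ L ∧ p j = t := by
        rintro ⟨j, hj, hj'⟩; exact c2 j hj hj'
      simp only [dif_neg h, if_true]
    · intro x hx hxt
      by_cases h : ∃ j, j ≤ L ∧ p j = x
      · simp only [dif_pos h] at hx
        have := (Nat.find_spec h).1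
        omega
      · simp only [dif_neg h, if_neg hxt]
  have kr : κ r = 0 := by have := k1 0 (by omega); rw [← hr] at this; omega
  have krr : ∀ x, κ x = 0 → x = r := by
    intro x hx; have := k2 x (by omega); rw [hx, ← hr] at this; exact this.symm
  -- facts on neighbourhoods
  have hrt : G.Adj r t := c3
  have hqt : G.Adj q t := c4
  have nrs : ¬ G.Adj r s := fun h => htri _ _ _ hrt hts h
  obtain ⟨U, hU⟩ : ∃ U : Finset V, ∀ x, x ∈ U ↔ x = r ∨ G.Adj r x :=
    ⟨Finset.univ.filter (fun x => x = r ∨ G.Adj r x), by simp⟩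
  have rU : r ∈ U := by simp [hU]
  have tU : t ∈ U := by simp [hU, hrt]
  have hNt : ∀ w, G.Adj t w → w = r ∨ w = q ∨ w = s := by
    intro w hw
    obtain ⟨d, -, -, -, hd⟩ := third (h3 t) hrt.symm hqt.symm c5
    have h1 := hd s hts
    have h2 := hd w hw
    grind only
  -- the unique possible live vertex
  have live : ∀ h, (G.Adj s h ∧ h ≠ t ∧ ∃ y, G.Adj h y ∧ κ y < κ t) →
      G.Adj s h ∧ h ≠ t ∧ G.Adj h (p (L - 2)) := by
    rintro h ⟨h1, h2, y, hy, hlt⟩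
    refine ⟨h1, h2, ?_⟩
    have e1 := k2 y (by omega)
    have e2 := sZ h h1 h2 (κ y) (by omega) (by rw [e1]; exact hy)
    rw [show L - 2 = κ y by omega, e1]
    exact hy
  -- neighbours of a live vertex see nothing early
  have far : ∀ h, G.Adj s h → h ≠ t → G.Adj h (p (L - 2)) → ∀ z, G.Adj h z → z ≠ p (L - 2) →
      ∀ j, j ≤ L - 2 → ¬ G.Adj z (p j) := by
    intro h hsh hht hhp z hhz hzp j hj hzj
    by_cases hzs : z = s
    · rw [hzs] at hzj
      exact sN j (by omega) hzj
    by_cases hj2 : j = L - 2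
    · rw [hj2] at hzj
      exact htri _ _ _ hhz hzj hhp
    have hhP : ∀ i, i ≤ L → p i ≠ h := by
      intro i hi e; exact sN i hi (e ▸ hsh)
    have hL4 : L ≤ 4 := by
      obtain ⟨p', hp'⟩ := hcyc.pre2 (L - 2) (by omega) h s hhp.symm hsh.symm hts.symm hht
        (by rw [← hr]; exact hs0)
      obtain ⟨p'', hp''⟩ := hrev.pre2 2 (by omega) h s hhp.symm hsh.symm hts.symm hht
        (by simp only [Nat.sub_zero]; rw [← hq]; exact hsL)
      exact hmin _ _ _ hp''
    by_cases hj3 : j + 1 = L - 2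
    · have := c1 j (by omega)
      rw [hj3] at this
      exact hC4 _ _ _ _ hzj this hhp.symm hhz hzp (hhP j (by omega))
    · have hL : L = 4 := by omega
      have hj0 : j = 0 := by omega
      subst hL; subst hj0
      have e1 : p 1 ≠ z := by
        rintro rfl
        have := sZ h hsh hht 1 (by omega) hhz
        omega
      have e2 : h ≠ p 0 := fun e => hhP 0 (by omega) e.symm
      have hc : Cyc G 3 (p 0) (fun i => if i = 0 then p 1 else if i = 1 then p 2 else
          if i = 2 then h else z) := by
        refine ⟨?_, ?_, ?_, ?_, ?_⟩
        · intro i hi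
          have : i = 0 ∨ i = 1 ∨ i = 2 := by omega
          rcases this with rfl | rfl | rfl
          · simpa using c1 1 (by omega)
          · simpa using hhp.symm
          · simpa using hhz
        · intro i hi
          have : i = 0 ∨ i = 1 ∨ i = 2 ∨ i = 3 := by omega
          rcases this with rfl | rfl | rfl | rfl
          · simpa using (c1 0 (by omega)).ne'
          · simp only [one_ne_zero, if_false, if_true]
            intro e
            have := sZ h hsh hht 0 (by omega) (by rw [← e]; exact hhp)
            omega
          · simpa using e2
          · simpa using hzj.ne
        · simpa using (c1 0 (by omega)).symm
        · simpa using hzj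
        · simpa using e1
      have := hmin _ _ _ hc
      omega
  obtain ⟨C, m, Ar, hm, hV, hV'⟩ := exists_val_two G hd κ r (by
      intro x hx
      by_cases h1 : κ x ≤ L
      · have h0 : κ x ≠ 0 := fun h => hx (krr x h)
        have e := k2 x h1
        have := c1 (κ x - 1) (by omega)
        rw [show κ x - 1 + 1 = κ x by omega, e] at this
        refine ⟨_, this.symm, ?_⟩
        have := k1 (κ x - 1) (by omega)
        omega
      by_cases h2 : x = t
      · exact ⟨r, h2 ▸ hrt.symm, by omega⟩
      have e := k4 x (by omega) h2
      obtain ⟨w, hw, hlt⟩ := exists_closer G hconn r x hx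
      refine ⟨w, hw, ?_⟩
      by_cases w1 : κ w ≤ L
      · omega
      by_cases w2 : w = t
      · rw [w2]; omega
      have := k4 w (by omega) w2
      omega) U rU (by
      intro x hx
      right
      rcases (hU x).1 hx with h | h
      · exact ⟨t, tU, h ▸ hrt⟩
      · exact ⟨r, rU, h.symm⟩) t q s tU
    (by rw [hU]; rintro (h | h)
        · exact hs0 h.symm
        · exact nrs h)
    (by rw [hU]; rintro (h | h)
        · exact c5 h.symm
        · exact htri _ _ _ h hqt hrt)
    hsL.symm
    (by intro w hw
        rcases hNt w hw with h | h | h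
        · left; rw [h]; exact rU
        · exact Or.inr (Or.inl h)
        · exact Or.inr (Or.inr h))
    hts.symm hqt
    (by intro y hy
        by_cases h : y = t
        · exact Or.inl h
        · right
          by_contra hc
          by_cases h' : κ y ≤ L
          · exact sN (κ y) h' (by rw [k2 y h']; exact hy)
          · have := k4 y (by omega) h
            omega)
    (by refine ⟨p (L - 1), ?_, ?_⟩
        · have := c1 (L - 1) (by omega)
          rw [show L - 1 + 1 = L by omega, ← hq] at this
          exact this.symm
        · have := k1 (L - 1) (by omega)
          omega)
    (fun w h1 h2 => htri _ _ _ hts h1 h2)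
    (by intro y hy
        by_contra h
        have := k4 y (by omega) h
        omega)
    (by intro h h1 h2 h3
        rcases (hU h).1 h3 with h3 | h3
        · exact nrs (h3 ▸ h1.symm)
        · exact hC4 r t s h hrt hts h1 h3.symm hs0 h2.symm)
    (fun h => G.Adj s h ∧ h ≠ t ∧ ∃ y, G.Adj h y ∧ κ y < κ t) (fun h => Iff.rfl)
    (by intro h h' hh hh'
        obtain ⟨a1, a2, a3⟩ := live h hh
        obtain ⟨b1, b2, b3⟩ := live h' hh'
        by_contra hne
        exact hC4 s h (p (L - 2)) h' a1 a3 b3.symm b1.symm (sP _ (by omega)).symm hne)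
    (by intro h hh
        obtain ⟨a1, a2, a3⟩ := live h hh
        refine ⟨p (L - 2), a3, ?_⟩
        intro z hz hzp
        have hf := far h a1 a2 a3 z hz hzp
        constructor
        · rw [hU]
          rintro (h' | h')
          · have := sZ h a1 a2 0 (by omega) (by rw [← hr, ← h']; exact hz)
            omega
          · exact hf 0 (by omega) (by rw [← hr]; exact h'.symm)
        · intro y hy
          by_contra hc
          have := k1 (L - 2) (by omega)
          exact hf (κ y) (by omega) (by rw [k2 y (by omega)]; exact hy))
  exact star_two G h3 htri hC4 r t q s hrt hqt.symm hts c5 hs0 hsL U hU C m Ar hm hV hV'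

theorem case_five [Fintype V] [DecidableEq V] (G : SimpleGraph V) [DecidableRel G.Adj]
    (hconn : G.Connected) (h3 : ∀ v, (G.neighborFinset v).card = 3)
    (htri : ∀ x y z, G.Adj x y → G.Adj y z → G.Adj x z → False)
    (hC4 : ∀ a b c d, G.Adj a b → G.Adj b c → G.Adj c d → G.Adj d a → a ≠ c → b ≠ d → False)
    (hmin : ∀ L' t' p', Cyc G L' t' p' → 3 ≤ L')
    (c : Fin 5 → V) (hc : ∀ i, G.Adj (c i) (c (i + 1))) (hinj : Function.Injective c) :
    HasSemistrongEdgeColoring G 8 := by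
  have hc4 : ∀ i, G.Adj (c i) (c (i + 4)) := by
    intro i
    have h := hc (i + 4)
    rw [(show ∀ i : Fin 5, i + 4 + 1 = i by decide) i] at h
    exact h.symm
  have hn14 : ∀ i, c (i + 1) ≠ c (i + 4) := by
    intro i h
    exact (show ∀ i : Fin 5, i + 1 ≠ i + 4 by decide) i (hinj h)
  choose d hd hd1 hd4 Nc using fun i => third (h3 (c i)) (hc i) (hc4 i) (hn14 i)
  by_cases hgood : ∃ i, ∀ z, G.Adj (d i) z → z ≠ c i → G.Adj z (c (i + 3)) → False
  · obtain ⟨i, hi⟩ := hgood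
    let p : ℕ → V := fun j => if j = 0 then c (i + 1) else if j = 1 then c (i + 2) else
      if j = 2 then c (i + 3) else c (i + 4)
    have e2 := hc (i + 1)
    have e3 := hc (i + 2)
    have e4 := hc (i + 3)
    rw [(show ∀ i : Fin 5, i + 1 + 1 = i + 2 by decide) i] at e2
    rw [(show ∀ i : Fin 5, i + 2 + 1 = i + 3 by decide) i] at e3
    rw [(show ∀ i : Fin 5, i + 3 + 1 = i + 4 by decide) i] at e4
    have n : ∀ k : Fin 5, k ≠ 0 → c (i + k) ≠ c i := by
      intro k hk h
      exact hk (by simpa using hinj h)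
    have hcyc : Cyc G 3 (c i) p := by
      refine ⟨?_, ?_, (hc i).symm, (hc4 i).symm, hn14 i⟩
      · intro j hj
        interval_cases j
        · exact e2
        · exact e3
        · exact e4
      · intro j hj
        interval_cases j
        · exact n 1 (by decide)
        · exact n 2 (by decide)
        · exact n 3 (by decide)
        · exact n 4 (by decide)
    exact scheme_A G hconn h3 htri hC4 3 (c i) p hcyc hmin (d i) (hd i) (hd1 i).symm
      (hd4 i).symm (fun _ => hi)
  push Not at hgood
  have hdd : ∀ i, G.Adj (d i) (d (i + 3)) := by
    intro i
    obtain ⟨z, hz, hzi, hz3, -⟩ := hgood i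
    have e4 := hc (i + 1)
    rw [(show ∀ i : Fin 5, i + 1 + 1 = i + 2 by decide) i] at e4
    rcases Nc (i + 3) z hz3.symm with h | h | h
    · rw [(show ∀ i : Fin 5, i + 3 + 1 = i + 4 by decide) i] at h
      subst h
      exact (htri _ _ _ (hd i) hz (hc4 i)).elim
    · rw [(show ∀ i : Fin 5, i + 3 + 4 = i + 2 by decide) i] at h
      subst h
      exact (hC4 _ _ _ _ (hd i).symm (hc i) e4 hz.symm (hd1 i) hzi.symm).elim
    · exact h ▸ hz
  have hdd2 : ∀ i, G.Adj (d i) (d (i + 2)) := by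
    intro i
    have h := hdd (i + 2)
    rw [(show ∀ i : Fin 5, i + 2 + 3 = i by decide) i] at h
    exact h.symm
  have five : ∀ i j : Fin 5, j = i ∨ j = i + 1 ∨ j = i + 2 ∨ i = j + 1 ∨ i = j + 2 := by decide
  have n1 : ∀ i, d i ≠ d (i + 1) := by
    intro i h
    exact htri _ _ _ (hc i) (hd (i + 1)) (h ▸ hd i)
  have n2 : ∀ i, d i ≠ d (i + 2) := fun i h => (hdd2 i).ne h
  have hdinj : Function.Injective d := by
    intro i j h
    rcases five i j with e | e | e | e | e
    · exact e.symm
    · subst e; exact (n1 _ h).elim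
    · subst e; exact (n2 _ h).elim
    · subst e; exact (n1 _ h.symm).elim
    · subst e; exact (n2 _ h.symm).elim
  have hcd : ∀ i j, c i ≠ d j := by
    intro i j h
    rcases five i j with e | e | e | e | e
    · subst e; exact (hd _).ne h
    · subst e
      apply hd4 (i + 1)
      rw [(show ∀ i : Fin 5, i + 1 + 4 = i by decide) i]
      exact h.symm
    · subst e
      have e2 := hc (i + 1)
      rw [(show ∀ i : Fin 5, i + 1 + 1 = i + 2 by decide) i] at e2
      exact htri _ _ _ (hc i) e2 (h ▸ (hd (i + 2)).symm)
    · subst e; exact hd1 _ h.symm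
    · subst e
      have e2 := hc (j + 1)
      rw [(show ∀ j : Fin 5, j + 1 + 1 = j + 2 by decide) j] at e2
      exact htri _ _ _ (hc j) e2 (h ▸ hd j)
  refine case_petersen G hconn c d Nc ?_ hinj hdinj hcd
  intro i w hw
  obtain ⟨x, hx, hx1, hx2, hN⟩ := third (h3 (d i)) (hd i).symm (hdd2 i) (hcd _ _)
  have : d (i + 3) = x := by
    rcases hN _ (hdd i) with h | h | h
    · exact (hcd _ _ h.symm).elim
    · exact ((show ∀ i : Fin 5, i + 3 ≠ i + 2 by decide) i (hdinj h)).elim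
    · exact h
  rw [this]
  exact hN w hw

/-- The case of girth at least five. -/
theorem case_girth_five [Fintype V] [DecidableEq V] (G : SimpleGraph V) [DecidableRel G.Adj]
    (hconn : G.Connected) (h3 : ∀ v, (G.neighborFinset v).card = 3)
    (htri : ∀ x y z, G.Adj x y → G.Adj y z → G.Adj x z → False)
    (hC4 : ∀ a b c d, G.Adj a b → G.Adj b c → G.Adj c d → G.Adj d a → a ≠ c → b ≠ d → False) :
    HasSemistrongEdgeColoring G 8 := by
  classical
  have hex := exists_cyc G hconn h3
  obtain ⟨t, p, hcyc⟩ := Nat.find_spec hex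
  have hmin : ∀ L' t' p', Cyc G L' t' p' → Nat.find hex ≤ L' :=
    fun L' t' p' h => Nat.find_min' hex ⟨t', p', h⟩
  generalize Nat.find hex = L at hcyc hmin
  have hcyc' := hcyc
  obtain ⟨hp, hpt, h0, hL, h0L⟩ := hcyc
  by_cases h : L = 3
  · subst h
    have a0 := hp 0 (by omega)
    have a1 := hp 1 (by omega)
    have a2 := hp 2 (by omega)
    simp only [Nat.zero_add, Nat.reduceAdd] at a0 a1 a2
    have n0 := hpt 0 (by omega)
    have n1 := hpt 1 (by omega)
    have n2 := hpt 2 (by omega)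
    have n3 := hpt 3 (by omega)
    have m02 : p 0 ≠ p 2 := fun h => htri _ _ _ h0.symm (h ▸ a2) hL.symm
    have m13 : p 1 ≠ p 3 := fun h => htri _ _ _ h0.symm a0 (h ▸ hL.symm)
    refine case_five G hconn h3 htri hC4 hmin ![t, p 0, p 1, p 2, p 3] ?_ ?_
    · intro i
      fin_cases i
      · exact h0.symm
      · exact a0
      · exact a1
      · exact a2
      · exact hL
    · intro i j hij
      fin_cases i <;> fin_cases j <;> first
        | rfl
        | exact absurd hij n0
        | exact absurd hij n1
        | exact absurd hij n2
        | exact absurd hij n3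
        | exact absurd hij m02
        | exact absurd hij m13
        | exact absurd hij h0L
        | exact absurd hij a0.ne
        | exact absurd hij a1.ne
        | exact absurd hij a2.ne
        | exact absurd hij n0.symm
        | exact absurd hij n1.symm
        | exact absurd hij n2.symm
        | exact absurd hij n3.symm
        | exact absurd hij m02.symm
        | exact absurd hij m13.symm
        | exact absurd hij h0L.symm
        | exact absurd hij a0.ne.symm
        | exact absurd hij a1.ne.symm
        | exact absurd hij a2.ne.symm
  · obtain ⟨s, hs, hs0, hsL, -⟩ := third (h3 t) h0.symm hL.symm h0L
    exact scheme_A G hconn h3 htri hC4 L t p hcyc' hmin s hs hs0.symm hsL.symm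
      (fun hh => (h hh).elim)

/-- For every connected finite simple graph `G` with maximum degree at most `3`
that is not isomorphic to `K_{3,3}`, the semistrong chromatic index of `G`
is at most `8`. -/
theorem ssChromIdx_le_eight_of_subcubic {V : Type*} [Fintype V] [DecidableEq V]
    (G : SimpleGraph V) [DecidableRel G.Adj]
    (hconn : G.Connected) (hdeg : G.maxDegree ≤ 3)
    (hK33 : ¬ Nonempty (G ≃g completeBipartiteGraph (Fin 3) (Fin 3))) :
    ssChromIdx G ≤ 8 := by
  apply Nat.sInf_le
  change HasSemistrongEdgeColoring G 8
  have hd : ∀ v, (G.neighborFinset v).card ≤ 3 := by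
    intro v
    rw [G.card_neighborFinset_eq_degree]
    exact (G.degree_le_maxDegree v).trans hdeg
  by_cases h2 : ∃ r, (G.neighborFinset r).card ≤ 2
  · obtain ⟨r, hr⟩ := h2
    exact case_deg_two G hconn hd r hr
  have h3 : ∀ v, (G.neighborFinset v).card = 3 := by
    intro v
    by_contra hv
    exact h2 ⟨v, by have := hd v; omega⟩
  by_cases ht : ∃ x y z, G.Adj x y ∧ G.Adj y z ∧ G.Adj x z
  · obtain ⟨x, y, z, hxy, hyz, hxz⟩ := ht
    exact case_triangle_full G hconn h3 x y z hxy hxz hyz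
  have htri : ∀ x y z, G.Adj x y → G.Adj y z → G.Adj x z → False :=
    fun x y z h h' h'' => ht ⟨x, y, z, h, h', h''⟩
  by_cases h4 : ∃ a b c d, G.Adj a b ∧ G.Adj b c ∧ G.Adj c d ∧ G.Adj d a ∧ a ≠ c ∧ b ≠ d
  · obtain ⟨a, b, c, d, hab, hbc, hcd, hda, hac, hbd⟩ := h4
    exact case_C4_full G hconn h3 htri hK33 a b c d hab hbc hcd hda hac hbd
  exact case_girth_five G hconn h3 htri
    (fun a b c d p1 p2 p3 p4 p5 p6 => h4 ⟨a, b, c, d, p1, p2, p3, p4, p5, p6⟩)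
end

section
/- For every finite tree T (a finite connected acyclic simple graph), the semistrong chromatic index of T is at most Δ(T) + 1. -/
open SimpleGraph

variable {V : Type*}

/-- Rooted structure on a tree: a parent function and a depth function. -/
lemma exists_parent {V : Type*} (T : SimpleGraph V) (hT : T.IsTree) (r : V) :
    ∃ (par : V → V) (d : V → ℕ), par r = r ∧
      (∀ v, v ≠ r → T.Adj v (par v) ∧ d (par v) + 1 = d v) ∧
      ∀ v w, T.Adj v w → (v ≠ r ∧ par v = w) ∨ (w ≠ r ∧ par w = v) := by
  classical
  choose f hf hf' using (hT.existsUnique_path r ·)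
  have hr : f r = Walk.nil := (hf' r Walk.nil Walk.IsPath.nil).symm
  have key : ∀ v w, T.Adj v w → w ∈ (f v).support → v ≠ r ∧ (f v).penultimate = w := by
    intro v w h hw
    refine ⟨?_, (hT.isAcyclic.eq_penultimate_of_adj_end (hf v) h hw).symm⟩
    rintro rfl
    rw [hr] at hw
    simp at hw
    exact h.ne hw.symm
  refine ⟨fun v => (f v).penultimate, fun v => (f v).length, ?_, ?_, ?_⟩
  · simp [hr]
  · intro v hv
    have hn : ¬ (f v).Nil := Walk.not_nil_of_ne hv.symm
    refine ⟨((f v).adj_penultimate hn).symm, ?_⟩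
    have h1 := hf' _ (f v).dropLast (hf v).dropLast
    have h2 := congrArg Walk.length h1
    have h3 := (f v).length_dropLast_add_one hn
    simp only at h2 ⊢
    omega
  · intro v w h
    by_cases hw : w ∈ (f v).support
    · exact Or.inl (key v w h hw)
    · exact Or.inr (key w v h.symm
        (hT.isAcyclic.mem_support_of_ne_mem_support_of_adj_of_isPath (hf w) (hf v) h.symm hw))

/-- The top-down coloring of vertices (standing for the edges to their parents). -/
noncomputable def topDown {V : Type*} (r : V) (par : V → V) (d : V → ℕ)
    (hr : par r = r) (hd : ∀ v, v ≠ r → d (par v) < d v)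
    (g : V → ℕ → ℕ → V → ℕ) (v : V) : ℕ :=
  open Classical in
  if h : v = r then 0 else
    g (par v) (topDown r par d hr hd g (par v)) (topDown r par d hr hd g (par (par v))) v
termination_by d v
decreasing_by
  · exact hd v h
  · by_cases h2 : par v = r
    · rw [h2, hr, ← h2]; exact hd v h
    · exact (hd _ h2).trans (hd v h)

lemma exists_local {V : Type*} (C : Finset V) (D a b : ℕ)
    (h : C.card + ({a, b} : Finset ℕ).card ≤ D + 1) :
    ∃ g : V → ℕ, (∀ x ∈ C, g x < D + 1 ∧ g x ≠ a ∧ g x ≠ b) ∧ Set.InjOn g C := by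
  classical
  have hc : C.card ≤ (Finset.range (D + 1) \ {a, b}).card := by
    have := Finset.le_card_sdiff ({a, b} : Finset ℕ) (Finset.range (D + 1))
    simp only [Finset.card_range] at this
    omega
  obtain ⟨e⟩ : Nonempty (C ↪ (Finset.range (D + 1) \ {a, b} : Finset ℕ)) :=
    Function.Embedding.nonempty_of_card_le (by simpa using hc)
  refine ⟨fun x => if hx : x ∈ C then (e ⟨x, hx⟩ : ℕ) else 0, ?_, ?_⟩
  · intro x hx
    have := (e ⟨x, hx⟩).2
    simp only [Finset.mem_sdiff, Finset.mem_range, Finset.mem_insert, Finset.mem_singleton,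
      not_or] at this
    simp only [hx, dif_pos]
    exact ⟨this.1, this.2.1, this.2.2⟩
  · intro x hx y hy hxy
    have hx' : x ∈ C := hx
    have hy' : y ∈ C := hy
    simp only [hx', hy', dif_pos] at hxy
    have := e.injective (Subtype.ext hxy)
    simpa using this

/-- For every finite tree `T`, the semistrong chromatic index of `T` is at most
`Δ(T) + 1`. -/
theorem ssChromIdx_tree_le {V : Type*} [Fintype V] [DecidableEq V]
    (T : SimpleGraph V) [DecidableRel T.Adj] (hT : T.IsTree) :
    ssChromIdx T ≤ T.maxDegree + 1 := by
  classical
  obtain ⟨r⟩ := hT.connected.nonempty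
  obtain ⟨par, d, hr, hpar, hadj⟩ := exists_parent T hT r
  let C : V → Finset V := fun p => Finset.univ.filter (fun x => x ≠ r ∧ par x = p)
  have hCmem : ∀ p x, x ∈ C p ↔ x ≠ r ∧ par x = p := by simp [C]
  have hloc : ∀ p a b, ∃ g : V → ℕ, (p = r → a = b) →
      (∀ x ∈ C p, g x < T.maxDegree + 1 ∧ g x ≠ a ∧ g x ≠ b) ∧ Set.InjOn g (C p) := by
    intro p a b
    by_cases hp : p = r → a = b
    · obtain ⟨g, hg⟩ := exists_local (C p) T.maxDegree a b (by
        have hdeg := T.degree_le_maxDegree p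
        have hsub : C p ⊆ T.neighborFinset p := by
          intro x hx
          obtain ⟨h1, rfl⟩ := (hCmem _ _).1 hx
          simpa using (hpar x h1).1.symm
        by_cases hpr : p = r
        · have := Finset.card_le_card hsub
          rw [card_neighborFinset_eq_degree] at this
          simp [hp hpr]
          omega
        · have h2 : insert (par p) (C p) ⊆ T.neighborFinset p := by
            apply Finset.insert_subset _ hsub
            simpa using (hpar p hpr).1
          have h3 : par p ∉ C p := by
            intro h
            obtain ⟨h4, h5⟩ := (hCmem _ _).1 h
            have h6 := (hpar _ h4).2
            have h7 := (hpar _ hpr).2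
            rw [h5] at h6
            omega
          have h4 := Finset.card_le_card h2
          rw [card_neighborFinset_eq_degree, Finset.card_insert_of_notMem h3] at h4
          have h5 := Finset.card_le_two (a := a) (b := b)
          omega)
      exact ⟨g, fun _ => hg⟩
    · exact ⟨fun _ => 0, fun h => absurd h hp⟩
  choose g hg using hloc
  have hd : ∀ v, v ≠ r → d (par v) < d v := fun v hv => by have := (hpar v hv).2; omega
  obtain ⟨f, hf⟩ : ∃ f : V → ℕ, ∀ v, v ≠ r → f v = g (par v) (f (par v)) (f (par (par v))) v :=
    ⟨topDown r par d hr hd g, fun v hv => by rw [topDown, dif_neg hv]⟩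
  have hg' : ∀ p, _ := fun p => hg p (f p) (f (par p)) (by rintro rfl; rw [hr])
  have hf1 : ∀ v, v ≠ r → f v < T.maxDegree + 1 ∧ f v ≠ f (par v) ∧ f v ≠ f (par (par v)) := by
    intro v hv
    have := (hg' (par v)).1 v ((hCmem _ _).2 ⟨hv, rfl⟩)
    rwa [← hf v hv] at this
  have hf2 : ∀ v w, v ≠ r → w ≠ r → par v = par w → f v = f w → v = w := by
    intro v w hv hw hp he
    rw [hf v hv, hf w hw, ← hp] at he
    exact (hg' (par v)).2 ((hCmem _ _).2 ⟨hv, rfl⟩) ((hCmem _ _).2 ⟨hw, hp.symm⟩) he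
  let c : Sym2 V → ℕ := Sym2.lift ⟨fun a b =>
    if d b < d a then f a else if d a < d b then f b else 0, by
      intro a b
      dsimp only
      split_ifs <;> first | rfl | omega⟩
  have hc : ∀ v, v ≠ r → c s(v, par v) = f v := by
    intro v hv
    simp [c, hd v hv]
  have hedge : ∀ e ∈ T.edgeSet, ∃ v, v ≠ r ∧ e = s(v, par v) := by
    intro e
    induction e using Sym2.ind with
    | _ a b =>
      intro h
      rcases hadj a b h with ⟨h1, rfl⟩ | ⟨h1, rfl⟩
      · exact ⟨a, h1, rfl⟩
      · exact ⟨b, h1, Sym2.eq_swap⟩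
  apply Nat.sInf_le
  refine ⟨c, ?_, fun i => ⟨⟨fun e he => he.1, ?_⟩, ?_⟩⟩
  · intro e he
    obtain ⟨v, hv, rfl⟩ := hedge e he
    rw [hc v hv]
    exact (hf1 v hv).1
  · rintro e ⟨he, hei⟩ e' ⟨he', hei'⟩ hne x hx hx'
    obtain ⟨a, ha, rfl⟩ := hedge e he
    obtain ⟨b, hb, rfl⟩ := hedge e' he'
    rw [hc a ha] at hei
    rw [hc b hb] at hei'
    have hab : a ≠ b := by rintro rfl; exact hne rfl
    have hfab : f a = f b := hei.trans hei'.symm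
    rw [Sym2.mem_iff] at hx hx'
    rcases hx with rfl | rfl <;> rcases hx' with h | h
    · exact hab h
    · exact (hf1 b hb).2.1 (by rw [← h, hfab])
    · exact (hf1 a ha).2.1 (by rw [h, hfab])
    · exact hab (hf2 a b ha hb h hfab)
  · rintro e ⟨he, hei⟩
    obtain ⟨v, hv, rfl⟩ := hedge e he
    rw [hc v hv] at hei
    refine ⟨v, par v, rfl, ?_⟩
    rintro w ⟨e', ⟨he', hei'⟩, hw⟩ hvw
    obtain ⟨b, hb, rfl⟩ := hedge e' he'
    rw [hc b hb] at hei'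
    rcases hadj v w hvw with ⟨_, h⟩ | ⟨_, h⟩
    · exact h.symm
    · exfalso
      rw [Sym2.mem_iff] at hw
      rcases hw with rfl | rfl
      · exact (hf1 w hb).2.1 (by rw [h, hei, hei'])
      · exact (hf1 b hb).2.2 (by rw [h, hei, hei'])
end
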